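/- arXiv:0805.1493 — 3 statements merged into one kernel-verified Lean document; each statement's English description precedes it below -/
import Mathlib

section
/- Let M be a compact connected boundaryless topological manifold of dimension 3 or 4 with a compatible metric and let f : M → M be an expansive homeomorphism such that the closure of Per_H equals M. Then all topologically hyperbolic periodic points of f have the same index: there exists r such that Per_H = Per_H^r. -/
open Metric Set

variable {M : Type*} [MetricSpace M]

/-- Iterates of a homeomorphism, indexed by `ℤ`. -/
def iterZ (f : M ≃ₜ M) (k : ℤ) (x : M) : M := (f.toEquiv ^ k) x

/-- `f` is expansive with expansivity constant `α`. -/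
def IsExpansive (f : M ≃ₜ M) (α : ℝ) : Prop :=
  ∀ x y : M, x ≠ y → ∃ k : ℤ, α < dist (iterZ f k x) (iterZ f k y)

/-- Stable set of `x`. -/
def Ws (f : M ≃ₜ M) (x : M) : Set M :=
  {y | Filter.Tendsto (fun k : ℤ => dist (iterZ f k x) (iterZ f k y)) Filter.atTop (nhds 0)}

/-- Unstable set of `x`. -/
def Wu (f : M ≃ₜ M) (x : M) : Set M :=
  {y | Filter.Tendsto (fun k : ℤ => dist (iterZ f k x) (iterZ f k y)) Filter.atBot (nhds 0)}

/-- Local (`ε`-local) stable set of `x`. -/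
def WsLoc (f : M ≃ₜ M) (ε : ℝ) (x : M) : Set M :=
  {y | ∀ k : ℤ, 0 ≤ k → dist (iterZ f k x) (iterZ f k y) ≤ ε}

/-- Local (`ε`-local) unstable set of `x`. -/
def WuLoc (f : M ≃ₜ M) (ε : ℝ) (x : M) : Set M :=
  {y | ∀ k : ℤ, k ≤ 0 → dist (iterZ f k x) (iterZ f k y) ≤ ε}

/-- The model space `ℝ^r × ℝ^{n-r}`. -/
abbrev ModelSp (n r : ℕ) := (Fin r → ℝ) × (Fin (n - r) → ℝ)

/-- The model hyperbolic linear map `L(a,b) = (a/2, 2b)`. -/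
noncomputable def modelL (n r : ℕ) : ModelSp n r → ModelSp n r :=
  fun q => (fun i => q.1 i / 2, fun i => 2 * q.2 i)

/-- Topologically hyperbolic periodic points of index `r` (`Per_H^r`). -/
def PerHr (f : M ≃ₜ M) (n r : ℕ) : Set M :=
  {p | ∃ l : ℕ, 1 ≤ l ∧ (f.toEquiv ^ l) p = p ∧
    ∃ (U : Set M) (V : Set (ModelSp n r)) (h : U ≃ₜ V),
      IsOpen U ∧ IsOpen V ∧ (0 : ModelSp n r) ∈ V ∧
      ∃ hp : p ∈ U, ((h ⟨p, hp⟩ : V) : ModelSp n r) = 0 ∧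
        ∀ z : M, ∀ hz : z ∈ U, ∀ hz' : (f.toEquiv ^ l) z ∈ U,
          ((h ⟨(f.toEquiv ^ l) z, hz'⟩ : V) : ModelSp n r) = modelL n r (h ⟨z, hz⟩)}

/-- All topologically hyperbolic periodic points (`Per_H`). -/
def PerH (f : M ≃ₜ M) (n : ℕ) : Set M := ⋃ r ∈ Finset.range (n + 1), PerHr f n r

/-- `p` admits a local product structure. -/
def AdmitsLPS (f : M ≃ₜ M) (n : ℕ) (p : M) : Prop :=
  ∃ (k : ℕ) (h : (Fin k → ℝ) × (Fin (n - k) → ℝ) → M) (ε : ℝ),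
    0 < ε ∧ Topology.IsEmbedding h ∧ p ∈ Set.range h ∧
    ∀ x : Fin k → ℝ, ∀ y : Fin (n - k) → ℝ,
      h '' ({x} ×ˢ univ) = WsLoc f ε (h (x, y)) ∩ Set.range h ∧
      h '' (univ ×ˢ {y}) = WuLoc f ε (h (x, y)) ∩ Set.range h

namespace Br

/-- Lagrange interpolation of the determinant along a line. -/
theorem det_lagrange {m : ℕ} (t : Fin (m+1) → ℝ) (ht : Function.Injective t) :
    ∃ c : Fin (m+1) → ℝ, ∀ A : Matrix (Fin m) (Fin m) ℝ,
      (1 + A).det = ∑ i, c i * (1 + t i • A).det := by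
  refine ⟨fun i => ((Lagrange.basis Finset.univ t i).eval 1), fun A => ?_⟩
  let P : Polynomial ℝ := Matrix.det ((Polynomial.X : Polynomial ℝ) • A.map Polynomial.C
    + (1 : Matrix (Fin m) (Fin m) ℝ).map Polynomial.C)
  have hev : ∀ s : ℝ, P.eval s = (1 + s • A).det := by
    intro s
    have : P.eval s = Polynomial.evalRingHom s P := rfl
    rw [this, RingHom.map_det]
    congr 1
    ext i j
    by_cases hij : i = j
    · subst hij; simp [RingHom.mapMatrix_apply]; ring
    · simp [RingHom.mapMatrix_apply, hij]; ring
  have hdeg : P.degree < (Finset.univ : Finset (Fin (m+1))).card := by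
    have h1 : P.natDegree ≤ m := by
      have := Polynomial.natDegree_det_X_add_C_le A 1
      rwa [Fintype.card_fin] at this
    calc P.degree ≤ P.natDegree := Polynomial.degree_le_natDegree
      _ < _ := by simp; exact_mod_cast Nat.lt_succ_of_le h1
  have h := Lagrange.eq_interpolate (v := t) ht.injOn hdeg
  have h1 : P.eval 1 = (1 + A).det := by rw [hev]; simp
  rw [← h1]
  conv_lhs => rw [h]
  rw [Lagrange.interpolate_apply, Polynomial.eval_finsetSum]
  refine Finset.sum_congr rfl fun i _ => ?_
  rw [Polynomial.eval_mul, Polynomial.eval_C, hev, mul_comm]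

theorem clm_det_lagrange {F : Type*} [NormedAddCommGroup F] [NormedSpace ℝ F]
    [FiniteDimensional ℝ F] (t : Fin (Module.finrank ℝ F+1) → ℝ) (ht : Function.Injective t) :
    ∃ c : Fin (Module.finrank ℝ F+1) → ℝ, ∀ A : F →L[ℝ] F,
      (1 + A).det = ∑ i, c i * (1 + t i • A).det := by
  obtain ⟨c, hc⟩ := det_lagrange t ht
  refine ⟨c, fun A => ?_⟩
  let b := Module.finBasis ℝ F
  have key : ∀ s : ℝ, (1 + s • A).det
      = (1 + s • LinearMap.toMatrix b b (A : F →ₗ[ℝ] F)).det := by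
    intro s
    rw [ContinuousLinearMap.det, ← LinearMap.det_toMatrix b]
    congr 1
    have : ((1 + s • A : F →L[ℝ] F) : F →ₗ[ℝ] F) = LinearMap.id + s • (A : F →ₗ[ℝ] F) := rfl
    rw [this, map_add, LinearMap.toMatrix_id, map_smul]
  have k1 := key 1
  rw [one_smul, one_smul] at k1
  rw [k1, hc]
  exact Finset.sum_congr rfl fun i _ => by rw [key]

open MeasureTheory in
/-- C¹ no-retraction theorem, inner product version. -/
theorem no_retract {F : Type*} [NormedAddCommGroup F] [InnerProductSpace ℝ F]
    [FiniteDimensional ℝ F] (R : F → F) (hR : ContDiff ℝ 1 R) (ρ : ℝ) (hρ : 0 < ρ)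
    (hn : ∀ x, ‖R x‖ = ρ) (hid : ∀ x, ‖x‖ = ρ → R x = x) : False := by
  borelize F
  let D : F → F →L[ℝ] F := fun x => fderiv ℝ R x - 1
  have hDc : Continuous D := (hR.continuous_fderiv one_ne_zero).sub continuous_const
  have hRd : Differentiable ℝ R := hR.differentiable one_ne_zero
  -- bound on D
  obtain ⟨C0, hC0⟩ := (isCompact_closedBall (0:F) ρ).exists_bound_of_continuousOn hDc.continuousOn
  let C : ℝ := max C0 1
  have hC1 : 1 ≤ C := le_max_right _ _
  have hCb : ∀ x ∈ closedBall (0:F) ρ, ‖D x‖ ≤ C := fun x hx => (hC0 x hx).trans (le_max_left _ _)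
  -- determinant near 1
  have hdetc : Continuous (fun B : F →L[ℝ] F => B.det) := ContinuousLinearMap.continuous_det
  have hev : ∀ᶠ B in nhds (1 : F →L[ℝ] F), 0 < B.det := by
    have : (0:ℝ) < (1 : F →L[ℝ] F).det := by
      have : (1 : F →L[ℝ] F).det = 1 := by simp [ContinuousLinearMap.det]
      rw [this]; exact one_pos
    exact hdetc.continuousAt.eventually (lt_mem_nhds this)
  obtain ⟨δ, hδ, hdet⟩ := Metric.eventually_nhds_iff.1 hev
  let t0 : ℝ := min (δ / (2*C)) (1/(2*C))
  have ht0 : 0 < t0 := by positivity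
  -- volume of the image
  let vol : Measure F := Measure.addHaar
  have main : ∀ t : ℝ, 0 < t → t ≤ t0 →
      ∫ x in ball (0:F) ρ, (1 + t • D x).det ∂vol = vol.real (ball (0:F) ρ) := by
    intro t htp ht
    let g : F → F := fun x => x + t • (R x - x)
    have htC : t * C ≤ 1/2 := by
      calc t * C ≤ (1/(2*C)) * C := by gcongr; exact ht.trans (min_le_right _ _)
        _ = 1/2 := by field_simp
    have ht1 : t < 1 := by nlinarith
    have htδ : t * C < δ := by
      calc t * C ≤ (δ/(2*C)) * C := by gcongr; exact ht.trans (min_le_left _ _)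
        _ = δ/2 := by field_simp
        _ < δ := by linarith
    have hgd : ∀ x, HasFDerivAt g (1 + t • D x) x := by
      intro x
      have h1 := (hRd x).hasFDerivAt
      have h2 : HasFDerivAt (fun x : F => x) (1 : F →L[ℝ] F) x := hasFDerivAt_id x
      exact h2.add ((h1.sub h2).const_smul t)
    have happ : ApproximatesLinearOn g
        ((ContinuousLinearEquiv.refl ℝ F : F ≃L[ℝ] F) : F →L[ℝ] F) (ball 0 ρ)
        (1/2 : NNReal) := by
      intro x hx y hy
      have hb := Convex.norm_image_sub_le_of_norm_hasFDerivWithin_le (𝕜 := ℝ) (f := fun x => t • (R x - x))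
        (f' := fun x => t • D x) (s := ball (0:F) ρ) (C := 1/2)
        (fun z hz => (((hRd z).hasFDerivAt.sub (hasFDerivAt_id z)).const_smul t).hasFDerivWithinAt)
        (fun z hz => by
          rw [norm_smul, Real.norm_of_nonneg htp.le]
          calc t * ‖D z‖ ≤ t * C := by gcongr; exact hCb z (ball_subset_closedBall hz)
            _ ≤ 1/2 := htC) (convex_ball 0 ρ) hy hx
      have e : g x - g y - ((ContinuousLinearEquiv.refl ℝ F : F ≃L[ℝ] F) : F →L[ℝ] F) (x - y)
         = t • (R x - x) - t • (R y - y) := by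
        simp [g]; abel
      rw [e]
      refine hb.trans (le_of_eq ?_)
      norm_num
    have hcN : Subsingleton F ∨ (1/2 : NNReal) <
        ‖((ContinuousLinearEquiv.refl ℝ F).symm : F →L[ℝ] F)‖₊⁻¹ := by
      rcases subsingleton_or_nontrivial F with h | h
      · exact Or.inl h
      · right
        have : ‖((ContinuousLinearEquiv.refl ℝ F).symm : F →L[ℝ] F)‖₊ = 1 := by
          have : ((ContinuousLinearEquiv.refl ℝ F).symm : F →L[ℝ] F) = ContinuousLinearMap.id ℝ F := rfl
          rw [this]; exact ContinuousLinearMap.nnnorm_id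
        rw [this, inv_one, ← NNReal.coe_lt_coe]
        norm_num
    have hinj : InjOn g (ball 0 ρ) := happ.injOn hcN
    have hopen : IsOpen (g '' ball 0 ρ) := by
      have := (happ.toOpenPartialHomeomorph g (ball 0 ρ) hcN isOpen_ball).open_target
      exact this
    have hgc : Continuous g := by
      have := hR.continuous
      fun_prop
    have hsub : g '' ball 0 ρ ⊆ ball 0 ρ := by
      rintro _ ⟨x, hx, rfl⟩
      rw [mem_ball_zero_iff] at hx ⊢
      have : g x = (1 - t) • x + t • R x := by simp [g, sub_smul, smul_sub]; abel
      rw [this]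
      calc ‖(1 - t) • x + t • R x‖ ≤ ‖(1 - t) • x‖ + ‖t • R x‖ := norm_add_le _ _
        _ = (1-t) * ‖x‖ + t * ρ := by
          rw [norm_smul, norm_smul, Real.norm_of_nonneg htp.le, hn,
            Real.norm_of_nonneg (by linarith)]
        _ < ρ := by nlinarith
    have himg : g '' ball 0 ρ = ball 0 ρ := by
      refine hsub.antisymm ?_
      have hpre : IsPreconnected (ball (0:F) ρ) := (convex_ball 0 ρ).isPreconnected
      refine hpre.subset_of_closure_inter_subset hopen ?_ ?_
      · refine ⟨g 0, hsub ⟨0, mem_ball_self hρ, rfl⟩, ⟨0, mem_ball_self hρ, rfl⟩⟩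
      · rintro y ⟨hy1, hy2⟩
        have hcl : closure (g '' ball 0 ρ) ⊆ g '' closedBall 0 ρ :=
          closure_minimal (image_mono ball_subset_closedBall)
            ((isCompact_closedBall 0 ρ).image hgc).isClosed
        obtain ⟨x, hx, rfl⟩ := hcl hy1
        rcases (mem_closedBall_zero_iff.1 hx).lt_or_eq with h | h
        · exact ⟨x, mem_ball_zero_iff.2 h, rfl⟩
        · exfalso
          have : g x = x := by simp [g, hid x h]
          rw [this, mem_ball_zero_iff] at hy2
          linarith
    have hcv := integral_image_eq_integral_abs_det_fderiv_smul vol (s := ball (0:F) ρ) (f := g)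
      (f' := fun x => 1 + t • D x) measurableSet_ball (fun x _ => (hgd x).hasFDerivWithinAt) hinj
      (fun _ => (1:ℝ))
    rw [himg] at hcv
    have h1 : ∫ x in ball (0:F) ρ, (1:ℝ) ∂vol = vol.real (ball (0:F) ρ) := by
      simp [Measure.real]
    rw [h1] at hcv
    rw [hcv]
    refine setIntegral_congr_fun measurableSet_ball fun x hx => ?_
    have : 0 < (1 + t • D x).det := by
      apply hdet
      rw [dist_eq_norm, add_sub_cancel_left, norm_smul, Real.norm_of_nonneg htp.le]
      calc t * ‖D x‖ ≤ t * C := by gcongr; exact hCb x (ball_subset_closedBall hx)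
        _ < δ := htδ
    simp [abs_of_pos this]
  -- nodes
  let m := Module.finrank ℝ F
  let T : Fin (m+1) → ℝ := fun i => t0 / ((i:ℕ) + 1)
  have hT : Function.Injective T := by
    intro i j hij
    simp only [T] at hij
    have h1 : ((i:ℕ):ℝ) + 1 ≠ 0 := by positivity
    have h2 : ((j:ℕ):ℝ) + 1 ≠ 0 := by positivity
    rw [div_eq_div_iff h1 h2] at hij
    have := mul_left_cancel₀ ht0.ne' hij
    have h3 : ((i:ℕ):ℝ) = ((j:ℕ):ℝ) := by linarith
    exact Fin.ext (by exact_mod_cast h3)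
  obtain ⟨c, hc⟩ := clm_det_lagrange (F := F) T hT
  have hsum : ∑ i, c i = 1 := by
    have := hc 0
    have h1 : (1 : F →L[ℝ] F).det = 1 := by simp [ContinuousLinearMap.det]
    simp [h1] at this
    exact this.symm
  have hzero : ∀ x, (1 + D x).det = 0 := by
    intro x
    have e : (1 + D x) = fderiv ℝ R x := by simp [D]
    rw [e]
    by_contra hne
    -- R x is orthogonal to the range of the derivative
    have horth : ∀ v, inner ℝ (R x) (fderiv ℝ R x v) = 0 := by
      intro v
      have h1 := (hRd x).hasFDerivAt
      have h2 := h1.inner ℝ h1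
      have h3 : (fun y => inner ℝ (R y) (R y)) = fun _ : F => ρ^2 := by
        funext y; rw [real_inner_self_eq_norm_sq, hn]
      rw [h3] at h2
      have h4 := h2.unique (hasFDerivAt_const (ρ^2) x)
      have h5 := congrArg (fun L : F →L[ℝ] ℝ => L v) h4
      simp at h5
      rw [real_inner_comm (R x)] at h5
      linarith [real_inner_comm (R x) (fderiv ℝ R x v)]
    have hu : IsUnit (LinearMap.det (fderiv ℝ R x : F →ₗ[ℝ] F)) := isUnit_iff_ne_zero.2 hne
    obtain ⟨v, hv⟩ := (LinearMap.equivOfIsUnitDet hu).surjective (R x)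
    have hv' : fderiv ℝ R x v = R x := by
      rw [← hv, LinearMap.equivOfIsUnitDet_apply]; rfl
    have := horth v
    rw [hv', real_inner_self_eq_norm_sq, hn] at this
    have : ρ^2 > 0 := by positivity
    linarith
  have hintg : ∀ i, IntegrableOn (fun x => c i * (1 + T i • D x).det) (ball (0:F) ρ) vol := by
    intro i
    have hcont : Continuous (fun x => c i * (1 + T i • D x).det) := by
      refine continuous_const.mul (hdetc.comp ?_)
      fun_prop
    exact (hcont.continuousOn.integrableOn_compact (isCompact_closedBall 0 ρ)).mono_set
      ball_subset_closedBall
  have hfin : (0:ℝ) = vol.real (ball (0:F) ρ) := by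
    calc (0:ℝ) = ∫ x in ball (0:F) ρ, (1 + D x).det ∂vol := by simp [hzero]
      _ = ∫ x in ball (0:F) ρ, ∑ i, c i * (1 + T i • D x).det ∂vol := by simp_rw [← hc]
      _ = ∑ i, ∫ x in ball (0:F) ρ, c i * (1 + T i • D x).det ∂vol :=
          integral_finsetSum _ (fun i _ => hintg i)
      _ = ∑ i, c i * vol.real (ball (0:F) ρ) := by
          refine Finset.sum_congr rfl fun i _ => ?_
          rw [integral_const_mul, main (T i) (by positivity) ?_]
          exact div_le_self ht0.le (by linarith [Nat.cast_nonneg (α := ℝ) (i:ℕ)])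
      _ = vol.real (ball (0:F) ρ) := by rw [← Finset.sum_mul, hsum, one_mul]
  have hpos : 0 < vol.real (ball (0:F) ρ) :=
    ENNReal.toReal_pos (measure_ball_pos vol 0 hρ).ne' measure_ball_lt_top.ne
  linarith

theorem no_nonvanishing_inner {F : Type*} [NormedAddCommGroup F] [InnerProductSpace ℝ F]
    [FiniteDimensional ℝ F] (H : F → F) (hH : Continuous H) (ρ : ℝ) (hid : ∀ x, ρ ≤ ‖x‖ → H x = x) :
    ∃ x, H x = 0 := by
  by_contra hne
  push Not at hne
  let r : ℝ := max ρ 0 + 2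
  have hr : 0 < r := by positivity
  obtain ⟨g, hg1, hg2, hg3, -⟩ := hH.exists_contDiff_approx_and_eqOn 1 (ε := fun x => ‖H x‖)
    (by fun_prop) (fun x => norm_pos_iff.2 (hne x)) (S := {x | r ≤ ‖x‖})
    (U := {x | r - 1 < ‖x‖}) (isClosed_le continuous_const continuous_norm)
    ((isOpen_lt continuous_const continuous_norm).mem_nhdsSet.2 (fun x hx => by
      simp only [mem_ofPred_eq] at hx ⊢; linarith))
    (contDiffOn_id.congr (fun x hx => hid x (by
      simp only [mem_ofPred_eq, r] at hx
      have := le_max_left ρ 0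
      linarith)))
  have hg0 : ∀ x, g x ≠ 0 := by
    intro x h0
    have := hg2 x
    rw [h0, dist_zero_left] at this
    exact lt_irrefl _ this
  refine no_retract (fun x => (r / ‖g x‖) • g x) ?_ r hr ?_ ?_
  · have h1 : ContDiff ℝ 1 g := by exact_mod_cast hg1
    exact (contDiff_const.div (h1.norm ℝ hg0) (fun x => norm_ne_zero_iff.2 (hg0 x))).smul h1
  · intro x
    have := norm_ne_zero_iff.2 (hg0 x)
    rw [norm_smul, norm_div, norm_norm, Real.norm_of_nonneg hr.le]
    field_simp
  · intro x hx
    have : g x = x := by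
      rw [hg3 (show r ≤ ‖x‖ from hx.ge)]
      refine hid x ?_
      have := le_max_left ρ 0
      rw [hx]; simp only [r]; linarith
    simp only [this, hx, div_self hr.ne', one_smul]

theorem no_nonvanishing {E : Type*} [NormedAddCommGroup E] [NormedSpace ℝ E]
    [FiniteDimensional ℝ E] (H : E → E) (hH : Continuous H) (ρ : ℝ) (hid : ∀ x, ρ ≤ ‖x‖ → H x = x) :
    ∃ x, H x = 0 := by
  let L : E ≃L[ℝ] EuclideanSpace ℝ (Fin (Module.finrank ℝ E)) :=
    toEuclidean
  let K := ‖(L : E →L[ℝ] EuclideanSpace ℝ (Fin (Module.finrank ℝ E)))‖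
  obtain ⟨y, hy⟩ := no_nonvanishing_inner (fun y => L (H (L.symm y))) (by fun_prop) (K * max ρ 0 + K + 1) (by
    intro y hy
    rw [hid, L.apply_symm_apply]
    by_contra hlt
    push Not at hlt
    have h1 : ‖y‖ ≤ K * ‖L.symm y‖ := by
      have := (L : E →L[ℝ] EuclideanSpace ℝ (Fin (Module.finrank ℝ E))).le_opNorm (L.symm y)
      simpa using this
    have hK : 0 ≤ K := norm_nonneg _
    have h2 : K * ‖L.symm y‖ ≤ K * max ρ 0 := by
      gcongr; exact hlt.le.trans (le_max_left _ _)
    linarith)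
  exact ⟨L.symm y, by simpa using hy⟩

/-- The inclusion of a sphere in the punctured space. -/
def incl (E : Type*) [NormedAddCommGroup E] (r : ℝ) (hr : 0 < r) :
    C(sphere (0:E) r, {x : E // x ≠ 0}) :=
  ⟨fun x => ⟨x.1, fun h => by
    have := mem_sphere_zero_iff_norm.1 x.2
    rw [h, norm_zero] at this
    exact hr.ne this⟩, by fun_prop⟩

theorem incl_not_null {E : Type*} [NormedAddCommGroup E] [NormedSpace ℝ E]
    [FiniteDimensional ℝ E] (r : ℝ) (hr : 0 < r) : ¬ (incl E r hr).Nullhomotopic := by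
  rintro ⟨c, ⟨K⟩⟩
  let P : {x : E // r/2 ≤ ‖x‖} → sphere (0:E) r := fun x => ⟨(r / ‖x.1‖) • x.1, by
    have h1 : 0 < ‖x.1‖ := lt_of_lt_of_le (by positivity) x.2
    rw [mem_sphere_zero_iff_norm, norm_smul, norm_div, norm_norm, Real.norm_of_nonneg hr.le]
    field_simp⟩
  have hP : Continuous P := by
    refine Continuous.subtype_mk ?_ _
    refine Continuous.smul (continuous_const.div (by fun_prop) ?_) (by fun_prop)
    intro x
    have h1 : 0 < ‖x.1‖ := lt_of_lt_of_le (by positivity) x.2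
    exact h1.ne'
  let T : E → unitInterval := fun x => Set.projIcc 0 1 zero_le_one (2 - 2 * ‖x‖ / r)
  have hT : Continuous T := continuous_projIcc.comp (by fun_prop)
  classical
  let H : E → E := fun x => if h : r/2 ≤ ‖x‖ then (max 1 (‖x‖/r)) • (K (T x, P ⟨x, h⟩)).1 else c.1
  have hH : Continuous H := by
    have h1 : ContinuousOn H {x | r/2 ≤ ‖x‖} := by
      rw [continuousOn_iff_continuous_domRestrict]
      have : Set.domRestrict {x | r/2 ≤ ‖x‖} H = fun x : {x : E // r/2 ≤ ‖x‖} =>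
          (max 1 (‖x.1‖/r)) • (K (T x.1, P x)).1 := by
        funext x
        have := x.2
        rw [Set.domRestrict_apply]
        simp only [H]
        rw [dif_pos (show r/2 ≤ ‖x.1‖ from x.2)]
      rw [this]
      fun_prop
    have h2 : ContinuousOn H {x | ‖x‖ ≤ r/2} := by
      refine continuousOn_const (c := c.1) |>.congr fun x hx => ?_
      have hx : ‖x‖ ≤ r/2 := hx
      simp only [H]
      split_ifs with h
      · have he : ‖x‖ = r/2 := le_antisymm hx h
        have h3 : T x = 1 := by
          simp only [T]
          have : 2 - 2 * ‖x‖ / r = 1 := by rw [he]; field_simp; norm_num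
          rw [this]
          exact Set.projIcc_right _
        have h4 : max 1 (‖x‖/r) = 1 := max_eq_left (by rw [he]; field_simp; norm_num)
        rw [h3, h4, ContinuousMap.Homotopy.apply_one]
        simp
      · rfl
    have hu : {x : E | r/2 ≤ ‖x‖} ∪ {x | ‖x‖ ≤ r/2} = univ := by
      ext x; simpa using le_total _ _
    rw [← continuousOn_univ, ← hu]
    exact h1.union_of_isClosed h2 (isClosed_le continuous_const continuous_norm)
      (isClosed_le continuous_norm continuous_const)
  obtain ⟨x, hx⟩ := no_nonvanishing H hH r (by
    intro x hx
    have h : r/2 ≤ ‖x‖ := by linarith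
    have h1 : 0 < ‖x‖ := by linarith
    simp only [H]
    rw [dif_pos h]
    have h3 : T x = 0 := by
      simp only [T]
      apply Set.projIcc_of_le_left
      have : 1 ≤ ‖x‖ / r := (one_le_div hr).2 hx
      have : 2 * ‖x‖ / r = 2 * (‖x‖ / r) := by ring
      linarith
    rw [h3, ContinuousMap.Homotopy.apply_zero, max_eq_right ((one_le_div hr).2 hx)]
    simp only [incl, P, ContinuousMap.coe_mk, smul_smul]
    rw [div_mul_div_cancel₀ hr.ne', div_self h1.ne', one_smul])
  simp only [H] at hx
  split_ifs at hx with h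
  · rcases smul_eq_zero.1 hx with h1 | h1
    · have : (1:ℝ) ≤ 0 := h1 ▸ le_max_left _ _
      linarith
    · exact (K (T x, P ⟨x, h⟩)).2 h1
  · exact c.2 hx

end Br

/-- `g` is an open topological embedding on the open set `s`. -/
structure Chart {X Y : Type*} [TopologicalSpace X] [TopologicalSpace Y] (g : X → Y) (s : Set X) :
    Prop where
  open_s : IsOpen s
  cont : ContinuousOn g s
  inj : InjOn g s
  opn : ∀ O : Set X, O ⊆ s → IsOpen O → IsOpen (g '' O)

theorem Chart.mono {X Y : Type*} [TopologicalSpace X] [TopologicalSpace Y]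
    {g : X → Y} {s t : Set X} (h : Chart g s) (ht : IsOpen t) (hts : t ⊆ s) : Chart g t :=
  ⟨ht, h.cont.mono hts, h.inj.mono hts, fun O hO => h.opn O (hO.trans hts)⟩

theorem Chart.comp {X Y Z : Type*} [TopologicalSpace X] [TopologicalSpace Y] [TopologicalSpace Z]
    {g : X → Y} {s : Set X} {k : Y → Z} {t : Set Y} (hg : Chart g s) (hk : Chart k t)
    (hst : MapsTo g s t) : Chart (k ∘ g) s where
  open_s := hg.open_s
  cont := hk.cont.comp hg.cont hst
  inj := hk.inj.comp hg.inj hst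
  opn O hO hO' := by
    rw [image_comp]
    exact hk.opn _ (by rintro _ ⟨x, hx, rfl⟩; exact hst (hO hx)) (hg.opn O hO hO')

theorem Chart.inv {X Y : Type*} [TopologicalSpace X] [TopologicalSpace Y]
    {g : X → Y} {s : Set X} (h : Chart g s) {k : Y → X} (hk : ∀ x ∈ s, k (g x) = x) :
    Chart k (g '' s) where
  open_s := h.opn s Subset.rfl h.open_s
  cont := by
    rw [_root_.continuousOn_iff']
    intro t ht
    refine ⟨g '' (t ∩ s), h.opn _ inter_subset_right (ht.inter h.open_s), ?_⟩
    ext y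
    constructor
    · rintro ⟨hy, x, hx, rfl⟩
      rw [mem_preimage, hk x hx] at hy
      exact ⟨⟨x, ⟨hy, hx⟩, rfl⟩, ⟨x, hx, rfl⟩⟩
    · rintro ⟨⟨x, ⟨hx1, hx2⟩, rfl⟩, -⟩
      exact ⟨by rw [mem_preimage, hk x hx2]; exact hx1, ⟨x, hx2, rfl⟩⟩
  inj := by
    rintro _ ⟨x, hx, rfl⟩ _ ⟨y, hy, rfl⟩ hxy
    rw [hk x hx, hk y hy] at hxy
    rw [hxy]
  opn O hO hO' := by
    have : k '' O = s ∩ g ⁻¹' O := by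
      ext x
      constructor
      · rintro ⟨y, hy, rfl⟩
        obtain ⟨x, hx, rfl⟩ := hO hy
        rw [hk x hx]; exact ⟨hx, hy⟩
      · rintro ⟨hx, hx'⟩
        exact ⟨g x, hx', hk x hx⟩
    rw [this]
    exact h.cont.isOpen_inter_preimage h.open_s hO'

theorem Chart.exists_inv {X Y : Type*} [TopologicalSpace X] [TopologicalSpace Y] [Nonempty X]
    {g : X → Y} {s : Set X} (h : Chart g s) :
    ∃ k : Y → X, Chart k (g '' s) ∧ ∀ x ∈ s, k (g x) = x :=
  ⟨Function.invFunOn g s, h.inv (fun _ hx => h.inj.leftInvOn_invFunOn hx),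
    fun _ hx => h.inj.leftInvOn_invFunOn hx⟩

theorem Homeomorph.chart {X Y : Type*} [TopologicalSpace X] [TopologicalSpace Y] (e : X ≃ₜ Y)
    (s : Set X) (hs : IsOpen s) : Chart e s :=
  ⟨hs, e.continuous.continuousOn, e.injective.injOn, fun O _ hO => e.isOpenMap O hO⟩

theorem hmk {S E : Type*} [TopologicalSpace S] [NormedAddCommGroup E]
    (f g : C(S, {x : E // x ≠ 0})) (H : unitInterval × S → E) (hc : Continuous H)
    (hne : ∀ p, H p ≠ 0) (h0 : ∀ s, H (0, s) = f s) (h1 : ∀ s, H (1, s) = g s) :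
    f.Homotopic g :=
  ⟨⟨⟨fun p => ⟨H p, hne p⟩, hc.subtype_mk _⟩, fun s => Subtype.ext (h0 s),
    fun s => Subtype.ext (h1 s)⟩⟩

theorem glue_one {X : Type*} [TopologicalSpace X] (Ω : Set X) (hΩ : IsOpen Ω) (w : X → ℝ)
    (hw : ContinuousOn w (closure Ω)) (h1 : ∀ x ∈ closure Ω, x ∉ Ω → w x = 1) :
    ∃ l : X → ℝ, Continuous l ∧ (∀ x ∈ Ω, l x = w x) ∧ ∀ x, x ∉ Ω → l x = 1 := by
  classical
  refine ⟨fun x => if x ∈ Ω then w x else 1, ?_, fun x hx => if_pos hx, fun x hx => if_neg hx⟩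
  have hu : closure Ω ∪ Ωᶜ = univ := by
    ext x
    by_cases hx : x ∈ Ω
    · simp [subset_closure hx]
    · simp [hx]
  rw [← continuousOn_univ, ← hu]
  refine ContinuousOn.union_of_isClosed ?_ ?_ isClosed_closure hΩ.isClosed_compl
  · refine hw.congr fun x hx => ?_
    by_cases h : x ∈ Ω
    · simp [h]
    · simp [h, h1 x hx h]
  · exact (continuousOn_const (c := (1:ℝ))).congr fun x hx => if_neg hx

theorem tietze_ext {X Y : Type} [NormedAddCommGroup X] [NormedAddCommGroup Y] [NormedSpace ℝ Y]
    [FiniteDimensional ℝ Y] (s : Set X) (hs : IsClosed s) (f : X → Y) (hf : ContinuousOn f s) :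
    ∃ g : X → Y, Continuous g ∧ ∀ x ∈ s, g x = f x := by
  have : TietzeExtension.{0} Y := TietzeExtension.of_tvs ℝ
  obtain ⟨g, hg⟩ := ContinuousMap.exists_restrict_eq hs ⟨_, continuousOn_iff_continuous_domRestrict.1 hf⟩
  refine ⟨g, g.continuous, fun x hx => ?_⟩
  have := congrArg (fun k => k ⟨x, hx⟩) hg
  simpa using this

/-- A map into a bigger space can be pushed off the origin. -/
theorem push_off {X Y : Type} [NormedAddCommGroup X] [NormedSpace ℝ X] [FiniteDimensional ℝ X]
    [NormedAddCommGroup Y] [NormedSpace ℝ Y] [FiniteDimensional ℝ Y]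
    (hd : Module.finrank ℝ X < Module.finrank ℝ Y) (A : X → Y) (hA : Continuous A)
    (ρ : ℝ) (hρ : 0 < ρ) :
    ∃ B : X → Y, Continuous B ∧ (∀ u, ρ ≤ ‖B u‖) ∧
      ∀ u, ρ / 2 ≤ ‖A u‖ → ∀ l : ℝ, 0 ≤ l → l ≤ 1 → ρ / 4 < ‖(1 - l) • A u + l • B u‖ := by
  obtain ⟨g, hg1, hg2, -⟩ := hA.exists_contDiff_approx 1 (ε := fun _ => ρ/16) continuous_const
    (fun _ => by positivity)
  have hg1' : ContDiff ℝ 1 g := by exact_mod_cast hg1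
  have hdense := hg1'.dense_compl_range_of_finrank_lt_finrank hd
  obtain ⟨c, hc1, hc2⟩ := hdense.exists_mem_open (isOpen_ball (x := (0:Y)) (ε := ρ/16))
    ⟨0, mem_ball_self (by positivity)⟩
  rw [mem_ball_zero_iff] at hc2
  have hne : ∀ u, g u - c ≠ 0 := fun u h => hc1 ⟨u, sub_eq_zero.1 h⟩
  have hB0 : Continuous fun u => g u - c := hg1'.continuous.sub continuous_const
  have hκ : Continuous fun u => max 1 (ρ / ‖g u - c‖) :=
    continuous_const.max (continuous_const.div hB0.norm fun u => norm_ne_zero_iff.2 (hne u))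
  refine ⟨fun u => (max 1 (ρ / ‖g u - c‖)) • (g u - c), hκ.smul hB0, fun u => ?_, ?_⟩
  · have hp : 0 < ‖g u - c‖ := norm_pos_iff.2 (hne u)
    rw [norm_smul, Real.norm_of_nonneg (le_trans zero_le_one (le_max_left _ _))]
    calc ρ = ρ / ‖g u - c‖ * ‖g u - c‖ := by field_simp
      _ ≤ _ := by gcongr; exact le_max_right _ _
  · intro u hu l hl0 hl1
    set κ := max 1 (ρ / ‖g u - c‖)
    have hκ1 : 1 ≤ κ := le_max_left _ _
    set e := g u - c - A u
    have he : ‖e‖ ≤ ρ/8 := by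
      have h1 := hg2 u
      rw [dist_eq_norm] at h1
      calc ‖e‖ = ‖(g u - A u) - c‖ := by congr 1; simp only [e]; abel
        _ ≤ ‖g u - A u‖ + ‖c‖ := norm_sub_le _ _
        _ ≤ ρ/8 := by linarith
    have heq : (1 - l) • A u + l • κ • (g u - c) = (1 - l + l*κ) • A u + (l*κ) • e := by
      simp only [e, smul_sub, add_smul, smul_smul]; abel
    rw [heq]
    have hμ : 0 ≤ l * κ := by positivity
    have hμ1 : 1 ≤ 1 - l + l * κ := by nlinarith
    have h1 : ‖(1 - l + l*κ) • A u‖ - ‖(l*κ) • e‖ ≤ ‖(1 - l + l*κ) • A u + (l*κ) • e‖ := by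
      have := norm_sub_le ((1 - l + l*κ) • A u + (l*κ) • e) ((l*κ) • e)
      rw [add_sub_cancel_right] at this
      linarith
    rw [norm_smul, norm_smul, Real.norm_of_nonneg hμ, Real.norm_of_nonneg (by linarith)] at h1
    have h2 : l * κ * ‖e‖ ≤ (1 - l + l * κ) * (ρ/8) := by
      apply mul_le_mul _ he (norm_nonneg _) (by linarith)
      linarith
    have h3 : (1 - l + l * κ) * (ρ/2) ≤ (1 - l + l*κ) * ‖A u‖ := by gcongr
    nlinarith

theorem index_abs {Es Eu Es' Eu' : Type}
    [NormedAddCommGroup Es] [NormedSpace ℝ Es] [FiniteDimensional ℝ Es]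
    [NormedAddCommGroup Eu] [NormedSpace ℝ Eu] [FiniteDimensional ℝ Eu]
    [NormedAddCommGroup Es'] [NormedSpace ℝ Es'] [FiniteDimensional ℝ Es']
    [NormedAddCommGroup Eu'] [NormedSpace ℝ Eu'] [FiniteDimensional ℝ Eu']
    (hd : Module.finrank ℝ Es' < Module.finrank ℝ Es) (ρ : ℝ) (hρ : 0 < ρ)
    (Ωs : Set Es') (hΩs : IsOpen Ωs) (hs0 : (0:Es') ∈ Ωs) (hsb : Ωs ⊆ ball 0 1)
    (X : Es' → Es × Eu) (hX : ContinuousOn X (closure Ωs))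
    (hX2 : ∀ u ∈ closure Ωs, ‖(X u).2‖ ≤ ρ / 4)
    (hX1 : ∀ u ∈ closure Ωs, u ∉ Ωs → ρ ≤ ‖(X u).1‖)
    (Ωu : Set Eu') (hΩu : IsOpen Ωu) (hu0 : (0:Eu') ∈ Ωu) (hub : Ωu ⊆ ball 0 1)
    (Y : Eu' → Es × Eu) (hY : ContinuousOn Y (closure Ωu))
    (hY1 : ∀ v ∈ closure Ωu, ‖(Y v).1‖ ≤ ρ / 4)
    (hY2 : ∀ v ∈ closure Ωu, v ∉ Ωu → ρ ≤ ‖(Y v).2‖)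
    (hXY : ∀ u ∈ Ωs, ∀ v ∈ Ωu, X u = Y v → u = 0 ∧ v = 0)
    (φ : Es' × Eu' → Es × Eu) (r : ℝ) (hr : 0 < r) (hφ : Chart φ (ball 0 r))
    (hφs : ∀ u, ‖u‖ < r → φ (u, 0) = X u) (hφu : ∀ v, ‖v‖ < r → φ (0, v) = Y v) : False := by
  have h00 : X 0 = Y 0 := by
    rw [← hφs 0 (by simpa using hr), ← hφu 0 (by simpa using hr)]
  obtain ⟨Xt, hXt, hXe⟩ := tietze_ext _ isClosed_closure X hX
  obtain ⟨Yt, hYt, hYe⟩ := tietze_ext _ isClosed_closure Y hY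
  obtain ⟨B, hB, hBn, hBc⟩ := push_off hd (fun u => (Xt u).1) (by fun_prop) ρ hρ
  -- projection
  let P : Es → Es := fun y => (ρ/4 / max (ρ/4) ‖y‖) • y
  have hmax : ∀ y : Es, max (ρ/4) ‖y‖ ≠ 0 := fun y =>
    (lt_of_lt_of_le (by positivity : 0 < ρ/4) (le_max_left _ _)).ne'
  have hPc : Continuous P :=
    (continuous_const.div (continuous_const.max continuous_norm) hmax).smul continuous_id
  have hPn : ∀ y, ‖P y‖ ≤ ρ/4 := by
    intro y
    have hp : 0 < max (ρ/4) ‖y‖ := lt_of_lt_of_le (by positivity : 0 < ρ/4) (le_max_left _ _)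
    simp only [P]
    rw [norm_smul, Real.norm_of_nonneg (by positivity), div_mul_eq_mul_div, div_le_iff₀ hp]
    gcongr; exact le_max_right _ _
  have hPe : ∀ y, ‖y‖ ≤ ρ/4 → P y = y := by
    intro y hy
    simp only [P]
    rw [max_eq_left hy, div_self (by positivity), one_smul]
  -- cut-off functions
  obtain ⟨l1, hl1c, hl1e, hl1o⟩ := glue_one Ωs hΩs
    (fun u => min 1 (max 0 (2 * ‖(Xt u).1‖ / ρ - 1))) (by fun_prop) (by
      intro x hx hx'
      have := hX1 x hx hx'
      rw [← hXe x hx] at this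
      apply min_eq_left
      apply le_max_of_le_right
      rw [le_sub_iff_add_le, le_div_iff₀ hρ]; linarith)
  obtain ⟨l2, hl2c, hl2e, hl2o⟩ := glue_one Ωu hΩu
    (fun v => min 1 (max 0 (2 * ‖(Yt v).2‖ / ρ - 1))) (by fun_prop) (by
      intro x hx hx'
      have := hY2 x hx hx'
      rw [← hYe x hx] at this
      apply min_eq_left
      apply le_max_of_le_right
      rw [le_sub_iff_add_le, le_div_iff₀ hρ]; linarith)
  have hl1m : ∀ u, 0 ≤ l1 u ∧ l1 u ≤ 1 := by
    intro u
    by_cases h : u ∈ Ωs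
    · rw [hl1e u h]; exact ⟨le_min zero_le_one (le_max_left _ _), min_le_left _ _⟩
    · rw [hl1o u h]; simp
  have hl2m : ∀ u, 0 ≤ l2 u ∧ l2 u ≤ 1 := by
    intro u
    by_cases h : u ∈ Ωu
    · rw [hl2e u h]; exact ⟨le_min zero_le_one (le_max_left _ _), min_le_left _ _⟩
    · rw [hl2o u h]; simp
  let l : Es' × Eu' → ℝ := fun z => max (l1 z.1) (l2 z.2)
  have hlc : Continuous l := by fun_prop
  let F : Es' × Eu' → Es × Eu := fun z =>
    ((1 - l z) • (Xt z.1).1 + l z • B z.1 - P (Yt z.2).1, (Xt z.1).2 - (Yt z.2).2)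
  have hFc : Continuous F := by fun_prop
  -- points where the cut-off vanishes
  have hl1z : ∀ u ∈ Ωs, ‖(X u).1‖ ≤ ρ/2 → l1 u = 0 := by
    intro u hu h
    rw [hl1e u hu, hXe u (subset_closure hu)]
    have : 2 * ‖(X u).1‖ / ρ - 1 ≤ 0 := by
      rw [sub_nonpos, div_le_iff₀ hρ]; linarith
    rw [max_eq_left this]; exact min_eq_right zero_le_one
  have hl2z : ∀ u ∈ Ωu, ‖(Y u).2‖ ≤ ρ/2 → l2 u = 0 := by
    intro u hu h
    rw [hl2e u hu, hYe u (subset_closure hu)]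
    have : 2 * ‖(Y u).2‖ / ρ - 1 ≤ 0 := by
      rw [sub_nonpos, div_le_iff₀ hρ]; linarith
    rw [max_eq_left this]; exact min_eq_right zero_le_one
  have hFnear : ∀ u ∈ Ωs, ∀ v ∈ Ωu, ‖(X u).1‖ ≤ ρ/2 → ‖(Y v).2‖ ≤ ρ/2 → F (u, v) = X u - Y v := by
    intro u hu v hv h1 h2
    have hl0 : l (u, v) = 0 := by simp only [l]; rw [hl1z u hu h1, hl2z v hv h2, max_self]
    simp only [F, hl0, hXe u (subset_closure hu), hYe v (subset_closure hv)]
    rw [hPe _ (hY1 v (subset_closure hv))]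
    simp [Prod.ext_iff]
  have hout : ∀ z : Es' × Eu', (z.1 ∉ Ωs ∨ z.2 ∉ Ωu) → l z = 1 := by
    rintro z (h | h)
    · simp only [l, hl1o _ h]; exact max_eq_left (hl2m _).2
    · simp only [l, hl2o _ h]; exact max_eq_right (hl1m _).2
  have hBP : ∀ u y, B u - P y ≠ 0 := by
    intro u y h
    have h1 := hBn u
    rw [sub_eq_zero.1 h] at h1
    have := hPn y
    linarith
  have hFne : ∀ z, z ≠ 0 → F z ≠ 0 := by
    rintro ⟨u, v⟩ hz hF
    by_cases hu : u ∈ Ωs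
    swap
    · have hl := hout (u, v) (Or.inl hu)
      have := congrArg Prod.fst hF
      simp only [F, hl] at this
      exact hBP u _ (by simpa using this)
    by_cases hv : v ∈ Ωu
    swap
    · have hl := hout (u, v) (Or.inr hv)
      have := congrArg Prod.fst hF
      simp only [F, hl] at this
      exact hBP u _ (by simpa using this)
    have hv2 : ‖(Y v).2‖ ≤ ρ/2 := by
      have := congrArg Prod.snd hF
      simp only [F] at this
      rw [hXe u (subset_closure hu), hYe v (subset_closure hv)] at this
      have h2 := sub_eq_zero.1 (this : (X u).2 - (Y v).2 = 0)
      rw [← h2]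
      have := hX2 u (subset_closure hu)
      linarith
    by_cases h1 : ‖(X u).1‖ ≤ ρ/2
    · rw [hFnear u hu v hv h1 hv2] at hF
      obtain ⟨rfl, rfl⟩ := hXY u hu v hv (sub_eq_zero.1 hF)
      exact hz rfl
    · have hl : l (u, v) = l1 u := by
        simp only [l]; rw [hl2z v hv hv2]; exact max_eq_left (hl1m u).1
      have := congrArg Prod.fst hF
      simp only [F, hl] at this
      have h3 := sub_eq_zero.1 (this : _ - _ = (0 : Es))
      have h4 := hBc u (by rw [hXe u (subset_closure hu)]; linarith) (l1 u) (hl1m u).1 (hl1m u).2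
      rw [h3] at h4
      have := hPn (Yt v).1
      linarith
  -- shrink the radius
  obtain ⟨r', hr'0, hr'r, hr's, hr'u⟩ : ∃ r' > 0, r' ≤ r ∧
      (∀ u : Es', ‖u‖ < r' → u ∈ Ωs ∧ ‖(X u).1‖ ≤ ρ/2) ∧
      (∀ v : Eu', ‖v‖ < r' → v ∈ Ωu ∧ ‖(Y v).2‖ ≤ ρ/2) := by
    have h1 : ∀ᶠ u in nhds (0:Es'), u ∈ Ωs ∧ ‖(Xt u).1‖ < ρ/2 := by
      refine (hΩs.eventually_mem hs0).and ?_
      have hc : Continuous fun u => ‖(Xt u).1‖ := by fun_prop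
      refine hc.continuousAt.eventually (gt_mem_nhds ?_)
      beta_reduce
      rw [hXe 0 (subset_closure hs0), h00]
      have := hY1 0 (subset_closure hu0)
      linarith
    have h2 : ∀ᶠ u in nhds (0:Eu'), u ∈ Ωu ∧ ‖(Yt u).2‖ < ρ/2 := by
      refine (hΩu.eventually_mem hu0).and ?_
      have hc : Continuous fun u => ‖(Yt u).2‖ := by fun_prop
      refine hc.continuousAt.eventually (gt_mem_nhds ?_)
      beta_reduce
      rw [hYe 0 (subset_closure hu0), ← h00]
      have := hX2 0 (subset_closure hs0)
      linarith
    obtain ⟨r1, hr1, h1⟩ := Metric.eventually_nhds_iff.1 h1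
    obtain ⟨r2, hr2, h2⟩ := Metric.eventually_nhds_iff.1 h2
    refine ⟨min r (min r1 r2), by positivity, min_le_left _ _, fun u hu => ?_, fun u hu => ?_⟩
    · have := h1 (y := u) (by
        rw [dist_zero_right]
        exact hu.trans_le ((min_le_right _ _).trans (min_le_left _ _)))
      exact ⟨this.1, by rw [← hXe u (subset_closure this.1)]; exact this.2.le⟩
    · have := h2 (y := u) (by
        rw [dist_zero_right]
        exact hu.trans_le ((min_le_right _ _).trans (min_le_right _ _)))
      exact ⟨this.1, by rw [← hYe u (subset_closure this.1)]; exact this.2.le⟩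
  -- the reflected chart
  let e1 : Es' × Eu' ≃ₜ Es' × Eu' := (Homeomorph.refl Es').prodCongr (Homeomorph.neg Eu')
  have he1 : ∀ z, e1 z = (z.1, -z.2) := fun z => rfl
  have he1n : MapsTo e1 (ball 0 r') (ball 0 r) := by
    intro z hz
    rw [mem_ball_zero_iff] at hz ⊢
    rw [he1, Prod.norm_def]
    simp only [norm_neg]
    rw [← Prod.norm_def]; exact hz.trans_le hr'r
  have hψ : Chart ((Homeomorph.subRight (φ 0)) ∘ (φ ∘ e1)) (ball 0 r') :=
    ((e1.chart _ isOpen_ball).comp hφ he1n).comp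
      ((Homeomorph.subRight (φ 0)).chart univ isOpen_univ) (fun _ _ => mem_univ _)
  set ψ : Es' × Eu' → Es × Eu := (Homeomorph.subRight (φ 0)) ∘ (φ ∘ e1) with hψdef
  have hψe : ∀ z, ψ z = φ (z.1, -z.2) - φ 0 := fun z => rfl
  obtain ⟨k, hk, hkψ⟩ := hψ.exists_inv
  have hψ0 : ψ 0 = 0 := by
    rw [hψe]
    show φ ((0:Es'), -(0:Eu')) - φ 0 = 0
    rw [neg_zero]; exact sub_self _
  have hnh : ψ '' ball 0 r' ∈ nhds (0 : Es × Eu) :=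
    hk.open_s.mem_nhds ⟨0, mem_ball_self hr'0, hψ0⟩
  obtain ⟨R0, hR0, hR0s⟩ := Metric.mem_nhds_iff.1 hnh
  let R := R0 / 2
  have hR : 0 < R := by positivity
  have hSsub : sphere (0 : Es × Eu) R ⊆ ψ '' ball 0 r' := by
    intro y hy
    apply hR0s
    rw [mem_ball_zero_iff, mem_sphere_zero_iff_norm.1 hy]
    simp only [R]; linarith
  let ξ : sphere (0 : Es × Eu) R → Es' × Eu' := fun y => k y.1
  have hξc : Continuous ξ := hk.cont.comp_continuous continuous_subtype_val (fun y => hSsub y.2)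
  have hξ : ∀ y, ξ y ∈ ball (0 : Es' × Eu') r' ∧ ψ (ξ y) = y.1 := by
    intro y
    obtain ⟨x, hx, hxy⟩ := hSsub y.2
    have : ξ y = x := by simp only [ξ]; rw [← hxy, hkψ x hx]
    rw [this]; exact ⟨hx, hxy⟩
  have hξ0 : ∀ y, ξ y ≠ 0 := by
    intro y h
    have h1 := (hξ y).2
    rw [h, hψ0] at h1
    have := mem_sphere_zero_iff_norm.1 y.2
    rw [← h1, norm_zero] at this
    exact hR.ne this
  have hξn : ∀ y, ‖(ξ y).1‖ < r' ∧ ‖(ξ y).2‖ < r' := by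
    intro y
    have := mem_ball_zero_iff.1 (hξ y).1
    exact ⟨(norm_fst_le _).trans_lt this, (norm_snd_le _).trans_lt this⟩
  -- lower bound for ξ
  obtain ⟨Λ, hΛ1, hΛ⟩ : ∃ Λ : ℝ, 1 ≤ Λ ∧ ∀ y, 1 < Λ * ‖ξ y‖ := by
    have : CompactSpace (sphere (0 : Es × Eu) R) := isCompact_iff_compactSpace.1 (isCompact_sphere _ _)
    have hc : Continuous fun y => 1 / ‖ξ y‖ :=
      continuous_const.div hξc.norm (fun y => norm_ne_zero_iff.2 (hξ0 y))
    obtain ⟨C, hC⟩ := isCompact_univ.exists_bound_of_continuousOn hc.continuousOn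
    refine ⟨max 1 (C + 1), le_max_left _ _, fun y => ?_⟩
    have hp := norm_pos_iff.2 (hξ0 y)
    have h1 := hC y (mem_univ _)
    rw [Real.norm_of_nonneg (by positivity)] at h1
    have h2 : 1 / ‖ξ y‖ < max 1 (C+1) := lt_of_lt_of_le (by linarith) (le_max_right _ _)
    rwa [div_lt_iff₀ hp] at h2
  -- the homotopies
  have hone : (1:ℝ) ≠ 0 := one_ne_zero
  let m1 : C(sphere (0 : Es × Eu) R, {x : Es × Eu // x ≠ 0}) :=
    ⟨fun y => ⟨F (ξ y), hFne _ (hξ0 y)⟩, (hFc.comp hξc).subtype_mk _⟩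
  let m2 : C(sphere (0 : Es × Eu) R, {x : Es × Eu // x ≠ 0}) :=
    ⟨fun y => ⟨F (Λ • ξ y), hFne _ (smul_ne_zero (by linarith) (hξ0 y))⟩,
      (hFc.comp (by fun_prop)).subtype_mk _⟩
  let c3 : {x : Es × Eu // x ≠ 0} := ⟨(B 0 - P (Yt 0).1, 0), fun h => hBP _ _ (congrArg Prod.fst h)⟩
  have H1 : (Br.incl (Es × Eu) R hR).Homotopic m1 := by
    refine hmk _ _ (fun p => φ ((ξ p.2).1, -((1 - (p.1:ℝ)) • (ξ p.2).2)) - φ (0, (p.1:ℝ) • (ξ p.2).2))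
      ?_ ?_ ?_ ?_
    · refine Continuous.sub ?_ ?_
      · refine hφ.cont.comp_continuous (by fun_prop) ?_
        intro p
        rw [mem_ball_zero_iff, Prod.norm_def, max_lt_iff]
        refine ⟨(hξn p.2).1.trans_le hr'r, ?_⟩
        rw [norm_neg, norm_smul, Real.norm_of_nonneg (by linarith [p.1.2.2])]
        have := (hξn p.2).2
        have h0 := norm_nonneg (ξ p.2).2
        nlinarith [p.1.2.1]
      · refine hφ.cont.comp_continuous (by fun_prop) ?_
        intro p
        rw [mem_ball_zero_iff, Prod.norm_def, max_lt_iff]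
        refine ⟨by simpa using hr, ?_⟩
        rw [norm_smul, Real.norm_of_nonneg p.1.2.1]
        have := (hξn p.2).2
        have h0 := norm_nonneg (ξ p.2).2
        nlinarith [p.1.2.2]
    · intro p hp
      have h := hφ.inj (by
        rw [mem_ball_zero_iff, Prod.norm_def, max_lt_iff]
        refine ⟨(hξn p.2).1.trans_le hr'r, ?_⟩
        rw [norm_neg, norm_smul, Real.norm_of_nonneg (by linarith [p.1.2.2])]
        have := (hξn p.2).2
        have h0 := norm_nonneg (ξ p.2).2
        nlinarith [p.1.2.1]) (by
        rw [mem_ball_zero_iff, Prod.norm_def, max_lt_iff]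
        refine ⟨by simpa using hr, ?_⟩
        rw [norm_smul, Real.norm_of_nonneg p.1.2.1]
        have := (hξn p.2).2
        have h0 := norm_nonneg (ξ p.2).2
        nlinarith [p.1.2.2]) (sub_eq_zero.1 hp)
      apply hξ0 p.2
      rw [Prod.mk.injEq] at h
      refine Prod.ext h.1 ?_
      have h2 := h.2
      have : (ξ p.2).2 = (p.1:ℝ) • (ξ p.2).2 + (1 - (p.1:ℝ)) • (ξ p.2).2 := by
        rw [← add_smul]; simp
      rw [this, ← h2]; simp
    · intro y
      have := (hξ y).2
      rw [hψe] at this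
      simpa [Br.incl, Prod.mk_zero_zero] using this
    · intro y
      have hn := hξn y
      have e := hFnear _ (hr's _ hn.1).1 _ (hr'u _ hn.2).1 (hr's _ hn.1).2 (hr'u _ hn.2).2
      have e1 := hφs _ (hn.1.trans_le hr'r)
      have e2 := hφu _ (hn.2.trans_le hr'r)
      show _ = F (ξ y)
      rw [show F (ξ y) = F ((ξ y).1, (ξ y).2) from rfl, e, ← e1, ← e2]
      simp
  have H2 : m1.Homotopic m2 := by
    refine hmk _ _ (fun p => F ((1 + (p.1:ℝ) * (Λ - 1)) • ξ p.2)) (by fun_prop) ?_ ?_ ?_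
    · intro p
      refine hFne _ (smul_ne_zero ?_ (hξ0 _))
      have := mul_nonneg p.1.2.1 (sub_nonneg.2 hΛ1)
      linarith
    · intro y; simp [m1]
    · intro y; simp [m2]
  have H3 : m2.Homotopic (ContinuousMap.const _ c3) := by
    refine hmk _ _ (fun p => (B ((1 - (p.1:ℝ)) • Λ • (ξ p.2).1) - P (Yt ((1 - (p.1:ℝ)) • Λ • (ξ p.2).2)).1,
      (1 - (p.1:ℝ)) • (F (Λ • ξ p.2)).2)) (by fun_prop) ?_ ?_ ?_
    · intro p h
      exact hBP _ _ (congrArg Prod.fst h)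
    · intro y
      have : l (Λ • ξ y) = 1 := by
        apply hout
        by_contra hcon
        push Not at hcon
        have h1 := mem_ball_zero_iff.1 (hsb hcon.1)
        have h2 := mem_ball_zero_iff.1 (hub hcon.2)
        have h3 : ‖Λ • ξ y‖ < 1 := by rw [Prod.norm_def]; exact max_lt h1 h2
        rw [norm_smul, Real.norm_of_nonneg (by linarith)] at h3
        have := hΛ y
        linarith
      show _ = F (Λ • ξ y)
      simp [F, this]
    · intro y
      simp [c3]
  exact Br.incl_not_null R hR ⟨c3, (H1.trans H2).trans H3⟩

theorem iterZ_zero (f : M ≃ₜ M) (x : M) : iterZ f 0 x = x := rfl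

theorem iterZ_add (f : M ≃ₜ M) (j k : ℤ) (x : M) :
    iterZ f (j + k) x = iterZ f j (iterZ f k x) := by
  simp only [iterZ, zpow_add]; rfl

theorem iterZ_neg_cancel (f : M ≃ₜ M) (k : ℤ) (x : M) : iterZ f (-k) (iterZ f k x) = x := by
  rw [← iterZ_add, neg_add_cancel]; rfl

theorem iterZ_cancel_neg (f : M ≃ₜ M) (k : ℤ) (x : M) : iterZ f k (iterZ f (-k) x) = x := by
  rw [← iterZ_add, add_neg_cancel]; rfl

theorem iterZ_one (f : M ≃ₜ M) (x : M) : iterZ f 1 x = f x := by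
  simp [iterZ]

theorem iterZ_neg_one (f : M ≃ₜ M) (x : M) : iterZ f (-1) x = f.symm x := by
  rw [← f.symm_apply_apply (iterZ f (-1) x), ← iterZ_one f, iterZ_cancel_neg]

theorem iterZ_natCast (f : M ≃ₜ M) (l : ℕ) (x : M) : iterZ f l x = (f.toEquiv ^ l) x := by
  simp [iterZ]

theorem iterZ_symm (f : M ≃ₜ M) (k : ℤ) (x : M) : iterZ f.symm k x = iterZ f (-k) x := by
  have h : f.symm.toEquiv = (f.toEquiv)⁻¹ := rfl
  simp only [iterZ, h, inv_zpow, zpow_neg]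

theorem continuous_iterZ (f : M ≃ₜ M) (k : ℤ) : Continuous (iterZ f k) := by
  induction k using Int.induction_on with
  | zero => exact continuous_id
  | succ i ih =>
    have : iterZ f (i + 1) = fun x => iterZ f i (f x) := by
      funext x; rw [iterZ_add, iterZ_one]
    rw [this]; exact ih.comp f.continuous
  | pred i ih =>
    have : iterZ f (-i - 1) = fun x => iterZ f (-i) (f.symm x) := by
      funext x; rw [sub_eq_add_neg, iterZ_add, iterZ_neg_one]
    rw [this]; exact ih.comp f.symm.continuous

/-- The iterate as a homeomorphism. -/
def itH (f : M ≃ₜ M) (k : ℤ) : M ≃ₜ M where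
  toFun := iterZ f k
  invFun := iterZ f (-k)
  left_inv := iterZ_neg_cancel f k
  right_inv := iterZ_cancel_neg f k
  continuous_toFun := continuous_iterZ f k
  continuous_invFun := continuous_iterZ f (-k)

theorem itH_apply (f : M ≃ₜ M) (k : ℤ) (x : M) : itH f k x = iterZ f k x := rfl

theorem iterZ_inj (f : M ≃ₜ M) (k : ℤ) {x y : M} (h : iterZ f k x = iterZ f k y) : x = y :=
  (itH f k).injective h

theorem IsExpansive.symm {f : M ≃ₜ M} {α : ℝ} (h : IsExpansive f α) : IsExpansive f.symm α := by
  intro x y hxy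
  obtain ⟨k, hk⟩ := h x y hxy
  exact ⟨-k, by rw [iterZ_symm, iterZ_symm, neg_neg]; exact hk⟩

theorem mem_WsLoc {f : M ≃ₜ M} {ε : ℝ} {x y : M} :
    y ∈ WsLoc f ε x ↔ ∀ k : ℤ, 0 ≤ k → dist (iterZ f k x) (iterZ f k y) ≤ ε := Iff.rfl

theorem mem_WuLoc {f : M ≃ₜ M} {ε : ℝ} {x y : M} :
    y ∈ WuLoc f ε x ↔ ∀ k : ℤ, k ≤ 0 → dist (iterZ f k x) (iterZ f k y) ≤ ε := Iff.rfl

theorem WsLoc_fsymm (f : M ≃ₜ M) (ε : ℝ) (x : M) : WsLoc f.symm ε x = WuLoc f ε x := by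
  ext y
  simp only [mem_WsLoc, mem_WuLoc, iterZ_symm]
  constructor
  · intro h k hk
    have := h (-k) (by omega)
    rwa [neg_neg] at this
  · intro h k hk
    exact h (-k) (by omega)

theorem WsLoc_comm {f : M ≃ₜ M} {ε : ℝ} {x y : M} (h : y ∈ WsLoc f ε x) : x ∈ WsLoc f ε y := by
  intro k hk; rw [dist_comm]; exact h k hk

theorem WuLoc_comm {f : M ≃ₜ M} {ε : ℝ} {x y : M} (h : y ∈ WuLoc f ε x) : x ∈ WuLoc f ε y := by
  intro k hk; rw [dist_comm]; exact h k hk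

theorem isClosed_WsRel (f : M ≃ₜ M) (ε : ℝ) : IsClosed {z : M × M | z.2 ∈ WsLoc f ε z.1} := by
  have : {z : M × M | z.2 ∈ WsLoc f ε z.1} =
      ⋂ k : ℤ, ⋂ _ : 0 ≤ k, {z : M × M | dist (iterZ f k z.1) (iterZ f k z.2) ≤ ε} := by
    ext z; simp [mem_WsLoc]
  rw [this]
  refine isClosed_iInter fun k => isClosed_iInter fun _ => ?_
  have := continuous_iterZ f k
  exact isClosed_le (by fun_prop) continuous_const

theorem isClosed_WuRel (f : M ≃ₜ M) (ε : ℝ) : IsClosed {z : M × M | z.2 ∈ WuLoc f ε z.1} := by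
  have := isClosed_WsRel f.symm ε
  simpa only [WsLoc_fsymm] using this

theorem isClosed_WsLoc (f : M ≃ₜ M) (ε : ℝ) (x : M) : IsClosed (WsLoc f ε x) :=
  (isClosed_WsRel f ε).preimage (f := fun y => (x, y)) (by fun_prop)

theorem mem_WsLoc_self (f : M ≃ₜ M) {ε : ℝ} (hε : 0 ≤ ε) (x : M) : x ∈ WsLoc f ε x := by
  intro k _; simpa using hε

theorem mem_WuLoc_self (f : M ≃ₜ M) {ε : ℝ} (hε : 0 ≤ ε) (x : M) : x ∈ WuLoc f ε x := by
  intro k _; simpa using hε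

/-- Expansivity: stable and unstable local sets intersect in at most one point. -/
theorem expansive_inter {f : M ≃ₜ M} {α : ℝ} (hexp : IsExpansive f α) {p q x y : M}
    (h1 : x ∈ WsLoc f (α/2) p) (h2 : y ∈ WsLoc f (α/2) p)
    (h3 : x ∈ WuLoc f (α/2) q) (h4 : y ∈ WuLoc f (α/2) q) : x = y := by
  by_contra hne
  obtain ⟨k, hk⟩ := hexp x y hne
  rcases le_total 0 k with h | h
  · have a := h1 k h
    have b := h2 k h
    have := dist_triangle_left (iterZ f k x) (iterZ f k y) (iterZ f k p)
    linarith
  · have a := h3 k h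
    have b := h4 k h
    have := dist_triangle_left (iterZ f k x) (iterZ f k y) (iterZ f k q)
    linarith

theorem unif_contract [CompactSpace M] {f : M ≃ₜ M} {α : ℝ} (hα : 0 < α)
    (hexp : IsExpansive f α) (ρ : ℝ) (hρ : 0 < ρ) :
    ∃ N : ℕ, ∀ x y, y ∈ WsLoc f (α/2) x → ∀ k : ℤ, N ≤ k → dist (iterZ f k x) (iterZ f k y) < ρ := by
  by_contra hcon
  push Not at hcon
  let K : ℕ → Set (M × M) := fun N => {z | ρ ≤ dist z.1 z.2} ∩
    ⋂ k : ℤ, ⋂ _ : -(N:ℤ) ≤ k, {z : M × M | dist (iterZ f k z.1) (iterZ f k z.2) ≤ α/2}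
  have hK : ∀ N, IsClosed (K N) := by
    intro N
    refine (isClosed_le continuous_const (by fun_prop)).inter ?_
    refine isClosed_iInter fun k => isClosed_iInter fun _ => ?_
    have := continuous_iterZ f k
    exact isClosed_le (by fun_prop) continuous_const
  have hne : ∀ N, (K N).Nonempty := by
    intro N
    obtain ⟨x, y, hxy, k, hk, hd⟩ := hcon N
    refine ⟨(iterZ f k x, iterZ f k y), hd, ?_⟩
    simp only [mem_iInter]
    intro j hj
    show dist (iterZ f j (iterZ f k x)) (iterZ f j (iterZ f k y)) ≤ α/2
    rw [← iterZ_add, ← iterZ_add]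
    exact hxy _ (by omega)
  obtain ⟨z, hz⟩ := IsCompact.nonempty_iInter_of_sequence_nonempty_isCompact_isClosed K
    (by
      intro N
      refine inter_subset_inter_right _ ?_
      intro z hz
      simp only [mem_iInter] at hz ⊢
      intro k hk
      exact hz k (by push_cast; omega)) hne (hK 0).isCompact hK
  rw [mem_iInter] at hz
  have hne' : z.1 ≠ z.2 := by
    intro h
    have h0 : ρ ≤ dist z.1 z.2 := (hz 0).1
    rw [h, dist_self] at h0
    linarith
  obtain ⟨k, hk⟩ := hexp _ _ hne'
  have h1 := (hz k.natAbs).2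
  simp only [mem_iInter] at h1
  have h2 : dist (iterZ f k z.1) (iterZ f k z.2) ≤ α/2 := h1 k (by omega)
  linarith

theorem unif_finite [CompactSpace M] (f : M ≃ₜ M) (N : ℕ) (ρ : ℝ) (hρ : 0 < ρ) :
    ∃ δ > 0, ∀ x y : M, dist x y ≤ δ → ∀ k : ℕ, k < N → dist (iterZ f k x) (iterZ f k y) < ρ := by
  induction N with
  | zero => exact ⟨1, one_pos, fun x y _ k hk => by omega⟩
  | succ N ih =>
    obtain ⟨δ, hδ, h⟩ := ih
    have hu := CompactSpace.uniformContinuous_of_continuous (continuous_iterZ f N)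
    obtain ⟨δ', hδ', h'⟩ := Metric.uniformContinuous_iff.1 hu ρ hρ
    refine ⟨min δ (δ'/2), by positivity, fun x y hxy k hk => ?_⟩
    rcases Nat.lt_succ_iff_lt_or_eq.1 hk with h1 | rfl
    · exact h x y (hxy.trans (min_le_left _ _)) k h1
    · exact h' (by have := hxy.trans (min_le_right _ _); linarith)

theorem exists_delta_aux [CompactSpace M] {f : M ≃ₜ M} {α : ℝ} (hα : 0 < α)
    (hexp : IsExpansive f α) : ∃ δ > 0, ∀ x y, dist x y ≤ δ → y ∈ WsLoc f (α/2) x →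
      ∀ k : ℤ, 0 ≤ k → dist (iterZ f k x) (iterZ f k y) < α/2 := by
  obtain ⟨N, hN⟩ := unif_contract hα hexp (α/2) (by positivity)
  obtain ⟨δ, hδ, h⟩ := unif_finite f N (α/2) (by positivity)
  refine ⟨δ, hδ, fun x y hxy hy k hk => ?_⟩
  rcases lt_or_ge k N with h1 | h1
  · lift k to ℕ using hk
    exact h x y hxy k (by omega)
  · exact hN x y hy k h1

/-- `δ` is small enough in the sense that small local stable sets are in the open local ones. -/
def GoodDelta (f : M ≃ₜ M) (ε δ : ℝ) : Prop :=
  0 < δ ∧ ∀ x y, dist x y ≤ δ → y ∈ WsLoc f ε x →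
      ∀ k : ℤ, 0 ≤ k → dist (iterZ f k x) (iterZ f k y) < ε

theorem exists_delta [CompactSpace M] {f : M ≃ₜ M} {α : ℝ} (hα : 0 < α)
    (hexp : IsExpansive f α) : ∃ δ, GoodDelta f (α/2) δ ∧ GoodDelta f.symm (α/2) δ := by
  obtain ⟨δ, hδ, h⟩ := exists_delta_aux hα hexp
  obtain ⟨δ', hδ', h'⟩ := exists_delta_aux hα hexp.symm
  exact ⟨min δ δ', ⟨by positivity, fun x y hxy => h x y (hxy.trans (min_le_left _ _))⟩,
    ⟨by positivity, fun x y hxy => h' x y (hxy.trans (min_le_right _ _))⟩⟩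

/-- Hyperbolic linearising parametrisation at `p`. -/
structure Hyp {Es Eu : Type} [NormedAddCommGroup Es] [NormedSpace ℝ Es]
    [NormedAddCommGroup Eu] [NormedSpace ℝ Eu]
    (f : M ≃ₜ M) (p : M) (l : ℕ) (g : Es × Eu → M) : Prop where
  hl : 1 ≤ l
  g0 : g 0 = p
  chart : Chart g (ball 0 4)
  conj : ∀ x : Es × Eu, ‖x.1‖ < 4 → ‖x.2‖ < 2 →
    iterZ f l (g x) = g ((1/2 : ℝ) • x.1, (2:ℝ) • x.2)

/-- One sided data: parametrisation of (a neighbourhood in) the stable manifold. -/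
structure HalfHD {E : Type} [NormedAddCommGroup E] [NormedSpace ℝ E]
    (f : M ≃ₜ M) (ε δ : ℝ) (j : E → M) (p : M) : Prop where
  cont : ContinuousOn j (ball 0 2)
  inj : InjOn j (ball 0 2)
  j0 : j 0 = p
  S1 : ∀ y ∈ WsLoc f ε p, ∃ a, ‖a‖ < 1 ∧ j a = y
  S2 : ∀ C : Set E, IsPreconnected C → C ⊆ ball 0 2 → 0 ∈ C → (∀ a ∈ C, dist p (j a) ≤ δ) →
    ∀ a ∈ C, j a ∈ WsLoc f ε p

section
variable {Es Eu : Type} [NormedAddCommGroup Es] [NormedSpace ℝ Es]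
    [NormedAddCommGroup Eu] [NormedSpace ℝ Eu]
    {f : M ≃ₜ M} {p : M} {l : ℕ} {g : Es × Eu → M}

theorem Hyp.swap (h : Hyp f p l g) : Hyp f.symm p l (g ∘ Prod.swap) where
  hl := h.hl
  g0 := h.g0
  chart := by
    refine ((Homeomorph.prodComm Eu Es).chart (ball 0 4) isOpen_ball).comp h.chart ?_
    intro x hx
    rw [mem_ball_zero_iff, Prod.norm_def] at hx ⊢
    rw [max_comm]; exact hx
  conj x h1 h2 := by
    have := h.conj ((2:ℝ) • x.2, (1/2:ℝ) • x.1)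
      (by simp only [norm_smul, Real.norm_ofNat]; linarith)
      (by simp only [norm_smul]; norm_num; linarith)
    simp only [smul_smul] at this
    norm_num at this
    rw [iterZ_symm]
    apply iterZ_inj f l
    rw [iterZ_cancel_neg]
    simp only [Function.comp_apply, Prod.swap]
    rw [← this]

theorem Hyp.fix (h : Hyp f p l g) : iterZ f l p = p := by
  have := h.conj 0 (by simp) (by simp)
  simp only [Prod.fst_zero, Prod.snd_zero, smul_zero, Prod.mk_zero_zero] at this
  rwa [h.g0] at this

theorem fix_mul {f : M ≃ₜ M} {p : M} {l : ℤ} (h : iterZ f l p = p) (i : ℕ) : iterZ f (i * l) p = p := by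
  induction i with
  | zero => simp [iterZ_zero]
  | succ i ih =>
    have : ((i + 1 : ℕ) : ℤ) * l = l + i * l := by push_cast; ring
    rw [this, iterZ_add, ih, h]

theorem Hyp.iter (h : Hyp f p l g) (i : ℕ) (x : Es × Eu) (h1 : ‖x.1‖ < 4)
    (h2 : ‖(2:ℝ)^i • x.2‖ < 4) :
    iterZ f (i * l) (g x) = g ((1/2 : ℝ)^i • x.1, (2:ℝ)^i • x.2) := by
  induction i with
  | zero => simp [iterZ_zero]
  | succ i ih =>
    have h3 : ‖(2:ℝ)^i • x.2‖ < 2 := by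
      rw [pow_succ', mul_smul, norm_smul, Real.norm_ofNat] at h2
      linarith
    have h4 : ‖(1/2:ℝ)^i • x.1‖ < 4 := by
      rw [norm_smul, norm_pow]
      have : ‖(1/2:ℝ)‖ ^ i ≤ 1 := pow_le_one₀ (norm_nonneg _) (by norm_num)
      have h0 := norm_nonneg x.1
      nlinarith
    have : ((i + 1 : ℕ) : ℤ) * l = l + i * l := by push_cast; ring
    rw [this, iterZ_add, ih (by linarith), h.conj _ h4 h3]
    simp only [smul_smul, pow_succ']

theorem norm_pair_lt {a : Es} {b : Eu} {r : ℝ} (h1 : ‖a‖ < r) (h2 : ‖b‖ < r) :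
    (a, b) ∈ ball (0 : Es × Eu) r := by
  rw [mem_ball_zero_iff, Prod.norm_def]; exact max_lt h1 h2

theorem Hyp.K_exists [CompactSpace M] (h : Hyp f p l g) {α : ℝ} (hα : 0 < α)
    (hexp : IsExpansive f α) :
    ∃ K0 : ℕ, ∀ y ∈ WsLoc f (α/2) p, ∀ i : ℕ, K0 ≤ i → iterZ f (i * l) y ∈ g '' ball 0 1 := by
  have ho : IsOpen (g '' ball 0 1) := h.chart.opn _ (ball_subset_ball (by norm_num)) isOpen_ball
  obtain ⟨ρ, hρ, hb⟩ := Metric.isOpen_iff.1 ho p ⟨0, mem_ball_self one_pos, h.g0⟩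
  obtain ⟨N, hN⟩ := unif_contract hα hexp ρ hρ
  refine ⟨N, fun y hy i hi => hb ?_⟩
  have := hN p y hy (i * l) (by have := h.hl; norm_cast; nlinarith)
  rw [fix_mul h.fix] at this
  rw [mem_ball, dist_comm]; exact this

theorem Hyp.snd_zero (h : Hyp f p l g) {x : Es × Eu} (hx : x ∈ ball (0 : Es × Eu) 1)
    (hi : ∀ i : ℕ, iterZ f (i * l) (g x) ∈ g '' ball 0 1) : x.2 = 0 := by
  rw [mem_ball_zero_iff] at hx
  have hx1 : ‖x.1‖ < 1 := (norm_fst_le x).trans_lt hx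
  have hx2 : ‖x.2‖ < 1 := (norm_snd_le x).trans_lt hx
  have key : ∀ i : ℕ, ‖(2:ℝ)^i • x.2‖ < 1 := by
    intro i
    induction i with
    | zero => simpa using hx2
    | succ i ih =>
      have h2 : ‖(2:ℝ)^(i+1) • x.2‖ < 4 := by
        rw [pow_succ', mul_smul, norm_smul, Real.norm_ofNat]; linarith
      obtain ⟨y, hy, hyx⟩ := hi (i+1)
      rw [h.iter (i+1) x (by linarith) h2] at hyx
      have h4 : ‖(1/2:ℝ)^(i+1) • x.1‖ < 4 := by
        rw [norm_smul, norm_pow]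
        have : ‖(1/2:ℝ)‖ ^ (i+1) ≤ 1 := pow_le_one₀ (norm_nonneg _) (by norm_num)
        have h0 := norm_nonneg x.1
        nlinarith
      have := h.chart.inj (ball_subset_ball (by norm_num) hy) (norm_pair_lt h4 h2) hyx
      rw [mem_ball_zero_iff] at hy
      rw [this] at hy
      exact (norm_snd_le _).trans_lt hy
  by_contra hne
  have hp : 0 < ‖x.2‖ := norm_pos_iff.2 hne
  obtain ⟨i, hi⟩ := pow_unbounded_of_one_lt (1 / ‖x.2‖) (one_lt_two (α := ℝ))
  have := key i
  rw [norm_smul, norm_pow, Real.norm_ofNat] at this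
  rw [div_lt_iff₀ hp] at hi
  linarith

theorem Hyp.half [CompactSpace M] (h : Hyp f p l g) {ε δ : ℝ} (hε : 0 < ε) (hδ : GoodDelta f ε δ)
    (K : ℕ) (hK : ∀ y ∈ WsLoc f ε p, ∀ i : ℕ, K ≤ i → iterZ f (i * l) y ∈ g '' ball 0 1) :
    HalfHD f ε δ (fun a : Es => iterZ f (-(K * l)) (g (a, 0))) p := by
  have hc : ContinuousOn (fun a : Es => iterZ f (-(K * l)) (g (a, 0))) (ball 0 2) := by
    refine (continuous_iterZ f _).comp_continuousOn ?_
    refine h.chart.cont.comp (by fun_prop) ?_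
    intro a ha
    rw [mem_ball_zero_iff] at ha
    exact norm_pair_lt (by linarith) (by simp)
  have hpK : iterZ f (-(K * l)) p = p := by
    conv_lhs => rw [← fix_mul h.fix K]
    exact iterZ_neg_cancel _ _ _
  refine ⟨hc, ?_, ?_, ?_, ?_⟩
  · intro a ha b hb hab
    rw [mem_ball_zero_iff] at ha hb
    have := h.chart.inj (norm_pair_lt (by linarith) (by simp)) (norm_pair_lt (by linarith) (by simp))
      (iterZ_inj f _ hab)
    exact congrArg Prod.fst this
  · show iterZ f (-(K * l)) (g 0) = p
    rw [h.g0]; exact hpK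
  · intro y hy
    obtain ⟨x, hx, hxy⟩ := hK y hy K le_rfl
    have h2 : x.2 = 0 := by
      refine h.snd_zero hx fun i => ?_
      rw [hxy, ← iterZ_add]
      have := hK y hy (i + K) (by omega)
      push_cast at this
      rwa [add_mul] at this
    refine ⟨x.1, ?_, ?_⟩
    · rw [mem_ball_zero_iff] at hx
      exact (norm_fst_le x).trans_lt hx
    · show iterZ f (-(K * l)) (g (x.1, 0)) = y
      rw [show (x.1, (0:Eu)) = x from Prod.ext rfl h2.symm, hxy]
      exact iterZ_neg_cancel _ _ _
  · intro C hCc hC2 hC0 hCd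
    -- uniform tail
    obtain ⟨N, hN⟩ : ∃ N : ℕ, ∀ k : ℤ, N ≤ k → ∀ a ∈ C,
        dist (iterZ f k p) (iterZ f k (iterZ f (-(K * l)) (g (a, 0)))) < ε := by
      obtain ⟨η, hη, hu⟩ := unif_finite f l ε hε
      have hcont : ContinuousAt g 0 := h.chart.cont.continuousAt (ball_mem_nhds _ (by norm_num))
      obtain ⟨s, hs, hgs⟩ := Metric.continuousAt_iff.1 hcont η hη
      obtain ⟨i0, hi0⟩ := exists_pow_lt_of_lt_one (by positivity : 0 < s/2) (by norm_num : (1/2:ℝ) < 1)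
      refine ⟨(K + i0) * l, fun k hk a ha => ?_⟩
      have ha2 := mem_ball_zero_iff.1 (hC2 ha)
      have hl := h.hl
      have hk' : (i0:ℤ) * l ≤ k - K * l := by push_cast at hk; linarith
      have hkn : 0 ≤ k - K * l := le_trans (by positivity) hk'
      obtain ⟨k', hk'e⟩ := Int.eq_ofNat_of_zero_le hkn
      have hdm := Nat.div_add_mod k' l
      have hm := Nat.mod_lt k' (by omega : 0 < l)
      have hi : i0 ≤ k' / l := by
        rw [Nat.le_div_iff_mul_le (by omega)]
        rw [hk'e] at hk'
        exact_mod_cast hk'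
      have e1 : (k : ℤ) = (k' % l : ℕ) + ((k' / l : ℕ) * l + K * l) := by
        have : (k':ℤ) = (k' / l : ℕ) * l + (k' % l : ℕ) := by rw [mul_comm]; exact_mod_cast hdm.symm
        linarith
      rw [e1, iterZ_add, iterZ_add, iterZ_add, iterZ_add]
      rw [iterZ_cancel_neg, fix_mul h.fix, fix_mul h.fix]
      refine hu _ _ ?_ _ hm
      rw [h.iter _ (a, 0) (by simp only; linarith) (by simp)]
      rw [dist_comm, ← h.g0]
      refine (hgs ?_).le
      rw [dist_zero_right, smul_zero]
      have : ‖(((1/2:ℝ)^(k'/l) • a, (0:Eu)) : Es × Eu)‖ = (1/2)^(k'/l) * ‖a‖ := by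
        rw [Prod.norm_def]; simp [norm_smul]
      show ‖(((1/2:ℝ)^(k'/l) • a, (0:Eu)) : Es × Eu)‖ < s
      rw [this]
      have h5 : (1/2:ℝ)^(k'/l) ≤ (1/2)^i0 := pow_le_pow_of_le_one (by norm_num) (by norm_num) hi
      have h6 : (0:ℝ) < (1/2:ℝ)^(k'/l) := by positivity
      nlinarith [norm_nonneg a]
    have : PreconnectedSpace C := isPreconnected_iff_preconnectedSpace.1 hCc
    set J : C → M := fun a => iterZ f (-(K * l)) (g (a.1, 0)) with hJ
    have hJc : Continuous J := hc.comp_continuous continuous_subtype_val (fun a => hC2 a.2)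
    have hcl : IsClosed (J ⁻¹' (WsLoc f ε p)) := (isClosed_WsLoc f ε p).preimage hJc
    have hop : IsOpen (J ⁻¹' (WsLoc f ε p)) := by
      have : J ⁻¹' (WsLoc f ε p) = ⋂ k ∈ Finset.range N,
          {a | dist (iterZ f k p) (iterZ f k (J a)) < ε} := by
        ext a
        simp only [mem_iInter, mem_preimage]
        constructor
        · intro ha k _
          exact hδ.2 p (J a) (hCd a a.2) ha k (by positivity)
        · intro ha k hk
          rcases lt_or_ge k N with h1 | h1
          · lift k to ℕ using hk
            exact (ha k (by simpa using h1)).le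
          · exact (hN k h1 a a.2).le
      rw [this]
      refine isOpen_biInter_finset fun k _ => ?_
      have := continuous_iterZ f k
      exact isOpen_lt (by fun_prop) continuous_const
    have huniv := IsClopen.eq_univ ⟨hcl, hop⟩ ⟨⟨0, hC0⟩, by
      show iterZ f (-(K * l)) (g 0) ∈ WsLoc f ε p
      rw [h.g0, hpK]; exact mem_WsLoc_self f hε.le p⟩
    intro a ha
    have : (⟨a, ha⟩ : C) ∈ J ⁻¹' (WsLoc f ε p) := huniv ▸ mem_univ _
    exact this
end

/-- Full data attached to a hyperbolic periodic point. -/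
structure HD (Es Eu : Type) [NormedAddCommGroup Es] [NormedSpace ℝ Es]
    [NormedAddCommGroup Eu] [NormedSpace ℝ Eu]
    (f : M ≃ₜ M) (ε δ : ℝ) (p : M) where
  js : Es → M
  ju : Eu → M
  hs : HalfHD f ε δ js p
  hu : HalfHD f.symm ε δ ju p
  g' : Es × Eu → M
  r0 : ℝ
  r0pos : 0 < r0
  r0le : r0 ≤ 1
  chart' : Chart g' (ball 0 r0)
  gs : ∀ u, ‖u‖ < r0 → g' (u, 0) = js u
  gu : ∀ v, ‖v‖ < r0 → g' (0, v) = ju v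
  ws : ∀ x ∈ ball 0 r0, g' x ∈ WsLoc f ε p → x.2 = 0
  wu : ∀ x ∈ ball 0 r0, g' x ∈ WuLoc f ε p → x.1 = 0
  G : Es × Eu → M
  c : ℝ
  cpos : 0 < c
  cle : c ≤ 1
  chartG : Chart G (ball 0 2)
  Gs : ∀ u, ‖u‖ < 2 → G (u, 0) = js u
  Gu : ∀ v, ‖v‖ < 2 → G (0, v) = ju (c • v)
  per : ∃ l : ℕ, 1 ≤ l ∧ iterZ f l p = p

section
variable {Es Eu : Type} [NormedAddCommGroup Es] [NormedSpace ℝ Es]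
    [NormedAddCommGroup Eu] [NormedSpace ℝ Eu]
    {f : M ≃ₜ M} {p : M} {l : ℕ} {g : Es × Eu → M}

theorem Hyp.HD [CompactSpace M] (h : Hyp f p l g) {α δ : ℝ} (hα : 0 < α) (hexp : IsExpansive f α)
    (hδ : GoodDelta f (α/2) δ) (hδ' : GoodDelta f.symm (α/2) δ) :
    Nonempty (HD Es Eu f (α/2) δ p) := by
  obtain ⟨K1, hK1⟩ := h.K_exists hα hexp
  obtain ⟨K2, hK2⟩ := h.swap.K_exists hα hexp.symm
  let K := max K1 K2
  have hs := h.half (half_pos hα) hδ K (fun y hy i hi => hK1 y hy i ((le_max_left _ _).trans hi))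
  have hu := h.swap.half (half_pos hα) hδ' K
    (fun y hy i hi => hK2 y hy i ((le_max_right _ _).trans hi))
  set js : Es → M := fun a => iterZ f (-(K * l)) (g (a, 0)) with hjs
  set ju : Eu → M := fun b => iterZ f.symm (-(K * l)) ((g ∘ Prod.swap) (b, 0)) with hju
  have hju' : ∀ b, ju b = iterZ f (K * l) (g (0, b)) := by
    intro b
    simp only [hju, iterZ_symm, neg_neg]; rfl
  have h2K : (0:ℝ) < 2^K := by positivity
  have h2K1 : (1:ℝ) ≤ 2^K := one_le_pow₀ (by norm_num)
  -- the scaling homeomorphism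
  let sc : Es × Eu ≃ₜ Es × Eu := Homeomorph.smulOfNeZero ((2:ℝ)^K) h2K.ne'
  have hsc : ∀ x, sc x = (2:ℝ)^K • x := fun x => rfl
  let r0 : ℝ := 1 / 2^(2*K)
  have hr0e : r0 * (2^K * 2^K) = 1 := by
    simp only [r0, two_mul, pow_add]; field_simp
  have hr0 : 0 < r0 := by positivity
  have hr01 : r0 ≤ 1 := by
    simp only [r0]
    rw [div_le_one (by positivity)]
    exact one_le_pow₀ (by norm_num)
  have hscn : ∀ {E : Type} [NormedAddCommGroup E] [NormedSpace ℝ E] (v : E), ‖v‖ < r0 →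
      ‖(2:ℝ)^K • v‖ < 1 ∧ ‖(2:ℝ)^K • (2:ℝ)^K • v‖ < 1 := by
    intro E _ _ v hv
    have e1 : ‖(2:ℝ)^K • (2:ℝ)^K • v‖ < 1 := by
      rw [norm_smul, norm_smul, Real.norm_of_nonneg h2K.le, ← hr0e]
      have := mul_lt_mul_of_pos_right hv (mul_pos h2K h2K)
      linarith
    refine ⟨lt_of_le_of_lt ?_ e1, e1⟩
    rw [norm_smul ((2:ℝ)^K) ((2:ℝ)^K • v), Real.norm_of_nonneg h2K.le]
    nlinarith [norm_nonneg ((2:ℝ)^K • v)]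
  have hpow : ((1/2:ℝ)^K) * 2^K = 1 := by rw [← mul_pow]; norm_num
  have hjs2 : ∀ u : Es, ‖(2:ℝ)^K • u‖ < 4 → js u = g ((2:ℝ)^K • u, 0) := by
    intro u hu'
    have := h.iter K ((2:ℝ)^K • u, 0) hu' (by simp)
    simp only [smul_zero, smul_smul, hpow, one_smul] at this
    simp only [hjs, ← this]
    exact iterZ_neg_cancel _ _ _
  have hju2 : ∀ v : Eu, ‖(2:ℝ)^K • v‖ < 4 → ju v = g (0, (2:ℝ)^K • v) := by
    intro v hv
    rw [hju']
    have := h.iter K (0, v) (by simp) hv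
    simpa using this
  have hfl : ∀ x ∈ ball (0 : Es × Eu) r0, iterZ f (K * l) ((g ∘ sc) x) = g (x.1, (2:ℝ)^K • (2:ℝ)^K • x.2) := by
    intro x hx
    rw [mem_ball_zero_iff] at hx
    have hx1 := hscn x.1 ((norm_fst_le x).trans_lt hx)
    have hx2 := hscn x.2 ((norm_snd_le x).trans_lt hx)
    have := h.iter K ((2:ℝ)^K • x) (by
      rw [Prod.smul_fst]; linarith [hx1.1]) (by rw [Prod.smul_snd]; linarith [hx2.2])
    rw [Function.comp_apply, hsc, this, Prod.smul_fst, Prod.smul_snd, smul_smul, hpow, one_smul]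
  have hfl' : ∀ x ∈ ball (0 : Es × Eu) r0, iterZ f (-(K * l)) ((g ∘ sc) x) = g ((2:ℝ)^K • (2:ℝ)^K • x.1, x.2) := by
    intro x hx
    rw [mem_ball_zero_iff] at hx
    have hx1 := hscn x.1 ((norm_fst_le x).trans_lt hx)
    have hx2 := hscn x.2 ((norm_snd_le x).trans_lt hx)
    have := h.iter K ((2:ℝ)^K • (2:ℝ)^K • x.1, x.2) (by
      simp only; linarith [hx1.2]) (by simp only; linarith [hx2.1])
    apply iterZ_inj f (K * l)
    rw [iterZ_cancel_neg, this]
    simp only [Function.comp_apply, hsc]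
    rw [smul_smul _ _ ((2:ℝ)^K • x.1), hpow, one_smul]; rfl
  refine ⟨⟨js, ju, hs, hu, g ∘ sc, r0, hr0, hr01, ?_, ?_, ?_, ?_, ?_,
    fun x => iterZ f (-(K*l)) (g x), r0, hr0, hr01, ?_, ?_, ?_, l, h.hl, h.fix⟩⟩
  · refine (sc.chart _ isOpen_ball).comp h.chart ?_
    intro x hx
    rw [mem_ball_zero_iff] at hx ⊢
    rw [hsc]
    linarith [(hscn x hx).1]
  · intro u hu'
    rw [hjs2 u (by linarith [(hscn u hu').1])]
    simp [hsc]
  · intro v hv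
    rw [hju2 v (by linarith [(hscn v hv).1])]
    simp [hsc]
  · intro x hx hx'
    obtain ⟨a, ha, hax⟩ := hs.S1 _ hx'
    have e1 := hfl x hx
    rw [← hax] at e1
    simp only [hjs] at e1
    rw [iterZ_cancel_neg] at e1
    rw [mem_ball_zero_iff] at hx
    have hx2 := hscn x.2 ((norm_snd_le x).trans_lt hx)
    have := h.chart.inj (norm_pair_lt (by linarith) (by simp))
      (norm_pair_lt (by linarith [norm_fst_le x]) (by linarith [hx2.2])) e1
    have h2 := (congrArg Prod.snd this).symm
    simp only [smul_eq_zero] at h2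
    rcases h2 with h2 | h2 | h2
    · exact absurd h2 h2K.ne'
    · exact absurd h2 h2K.ne'
    · exact h2
  · intro x hx hx'
    rw [← WsLoc_fsymm] at hx'
    obtain ⟨a, ha, hax⟩ := hu.S1 _ hx'
    have e1 := hfl' x hx
    change ju a = _ at hax
    rw [← hax, hju', iterZ_neg_cancel] at e1
    rw [mem_ball_zero_iff] at hx
    have hx1 := hscn x.1 ((norm_fst_le x).trans_lt hx)
    have := h.chart.inj (norm_pair_lt (by simp) (by linarith))
      (norm_pair_lt (by linarith [hx1.2]) (by linarith [norm_snd_le x])) e1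
    have h2 := (congrArg Prod.fst this).symm
    simp only [smul_eq_zero] at h2
    rcases h2 with h2 | h2 | h2
    · exact absurd h2 h2K.ne'
    · exact absurd h2 h2K.ne'
    · exact h2
  · exact (h.chart.mono isOpen_ball (ball_subset_ball (by norm_num))).comp
      ((itH f (-(K*l))).chart univ isOpen_univ) (fun _ _ => mem_univ _)
  · intro u _; rfl
  · intro v hv
    have hle : ∀ t : ℝ, 0 ≤ t → t ≤ 1 → ‖t • v‖ < 4 := by
      intro t h0 h1
      rw [norm_smul, Real.norm_of_nonneg h0]
      nlinarith [norm_nonneg v]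
    have hr2 : r0 * 2^K ≤ 1 := by nlinarith [mul_pos hr0 h2K]
    have hr3 : (2:ℝ)^K * (r0 * 2^K) = 1 := by linarith
    rw [hju2 _ (by rw [smul_smul, mul_comm]; exact hle _ (by positivity) hr2)]
    apply iterZ_inj f (K * l)
    rw [iterZ_cancel_neg]
    have := h.iter K (0, (2:ℝ)^K • r0 • v) (by simp) (by
      simp only [smul_smul]
      rw [show (2:ℝ)^K * (2^K * r0) = 1 by linarith]
      exact hle 1 (by norm_num) le_rfl)
    rw [this]
    simp only [smul_smul, smul_zero]
    rw [show (2:ℝ)^K * (2^K * r0) = 1 by linarith, one_smul]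

end

theorem chart_of_homeo {X Y : Type*} [TopologicalSpace X] [TopologicalSpace Y]
    {U : Set Y} {V : Set X} (h : U ≃ₜ V) (hU : IsOpen U) (hV : IsOpen V) (g : X → Y)
    (hg : ∀ x (hx : x ∈ V), g x = (h.symm ⟨x, hx⟩ : Y)) : Chart g V where
  open_s := hV
  cont := by
    rw [continuousOn_iff_continuous_domRestrict]
    have : V.domRestrict g = fun x => (h.symm x : Y) := by
      funext x; exact hg x.1 x.2
    rw [this]
    fun_prop
  inj := by
    intro x hx y hy hxy
    rw [hg x hx, hg y hy] at hxy
    have := h.symm.injective (Subtype.ext hxy)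
    exact congrArg Subtype.val this
  opn O hO hO' := by
    have : g '' O = Subtype.val '' (h.symm '' (Subtype.val ⁻¹' O)) := by
      ext y
      constructor
      · rintro ⟨x, hx, rfl⟩
        exact ⟨_, ⟨⟨x, hO hx⟩, hx, rfl⟩, (hg x (hO hx)).symm⟩
      · rintro ⟨_, ⟨⟨x, hx'⟩, hx, rfl⟩, rfl⟩
        exact ⟨x, hx, hg x hx'⟩
    rw [this]
    exact hU.isOpenMap_subtype_val _ (h.symm.isOpenMap _ (hO'.preimage continuous_subtype_val))

theorem PerHr.hyp {f : M ≃ₜ M} {n r : ℕ} {p : M} (hp : p ∈ PerHr f n r) :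
    ∃ (l : ℕ) (g : (Fin r → ℝ) × (Fin (n - r) → ℝ) → M), Hyp f p l g := by
  classical
  obtain ⟨l, hl, hfix, U, V, h, hU, hV, h0, hpU, hp0, hconj⟩ := hp
  let k : ModelSp n r → M := fun x => if hx : x ∈ V then (h.symm ⟨x, hx⟩ : M) else p
  have hk : ∀ x (hx : x ∈ V), k x = (h.symm ⟨x, hx⟩ : M) := fun x hx => dif_pos hx
  have hkc : Chart k V := chart_of_homeo h hU hV k hk
  have hk0 : k 0 = p := by
    rw [hk 0 h0]
    have : (⟨0, h0⟩ : V) = h ⟨p, hpU⟩ := Subtype.ext hp0.symm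
    rw [this, h.symm_apply_apply]
  have hkU : ∀ x ∈ V, k x ∈ U := fun x hx => by rw [hk x hx]; exact (h.symm _).2
  have hhk : ∀ x (hx : x ∈ V), (h ⟨k x, hkU x hx⟩ : ModelSp n r) = x := by
    intro x hx
    have : (⟨k x, hkU x hx⟩ : U) = h.symm ⟨x, hx⟩ := Subtype.ext (hk x hx)
    rw [this, h.apply_symm_apply]
  have hkh : ∀ z (hz : z ∈ U), k (h ⟨z, hz⟩) = z := by
    intro z hz
    rw [hk _ (h ⟨z, hz⟩).2, Subtype.coe_eta, h.symm_apply_apply]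
  -- small ball
  have hev : ∀ᶠ x in nhds (0 : ModelSp n r), x ∈ V ∧ iterZ f l (k x) ∈ U := by
    refine (hV.eventually_mem h0).and ?_
    have hc : ContinuousAt (fun x => iterZ f l (k x)) 0 :=
      (continuous_iterZ f l).continuousAt.comp (hkc.cont.continuousAt (hV.mem_nhds h0))
    refine hc.eventually (hU.mem_nhds ?_)
    beta_reduce
    rw [hk0, iterZ_natCast, hfix]; exact hpU
  obtain ⟨s, hs, hball⟩ := Metric.eventually_nhds_iff.1 hev
  have hs4 : s/4 ≠ 0 := by positivity
  let sc : ModelSp n r ≃ₜ ModelSp n r := Homeomorph.smulOfNeZero (s/4) hs4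
  have hsc : ∀ x, sc x = (s/4) • x := fun x => rfl
  have hscn : ∀ x : ModelSp n r, ‖x‖ < 4 → (s/4) • x ∈ V ∧ iterZ f l (k ((s/4) • x)) ∈ U := by
    intro x hx
    apply hball
    rw [dist_zero_right, norm_smul, Real.norm_of_nonneg (by positivity)]
    nlinarith
  refine ⟨l, k ∘ sc, hl, ?_, ?_, ?_⟩
  · simp [hsc, hk0]
  · exact (sc.chart _ isOpen_ball).comp hkc (fun x hx => (hscn x (mem_ball_zero_iff.1 hx)).1)
  · intro x h1 h2
    have hx := hscn x (mem_ball_zero_iff.1 (norm_pair_lt h1 (by linarith : ‖x.2‖ < 4)))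
    have h3 := hconj _ (hkU _ hx.1) (by rw [← iterZ_natCast]; exact hx.2)
    rw [hhk _ hx.1] at h3
    have h4 := hkh _ hx.2
    simp only [iterZ_natCast] at h4
    rw [h3] at h4
    simp only [Function.comp_apply, hsc, iterZ_natCast]
    rw [← h4]
    congr 1
    simp only [modelL]
    ext i
    · simp; ring
    · simp; ring

theorem closed_touch [CompactSpace M] (f : M ≃ₜ M) (ε : ℝ) (K : Set M) (hK : IsCompact K) :
    IsClosed {q | ∃ y ∈ K, y ∈ WsLoc f ε q} := by
  have : {q | ∃ y ∈ K, y ∈ WsLoc f ε q} =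
      Prod.fst '' ({z : M × M | z.2 ∈ WsLoc f ε z.1} ∩ (univ ×ˢ K)) := by
    ext q
    constructor
    · rintro ⟨y, hy, hq⟩
      exact ⟨(q, y), ⟨hq, mem_univ _, hy⟩, rfl⟩
    · rintro ⟨⟨q, y⟩, ⟨hq, -, hy⟩, rfl⟩
      exact ⟨y, hy, hq⟩
  rw [this]
  exact (((isCompact_univ.prod hK).inter_left (isClosed_WsRel f ε)).image continuous_fst).isClosed

/-- The connected component of the stable plaque in an open set. -/
theorem HalfHD.omega {E : Type} [NormedAddCommGroup E] [NormedSpace ℝ E]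
    {f : M ≃ₜ M} {ε δ : ℝ} {j : E → M} {p : M} (h : HalfHD f ε δ j p)
    (B : Set M) (hB : IsOpen B) (hpB : p ∈ B) (hBδ : ∀ y ∈ B, dist p y ≤ δ) :
    ∃ Ω : Set E, IsOpen Ω ∧ 0 ∈ Ω ∧ IsPreconnected Ω ∧ Ω ⊆ ball 0 1 ∧
      (∀ u ∈ Ω, j u ∈ B) ∧ closure Ω ⊆ ball 0 2 ∧ (∀ u ∈ closure Ω, j u ∈ WsLoc f ε p) ∧
      (∀ u ∈ closure Ω, u ∉ Ω → j u ∉ B) := by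
  let A : Set E := ball 0 2 ∩ j ⁻¹' B
  have hA : IsOpen A := h.cont.isOpen_inter_preimage isOpen_ball hB
  have h0A : (0:E) ∈ A := ⟨mem_ball_self (by norm_num), by rw [mem_preimage, h.j0]; exact hpB⟩
  let Ω := connectedComponentIn A 0
  have hΩA : Ω ⊆ A := connectedComponentIn_subset A 0
  have hΩ0 : (0:E) ∈ Ω := mem_connectedComponentIn h0A
  have hΩc : IsPreconnected Ω := isPreconnected_connectedComponentIn
  have hW : ∀ u ∈ Ω, j u ∈ WsLoc f ε p :=
    h.S2 Ω hΩc (hΩA.trans inter_subset_left) hΩ0 (fun a ha => hBδ _ (hΩA ha).2)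
  have hb1 : Ω ⊆ ball 0 1 := by
    intro u hu
    obtain ⟨a, ha, hau⟩ := h.S1 _ (hW u hu)
    have : a = u := h.inj (mem_ball_zero_iff.2 (by linarith)) (hΩA hu).1 hau
    rw [← this]; exact mem_ball_zero_iff.2 ha
  have hcl2 : closure Ω ⊆ ball 0 2 := by
    refine (closure_mono hb1).trans (closure_ball_subset_closedBall.trans ?_)
    exact closedBall_subset_ball (by norm_num)
  refine ⟨Ω, hA.connectedComponentIn, hΩ0, hΩc, hb1, fun u hu => (hΩA hu).2, hcl2, ?_, ?_⟩
  · intro u hu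
    have hc : ContinuousWithinAt j Ω u := (h.cont u (hcl2 hu)).mono (hΩA.trans inter_subset_left)
    have := hc.mem_closure hu (t := WsLoc f ε p) (fun x hx => hW x hx)
    rwa [(isClosed_WsLoc f ε p).closure_eq] at this
  · intro u hu hun hjB
    apply hun
    have hpre : IsPreconnected (Ω ∪ {u}) := hΩc.subset_closure subset_union_left
      (union_subset subset_closure (singleton_subset_iff.2 hu))
    have hsub : Ω ∪ {u} ⊆ A := union_subset hΩA (singleton_subset_iff.2 ⟨hcl2 hu, hjB⟩)
    exact hpre.subset_connectedComponentIn (Or.inl hΩ0) hsub (Or.inr rfl)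

theorem loc_const [CompactSpace M] {Es Eu : Type}
    [NormedAddCommGroup Es] [NormedSpace ℝ Es] [FiniteDimensional ℝ Es]
    [NormedAddCommGroup Eu] [NormedSpace ℝ Eu] [FiniteDimensional ℝ Eu]
    {f : M ≃ₜ M} {α δ : ℝ} (hα : 0 < α) (hδ0 : 0 < δ) (hexp : IsExpansive f α) {q : M}
    (H : HD Es Eu f (α/2) δ q) :
    ∃ η > 0, ∀ q' ∈ ball q η, ∀ (Es' Eu' : Type)
      [NormedAddCommGroup Es'] [NormedSpace ℝ Es'] [FiniteDimensional ℝ Es']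
      [NormedAddCommGroup Eu'] [NormedSpace ℝ Eu'] [FiniteDimensional ℝ Eu'],
      Module.finrank ℝ Es' < Module.finrank ℝ Es → HD Es' Eu' f (α/2) δ q' → False := by
  have hg0 : H.g' 0 = q := by
    have := H.gs 0 (by simpa using H.r0pos)
    rw [← Prod.mk_zero_zero, this, H.hs.j0]
  have hgc : ContinuousAt H.g' 0 := H.chart'.cont.continuousAt (ball_mem_nhds _ H.r0pos)
  obtain ⟨s, hs, hgs⟩ := Metric.continuousAt_iff.1 hgc (δ/2) (by positivity)
  let ρ := min (H.r0/2) (s/2)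
  have hρ : 0 < ρ := by have := H.r0pos; positivity
  have hρr : ρ < H.r0 := lt_of_le_of_lt (min_le_left _ _) (by linarith [H.r0pos])
  have hρs : ρ < s := lt_of_le_of_lt (min_le_right _ _) (by linarith)
  have hsub : closedBall (0 : Es × Eu) ρ ⊆ ball 0 H.r0 := closedBall_subset_ball hρr
  have hBδ : ∀ x ∈ closedBall (0 : Es × Eu) ρ, dist (H.g' x) q < δ/2 := by
    intro x hx
    have := hgs (lt_of_le_of_lt (mem_closedBall.1 hx) hρs)
    rwa [hg0] at this
  have hcomp : ∀ C : Set (Es × Eu), IsClosed C → IsCompact ((H.g') '' (closedBall 0 ρ ∩ C)) := by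
    intro C hC
    exact ((isCompact_closedBall _ _).inter_right hC).image_of_continuousOn
      (H.chart'.cont.mono (inter_subset_left.trans hsub))
  have hC1 := hcomp {x | ρ/4 ≤ ‖x.2‖} (isClosed_le continuous_const (by fun_prop))
  have hC2 := hcomp {x | ρ/4 ≤ ‖x.1‖} (isClosed_le continuous_const (by fun_prop))
  have hO1 := (closed_touch f (α/2) _ hC1).isOpen_compl
  have hO2 := (closed_touch f.symm (α/2) _ hC2).isOpen_compl
  have hBo : IsOpen ((H.g') '' ball 0 ρ) := H.chart'.opn _ (ball_subset_ball hρr.le) isOpen_ball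
  have hqB : q ∈ (H.g') '' ball 0 ρ := ⟨0, mem_ball_self hρ, hg0⟩
  have hqO1 : q ∈ {q | ∃ y ∈ (H.g') '' (closedBall 0 ρ ∩ {x | ρ/4 ≤ ‖x.2‖}), y ∈ WsLoc f (α/2) q}ᶜ := by
    rintro ⟨_, ⟨x, ⟨hx, hx2⟩, rfl⟩, hy⟩
    have : x.2 = 0 := H.ws x (hsub hx) hy
    have hx2' : ρ/4 ≤ ‖x.2‖ := hx2
    rw [this, norm_zero] at hx2'
    linarith
  have hqO2 : q ∈ {q | ∃ y ∈ (H.g') '' (closedBall 0 ρ ∩ {x | ρ/4 ≤ ‖x.1‖}), y ∈ WsLoc f.symm (α/2) q}ᶜ := by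
    rintro ⟨_, ⟨x, ⟨hx, hx2⟩, rfl⟩, hy⟩
    rw [WsLoc_fsymm] at hy
    have : x.1 = 0 := H.wu x (hsub hx) hy
    have hx2' : ρ/4 ≤ ‖x.1‖ := hx2
    rw [this, norm_zero] at hx2'
    linarith
  obtain ⟨η, hη, hηsub⟩ := Metric.isOpen_iff.1 ((hO1.inter hO2).inter (hBo.inter
    (isOpen_ball (x := q) (ε := δ/2)))) q
    ⟨⟨hqO1, hqO2⟩, hqB, mem_ball_self (by positivity)⟩
  refine ⟨η, hη, ?_⟩
  intro q' hq' Es' Eu' _ _ _ _ _ _ hd H'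
  obtain ⟨⟨hq1, hq2⟩, hqB', hqδ⟩ := hηsub hq'
  obtain ⟨κ, hκ, hκg⟩ := H.chart'.exists_inv
  set B := (H.g') '' ball 0 ρ with hBdef
  have hBδ' : ∀ y ∈ B, dist q' y ≤ δ := by
    rintro _ ⟨x, hx, rfl⟩
    have h1 := hBδ x (ball_subset_closedBall hx)
    have h2 := mem_ball.1 hqδ
    have := dist_triangle_right q' (H.g' x) q
    linarith
  have hclB : closure B ⊆ (H.g') '' closedBall 0 ρ := by
    refine closure_minimal (image_mono ball_subset_closedBall) ?_
    have := hcomp univ isClosed_univ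
    rw [inter_univ] at this
    exact this.isClosed
  obtain ⟨Ωs, hΩso, hΩs0, hΩsc, hΩs1, hΩsB, hΩs2, hΩsW, hΩsf⟩ := H'.hs.omega B hBo hqB' hBδ'
  obtain ⟨Ωu, hΩuo, hΩu0, hΩuc, hΩu1, hΩuB, hΩu2, hΩuW, hΩuf⟩ := H'.hu.omega B hBo hqB' hBδ'
  have hXm : ∀ u ∈ closure Ωs, κ (H'.js u) ∈ closedBall (0 : Es × Eu) ρ ∧ H.g' (κ (H'.js u)) = H'.js u := by
    intro u hu
    have hc : ContinuousWithinAt H'.js Ωs u :=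
      (H'.hs.cont u (hΩs2 hu)).mono (subset_closure.trans hΩs2)
    obtain ⟨x, hx, hxu⟩ := hclB (hc.mem_closure hu (fun x hx => hΩsB x hx))
    rw [← hxu, hκg x (hsub hx)]
    exact ⟨hx, rfl⟩
  have hYm : ∀ u ∈ closure Ωu, κ (H'.ju u) ∈ closedBall (0 : Es × Eu) ρ ∧ H.g' (κ (H'.ju u)) = H'.ju u := by
    intro u hu
    have hc : ContinuousWithinAt H'.ju Ωu u :=
      (H'.hu.cont u (hΩu2 hu)).mono (subset_closure.trans hΩu2)
    obtain ⟨x, hx, hxu⟩ := hclB (hc.mem_closure hu (fun x hx => hΩuB x hx))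
    rw [← hxu, hκg x (hsub hx)]
    exact ⟨hx, rfl⟩
  have hX2 : ∀ u ∈ closure Ωs, ‖(κ (H'.js u)).2‖ ≤ ρ/4 := by
    intro u hu
    by_contra hcon
    push Not at hcon
    apply hq1
    exact ⟨_, ⟨_, ⟨(hXm u hu).1, hcon.le⟩, (hXm u hu).2⟩, hΩsW u hu⟩
  have hY1 : ∀ u ∈ closure Ωu, ‖(κ (H'.ju u)).1‖ ≤ ρ/4 := by
    intro u hu
    by_contra hcon
    push Not at hcon
    apply hq2
    exact ⟨_, ⟨_, ⟨(hYm u hu).1, hcon.le⟩, (hYm u hu).2⟩, hΩuW u hu⟩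
  have h'c : ContinuousAt H'.g' 0 := H'.chart'.cont.continuousAt (ball_mem_nhds _ H'.r0pos)
  have hg'0 : H'.g' 0 = q' := by
    have := H'.gs 0 (by simpa using H'.r0pos)
    rw [← Prod.mk_zero_zero, this, H'.hs.j0]
  have hpre : H'.g' ⁻¹' B ∈ nhds 0 := h'c.preimage_mem_nhds (by rw [hg'0]; exact hBo.mem_nhds hqB')
  obtain ⟨r1, hr1, hr1s⟩ := Metric.mem_nhds_iff.1 hpre
  have hφ : Chart (κ ∘ H'.g') (ball 0 (min r1 H'.r0)) := by
    refine (H'.chart'.mono isOpen_ball (ball_subset_ball (min_le_right _ _))).comp hκ ?_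
    intro x hx
    obtain ⟨z, hz, hzx⟩ := hr1s (ball_subset_ball (min_le_left _ _) hx)
    exact ⟨z, ball_subset_ball hρr.le hz, hzx⟩
  refine index_abs hd ρ hρ Ωs hΩso hΩs0 hΩs1 (fun u => κ (H'.js u)) ?_ hX2 ?_
    Ωu hΩuo hΩu0 hΩu1 (fun u => κ (H'.ju u)) ?_ hY1 ?_ ?_ (κ ∘ H'.g') (min r1 H'.r0)
    (lt_min hr1 H'.r0pos) hφ ?_ ?_
  · refine hκ.cont.comp (H'.hs.cont.mono hΩs2) ?_
    intro u hu
    exact ⟨_, hsub (hXm u hu).1, (hXm u hu).2⟩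
  · intro u hu hun
    by_contra hcon
    push Not at hcon
    apply hΩsf u hu hun
    refine ⟨_, ?_, (hXm u hu).2⟩
    have : κ (H'.js u) = ((κ (H'.js u)).1, (κ (H'.js u)).2) := rfl
    rw [this]
    exact norm_pair_lt hcon (lt_of_le_of_lt (hX2 u hu) (by linarith))
  · refine hκ.cont.comp (H'.hu.cont.mono hΩu2) ?_
    intro u hu
    exact ⟨_, hsub (hYm u hu).1, (hYm u hu).2⟩
  · intro u hu hun
    by_contra hcon
    push Not at hcon
    apply hΩuf u hu hun
    refine ⟨_, ?_, (hYm u hu).2⟩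
    have : κ (H'.ju u) = ((κ (H'.ju u)).1, (κ (H'.ju u)).2) := rfl
    rw [this]
    exact norm_pair_lt (lt_of_le_of_lt (hY1 u hu) (by linarith)) hcon
  · intro u hu v hv huv
    beta_reduce at huv
    have e : H'.js u = H'.ju v := by
      rw [← (hXm u (subset_closure hu)).2, ← (hYm v (subset_closure hv)).2, huv]
    have h1 := hΩsW u (subset_closure hu)
    have h2 := hΩuW v (subset_closure hv)
    rw [WsLoc_fsymm, ← e] at h2
    have e2 : H'.js u = q' := expansive_inter hexp h1 (mem_WsLoc_self f (by positivity) q') h2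
      (mem_WuLoc_self f (by positivity) q')
    constructor
    · exact H'.hs.inj (hΩs2 (subset_closure hu)) (mem_ball_self (by norm_num)) (by rw [e2, H'.hs.j0])
    · exact H'.hu.inj (hΩu2 (subset_closure hv)) (mem_ball_self (by norm_num)) (by rw [← e, e2, H'.hu.j0])
  · intro u hu
    simp only [Function.comp_apply]
    rw [H'.gs u (hu.trans_le (min_le_right _ _))]
  · intro u hu
    simp only [Function.comp_apply]
    rw [H'.gu u (hu.trans_le (min_le_right _ _))]

theorem angle_lift {E : Type} [NormedAddCommGroup E] [NormedSpace ℝ E] (c w : E → ℝ)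
    (hc : Continuous c) (hw : Continuous w) (h1 : ∀ x, c x ^ 2 + w x ^ 2 = 1) (x0 : E)
    (hc0 : c x0 = 1) (hw0 : w x0 = 0) :
    ∃ θ : E → ℝ, Continuous θ ∧ θ x0 = 0 ∧ (∀ x, Real.cos (θ x) = c x) ∧
      ∀ x, Real.sin (θ x) = w x := by
  let F : C(E, Circle) := ⟨fun x => ⟨⟨c x, w x⟩, by
    rw [show ((⟨c x, w x⟩ : ℂ) ∈ Submonoid.unitSphere ℂ) ↔ ‖(⟨c x, w x⟩ : ℂ)‖ = 1 from mem_sphere_zero_iff_norm, ← sq_eq_sq₀ (norm_nonneg _) zero_le_one, Complex.sq_norm,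
      Complex.normSq_mk]
    nlinarith [h1 x]⟩, by
      refine Continuous.subtype_mk ?_ _
      have : (fun x => (⟨c x, w x⟩ : ℂ)) = fun x => (c x : ℂ) + (w x : ℂ) * Complex.I := by
        funext x; apply Complex.ext <;> simp
      rw [this]; fun_prop⟩
  obtain ⟨θ, ⟨hθ0, hθ⟩, -⟩ := Circle.isCoveringMap_exp.existsUnique_continuousMap_lifts F x0 0
    (by
      apply Circle.ext
      rw [Circle.exp_zero]
      show (1:ℂ) = ⟨c x0, w x0⟩
      rw [hc0, hw0]; rfl)
  have key : ∀ x, Complex.exp (θ x * Complex.I) = ⟨c x, w x⟩ := by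
    intro x
    have := congrFun hθ x
    have h2 := congrArg (fun z : Circle => (z : ℂ)) this
    simp only [Function.comp_apply, Circle.coe_exp] at h2
    exact h2
  refine ⟨θ, θ.continuous, hθ0, fun x => ?_, fun x => ?_⟩
  · have := congrArg Complex.re (key x)
    rwa [Complex.exp_ofReal_mul_I_re] at this
  · have := congrArg Complex.im (key x)
    rwa [Complex.exp_ofReal_mul_I_im] at this

theorem zero_fun {X : Type*} [MetricSpace X] (C : Set X) (hC : IsClosed C) :
    ∃ D : X → ℝ, Continuous D ∧ (∀ x, 0 ≤ D x) ∧ ∀ x, D x = 0 ↔ x ∈ C := by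
  rcases C.eq_empty_or_nonempty with rfl | hne
  · exact ⟨fun _ => 1, continuous_const, fun _ => zero_le_one, fun x => by simp⟩
  · refine ⟨fun x => infDist x C, continuous_infDist_pt C, fun x => infDist_nonneg, fun x => ?_⟩
    rw [hC.mem_iff_infDist_zero hne]

theorem HD.sep {E Es Eu : Type} [NormedAddCommGroup E] [NormedSpace ℝ E]
    [NormedAddCommGroup Es] [NormedSpace ℝ Es] [FiniteDimensional ℝ Es]
    [NormedAddCommGroup Eu] [NormedSpace ℝ Eu]
    {f : M ≃ₜ M} {ε δ : ℝ} {p : M} (H : HD Es Eu f ε δ p) (γ : E → M) (hγ : Chart γ univ)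
    (e : Eu →L[ℝ] ℝ) (he : ∀ b, e b = 0 → b = 0) (hp : p ∈ range γ)
    (hδ : ∀ y ∈ range γ, dist p y ≤ δ) :
    ∃ (ψ : M → ℝ) (S : Set M), ContinuousOn ψ (range γ) ∧ S ⊆ range γ ∧ p ∈ S ∧
      IsPreconnected S ∧ S ⊆ WsLoc f ε p ∧ (∀ y ∈ range γ, ψ y = 0 ↔ y ∈ S) ∧
      ∃ t0 > 0, ∀ b, ‖b‖ < t0 → b ≠ 0 → 0 < ψ (H.ju b) * e b := by
  classical
  have hBo : IsOpen (range γ) := by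
    rw [← image_univ]; exact hγ.opn _ Subset.rfl isOpen_univ
  obtain ⟨Ω, hΩo, hΩ0, hΩc, hΩ1, hΩB, hΩ2, hΩW, hΩf⟩ := H.hs.omega (range γ) hBo hp hδ
  set B := range γ with hB
  let S : Set M := H.js '' Ω
  let A : Set (Es × Eu) := (ball 0 2 ∩ H.G ⁻¹' B) ∩ (Prod.fst ⁻¹' Ω)
  have hAo : IsOpen A := (H.chartG.cont.isOpen_inter_preimage isOpen_ball hBo).inter
    (hΩo.preimage continuous_fst)
  have hA2 : A ⊆ ball 0 2 := inter_subset_left.trans inter_subset_left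
  have hGA : Chart H.G A := H.chartG.mono hAo hA2
  let N : Set M := H.G '' A
  have hNo : IsOpen N := hGA.opn A Subset.rfl hAo
  have hNB : N ⊆ B := by rintro _ ⟨x, hx, rfl⟩; exact hx.1.2
  obtain ⟨κ, hκ, hκG⟩ := hGA.exists_inv
  have hSN : S ⊆ N := by
    rintro _ ⟨a, ha, rfl⟩
    have h1 := mem_ball_zero_iff.1 (hΩ1 ha)
    refine ⟨(a, 0), ⟨⟨norm_pair_lt (by linarith) (by simp), ?_⟩, ha⟩, H.Gs a (by linarith)⟩
    rw [mem_preimage, H.Gs a (by linarith)]; exact hΩB a ha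
  let bc : M → ℝ := fun y => e (κ y).2
  have hbc : ContinuousOn bc N := by
    refine e.continuous.comp_continuousOn (continuous_snd.comp_continuousOn hκ.cont)
  have hbc0 : ∀ y ∈ N, bc y = 0 → y ∈ S := by
    rintro _ ⟨x, hx, rfl⟩ h0
    have h2 := he _ h0
    rw [hκG x hx] at h2
    refine ⟨x.1, hx.2, ?_⟩
    rw [← H.Gs x.1 ((norm_fst_le x).trans_lt (mem_ball_zero_iff.1 (hA2 hx)))]
    congr 1
    exact Prod.ext rfl h2.symm
  have hcpt : IsCompact (closure Ω) := by
    refine (isCompact_closedBall (0:Es) 1).of_isClosed_subset isClosed_closure ?_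
    exact closure_minimal (hΩ1.trans ball_subset_closedBall) isClosed_closedBall
  have hSc : IsClosed (H.js '' closure Ω) :=
    (hcpt.image_of_continuousOn (H.hs.cont.mono hΩ2)).isClosed
  have hScB : ∀ y ∈ B, y ∈ H.js '' closure Ω → y ∈ S := by
    rintro _ hy ⟨a, ha, rfl⟩
    by_contra hcon
    exact hΩf a ha (fun h => hcon ⟨a, h, rfl⟩) hy
  obtain ⟨d, hd, hd0, hdz⟩ := zero_fun _ hSc
  obtain ⟨D, hD, hD0, hDz⟩ := zero_fun _ hNo.isClosed_compl
  have hpos : ∀ y ∈ B, 0 < d y + D y := by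
    intro y hy
    rcases (hd0 y).lt_or_eq with h | h
    · linarith [hD0 y]
    · have h1 := hSN (hScB y hy ((hdz y).1 h.symm))
      have : D y ≠ 0 := fun h2 => (hDz y).1 h2 h1
      have := lt_of_le_of_ne (hD0 y) this.symm
      linarith
  let u : M → ℝ := fun y => d y / (d y + D y)
  have huc : ContinuousOn u B := hd.continuousOn.div (hd.add hD).continuousOn
    (fun y hy => (hpos y hy).ne')
  have hu0 : ∀ y ∈ B, 0 ≤ u y := fun y hy => div_nonneg (hd0 y) (hpos y hy).le
  have hu1 : ∀ y ∈ B, u y ≤ 1 := fun y hy => by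
    rw [div_le_one (hpos y hy)]; linarith [hD0 y]
  have huS : ∀ y ∈ B, u y = 0 ↔ y ∈ S := by
    intro y hy
    simp only [u]
    rw [div_eq_zero_iff, or_iff_left (hpos y hy).ne', hdz]
    exact ⟨hScB y hy, fun ⟨a, ha, h⟩ => ⟨a, subset_closure ha, h⟩⟩
  have huN : ∀ y ∈ N, u y < 1 := by
    intro y hy
    rw [div_lt_one (hpos y (hNB hy))]
    have : D y ≠ 0 := fun h2 => (hDz y).1 h2 hy
    have := lt_of_le_of_ne (hD0 y) this.symm
    linarith
  have huN' : ∀ y ∈ B, y ∉ N → u y = 1 := by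
    intro y hy hyN
    have h0 := hpos y hy
    have : D y = 0 := (hDz y).2 hyN
    simp only [u]
    rw [this] at h0 ⊢
    rw [add_zero] at h0 ⊢
    exact div_self h0.ne'
  let sg : M → ℝ := fun y => if y ∈ N then (if 0 < bc y then 1 else -1) else 1
  have hsg : ∀ y, sg y ^ 2 = 1 := by
    intro y; simp only [sg]; split_ifs <;> norm_num
  let w : M → ℝ := fun y => sg y * Real.sin (Real.pi * u y)
  have hsc : ContinuousOn (fun y => Real.sin (Real.pi * u y)) B :=
    Real.continuous_sin.comp_continuousOn (continuousOn_const.mul huc)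
  have hwc : ContinuousOn w B := by
    intro y hy
    by_cases h0 : Real.sin (Real.pi * u y) = 0
    · have hw0 : w y = 0 := by simp only [w, h0, mul_zero]
      have h1 : Filter.Tendsto (fun y => Real.sin (Real.pi * u y)) (nhdsWithin y B) (nhds 0) := by
        have := hsc y hy
        rw [ContinuousWithinAt, h0] at this
        exact this
      rw [ContinuousWithinAt, hw0]
      refine squeeze_zero_norm (a := fun y => ‖Real.sin (Real.pi * u y)‖) (fun z => ?_) (by simpa using h1.norm)
      have h2 : |sg z| = 1 := by
        simp only [sg]; split_ifs <;> norm_num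
      simp only [w, norm_mul, Real.norm_eq_abs, h2, one_mul, le_refl]
    · have hyN : y ∈ N := by
        by_contra hcon
        apply h0
        rw [huN' y hy hcon, mul_one, Real.sin_pi]
      have hyS : y ∉ S := by
        intro hcon
        apply h0
        rw [(huS y hy).2 hcon, mul_zero, Real.sin_zero]
      have hb : bc y ≠ 0 := fun h => hyS (hbc0 y hyN h)
      have hbca : ContinuousAt bc y := hbc.continuousAt (hNo.mem_nhds hyN)
      have hloc : ∀ᶠ z in nhds y, sg z = sg y := by
        rcases lt_or_gt_of_ne hb with h | h
        · filter_upwards [hNo.eventually_mem hyN, hbca.eventually (gt_mem_nhds h)] with z hz1 hz2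
          simp only [sg, if_pos hz1, if_pos hyN, if_neg hz2.not_gt, if_neg h.not_gt]
        · filter_upwards [hNo.eventually_mem hyN, hbca.eventually (lt_mem_nhds h)] with z hz1 hz2
          simp only [sg, if_pos hz1, if_pos hyN, if_pos hz2, if_pos h]
      have hc1 : ContinuousWithinAt (fun z => sg y * Real.sin (Real.pi * u z)) B y :=
        continuousWithinAt_const.mul (hsc y hy)
      refine hc1.congr_of_eventuallyEq ?_ rfl
      filter_upwards [nhdsWithin_le_nhds hloc] with z hz
      simp only [w, hz]
  have hcos : ContinuousOn (fun y => Real.cos (Real.pi * u y)) B :=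
    Real.continuous_cos.comp_continuousOn (continuousOn_const.mul huc)
  obtain ⟨x0, hx0⟩ := hp
  have hpB : p ∈ B := ⟨x0, hx0⟩
  have hpS : p ∈ S := ⟨0, hΩ0, H.hs.j0⟩
  have hγc : Continuous γ := by rw [← continuousOn_univ]; exact hγ.cont
  have hup : u p = 0 := (huS p hpB).2 hpS
  obtain ⟨θ, hθc, hθ0, hθcos, hθsin⟩ := angle_lift (fun x => Real.cos (Real.pi * u (γ x)))
    (fun x => w (γ x)) (hcos.comp_continuous hγc (fun x => mem_range_self x))
    (hwc.comp_continuous hγc (fun x => mem_range_self x))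
    (fun x => by
      simp only [w, mul_pow, hsg, one_mul]
      exact Real.cos_sq_add_sin_sq _) x0
    (by beta_reduce; rw [hx0, hup]; simp) (by simp only [w]; rw [hx0, hup]; simp)
  obtain ⟨k, hk, hkγ⟩ := hγ.exists_inv
  rw [image_univ] at hk
  let ψ : M → ℝ := fun y => θ (k y)
  have hψγ : ∀ x, ψ (γ x) = θ x := fun x => by simp only [ψ]; rw [hkγ x (mem_univ _)]
  have hψc : ContinuousOn ψ B := hθc.comp_continuousOn hk.cont
  have hψcos : ∀ y ∈ B, Real.cos (ψ y) = Real.cos (Real.pi * u y) := by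
    rintro _ ⟨x, rfl⟩; rw [hψγ]; exact hθcos x
  have hψsin : ∀ y ∈ B, Real.sin (ψ y) = w y := by
    rintro _ ⟨x, rfl⟩; rw [hψγ]; exact hθsin x
  have hψp : ψ p = 0 := by rw [← hx0, hψγ]; exact hθ0
  have hcos1 : ∀ y ∈ B, Real.cos (ψ y) = 1 ↔ y ∈ S := by
    intro y hy
    rw [hψcos y hy, ← huS y hy]
    constructor
    · intro h
      have h1 : Real.pi * u y ≤ Real.pi := by nlinarith [hu1 y hy, Real.pi_pos]
      have h2 : 0 ≤ Real.pi * u y := mul_nonneg Real.pi_pos.le (hu0 y hy)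
      have := (Real.cos_eq_one_iff_of_lt_of_lt (by linarith [Real.pi_pos]) (by linarith [Real.pi_pos])).1 h
      exact (mul_eq_zero.1 this).resolve_left Real.pi_ne_zero
    · intro h; rw [h, mul_zero, Real.cos_zero]
  have hSB : S ⊆ B := hSN.trans hNB
  have hSpre : IsPreconnected S :=
    hΩc.image _ (H.hs.cont.mono (hΩ1.trans (ball_subset_ball (by norm_num))))
  refine ⟨ψ, S, hψc, hSB, hpS, hSpre, ?_, ?_, ?_⟩
  · rintro _ ⟨a, ha, rfl⟩; exact hΩW a (subset_closure ha)
  · intro y hy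
    constructor
    · intro h; rw [← hcos1 y hy, h, Real.cos_zero]
    · intro hyS
      have himg : IsPreconnected (ψ '' S) := hSpre.image _ (hψc.mono hSB)
      have hoc := himg.ordConnected
      have h0 : (0:ℝ) ∈ ψ '' S := ⟨p, hpS, hψp⟩
      have hy' : ψ y ∈ ψ '' S := mem_image_of_mem _ hyS
      have hc : ∀ t ∈ ψ '' S, Real.cos t = 1 := by
        rintro _ ⟨z, hz, rfl⟩; exact (hcos1 z (hSB hz)).2 hz
      by_contra hne
      rcases lt_or_gt_of_ne hne with h | h
      · have hm : max (ψ y) (-1) ∈ ψ '' S := hoc.out hy' h0 ⟨le_max_left _ _, max_le h.le (by norm_num)⟩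
        have h3 : -1 ≤ max (ψ y) (-1) := le_max_right _ _
        have h4 : max (ψ y) (-1) < 0 := max_lt h (by norm_num)
        have := (Real.cos_eq_one_iff_of_lt_of_lt (by linarith [Real.pi_gt_three]) (by linarith [Real.pi_gt_three])).1 (hc _ hm)
        linarith
      · have hm : min (ψ y) 1 ∈ ψ '' S := hoc.out h0 hy' ⟨le_min h.le (by norm_num), min_le_left _ _⟩
        have h3 : min (ψ y) 1 ≤ 1 := min_le_right _ _
        have h4 : 0 < min (ψ y) 1 := lt_min h (by norm_num)
        have := (Real.cos_eq_one_iff_of_lt_of_lt (by linarith [Real.pi_gt_three]) (by linarith [Real.pi_gt_three])).1 (hc _ hm)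
        linarith
  · have hjc : ContinuousAt H.ju 0 := H.hu.cont.continuousAt (ball_mem_nhds _ (by norm_num))
    have hev : ∀ᶠ b in nhds (0:Eu), H.ju b ∈ B ∧ |ψ (H.ju b)| < Real.pi := by
      refine (hjc.eventually ((hBo.eventually_mem ?_))).and ?_
      · rw [H.hu.j0]; exact hpB
      · have h1 : ContinuousAt ψ (H.ju 0) := by
          rw [H.hu.j0]; exact hψc.continuousAt (hBo.mem_nhds hpB)
        have h2 : ContinuousAt (fun b => |ψ (H.ju b)|) 0 :=
          continuous_abs.continuousAt.comp (ContinuousAt.comp (f := H.ju) (g := ψ) h1 hjc)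
        refine h2.eventually (gt_mem_nhds ?_)
        beta_reduce
        rw [H.hu.j0, hψp, abs_zero]; exact Real.pi_pos
    obtain ⟨s, hs, hsb⟩ := Metric.eventually_nhds_iff.1 hev
    refine ⟨min s H.c, lt_min hs H.cpos, fun b hb hb0 => ?_⟩
    obtain ⟨hbB, hbπ⟩ := hsb (y := b) (by rw [dist_zero_right]; exact hb.trans_le (min_le_left _ _))
    have hc0 := H.cpos
    have hn : ‖H.c⁻¹ • b‖ < 2 := by
      rw [norm_smul, Real.norm_of_nonneg (by positivity), inv_mul_lt_iff₀ hc0]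
      have := hb.trans_le (min_le_right _ _)
      linarith
    have hGb : H.G (0, H.c⁻¹ • b) = H.ju b := by
      rw [H.Gu _ hn, smul_smul, mul_inv_cancel₀ hc0.ne', one_smul]
    have hmA : ((0:Es), H.c⁻¹ • b) ∈ A :=
      ⟨⟨norm_pair_lt (by simp) hn, by rw [mem_preimage, hGb]; exact hbB⟩, hΩ0⟩
    have hbN : H.ju b ∈ N := ⟨_, hmA, hGb⟩
    have hbce : bc (H.ju b) = H.c⁻¹ * e b := by
      simp only [bc]; rw [← hGb, hκG _ hmA]; simp
    have heb : e b ≠ 0 := fun h => hb0 (he b h)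
    have hbS : H.ju b ∉ S := by
      rintro ⟨a, ha, hab⟩
      have h1 := mem_ball_zero_iff.1 (hΩ1 ha)
      rw [← H.Gs a (by linarith), ← hGb] at hab
      have := H.chartG.inj (norm_pair_lt (by linarith) (by simp)) (hA2 hmA) hab
      have h2 := congrArg Prod.snd this
      simp only at h2
      exact hb0 ((smul_eq_zero.1 h2.symm).resolve_left (by positivity))
    have hupos : 0 < u (H.ju b) := lt_of_le_of_ne (hu0 _ hbB) fun h => hbS ((huS _ hbB).1 h.symm)
    have hult := huN _ hbN
    have hsin : 0 < Real.sin (Real.pi * u (H.ju b)) := by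
      apply Real.sin_pos_of_pos_of_lt_pi
      · exact mul_pos Real.pi_pos hupos
      · nlinarith [Real.pi_pos]
    have hψs := hψsin _ hbB
    rw [abs_lt] at hbπ
    rcases lt_or_gt_of_ne heb with h | h
    · have hneg : ¬ 0 < bc (H.ju b) := by
        rw [hbce]; exact not_lt.2 (mul_nonpos_of_nonneg_of_nonpos (by positivity) h.le)
      simp only [w, sg, if_pos hbN, if_neg hneg] at hψs
      apply mul_pos_of_neg_of_neg _ h
      by_contra hcon
      push Not at hcon
      have := Real.sin_nonneg_of_nonneg_of_le_pi hcon hbπ.2.le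
      linarith
    · have hp' : 0 < bc (H.ju b) := by
        rw [hbce]; positivity
      simp only [w, sg, if_pos hbN, if_pos hp'] at hψs
      apply mul_pos _ h
      by_contra hcon
      push Not at hcon
      have := Real.sin_nonpos_of_nonpos_of_neg_pi_le hcon hbπ.1.le
      linarith

/-- Two periodic points which are positively close are equal. -/
theorem per_eq {f : M ≃ₜ M} {α : ℝ} (hexp : IsExpansive f α) {x y : M}
    (hx : ∃ l : ℕ, 1 ≤ l ∧ iterZ f l x = x) (hy : ∃ l : ℕ, 1 ≤ l ∧ iterZ f l y = y)
    (h : ∀ k : ℤ, 0 ≤ k → dist (iterZ f k x) (iterZ f k y) ≤ α) : x = y := by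
  obtain ⟨l, hl, hlx⟩ := hx
  obtain ⟨m, hm, hmy⟩ := hy
  have hmul : ∀ (z : M) (a : ℕ), iterZ f a z = z → ∀ b : ℕ, iterZ f ((b * a : ℕ) : ℤ) z = z := by
    intro z a ha b
    induction b with
    | zero => simp [iterZ_zero]
    | succ b ih =>
      rw [show (((b+1) * a : ℕ) : ℤ) = (b * a : ℕ) + (a:ℕ) by push_cast; ring, iterZ_add, ha, ih]
  by_contra hne
  obtain ⟨k, hk⟩ := hexp x y hne
  have hX := hmul x l hlx (m * k.natAbs)
  have hY := hmul y m hmy (l * k.natAbs)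
  have heq : (m * k.natAbs * l : ℕ) = l * k.natAbs * m := by ring
  rw [heq] at hX
  have h1 := h (k + (l * k.natAbs * m : ℕ)) (by
    have : (1:ℤ) ≤ l := by exact_mod_cast hl
    have : (1:ℤ) ≤ m := by exact_mod_cast hm
    have h3 : k.natAbs ≤ l * k.natAbs * m := by
      calc k.natAbs = 1 * k.natAbs * 1 := by ring
        _ ≤ l * k.natAbs * m := by gcongr
    omega)
  rw [iterZ_add, iterZ_add, hX, hY] at h1
  linarith

/-- Following a ray in a local stable manifold up to a given distance. -/
theorem HalfHD.ray {E : Type} [NormedAddCommGroup E] [NormedSpace ℝ E] {f : M ≃ₜ M} {ε δ : ℝ}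
    {j : E → M} {p : M} (h : HalfHD f ε δ j p) {ρ : ℝ} (hρ : 0 < ρ) (hρδ : ρ ≤ δ) (w : E)
    (hw : ‖w‖ = 1) : ∃ t, 0 < t ∧ t ≤ 1 ∧ dist p (j (t • w)) = ρ ∧
      ∀ s ∈ Icc (0:ℝ) t, j (s • w) ∈ WsLoc f ε p ∧ dist p (j (s • w)) ≤ ρ := by
  have hin : ∀ s ∈ Icc (0:ℝ) 1, s • w ∈ ball (0:E) 2 := by
    intro s hs
    rw [mem_ball_zero_iff, norm_smul, hw, mul_one, Real.norm_of_nonneg hs.1]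
    linarith [hs.2]
  have hjc : ContinuousOn (fun s : ℝ => j (s • w)) (Icc 0 1) :=
    h.cont.comp (by fun_prop) hin
  have hD : ContinuousOn (fun s : ℝ => dist p (j (s • w))) (Icc 0 1) :=
    continuous_dist.comp_continuousOn (continuousOn_const.prodMk hjc)
  have hstab : ∀ t ∈ Icc (0:ℝ) 1, (∀ s ∈ Icc (0:ℝ) t, dist p (j (s • w)) ≤ δ) →
      ∀ s ∈ Icc (0:ℝ) t, j (s • w) ∈ WsLoc f ε p := by
    intro t ht hd s hs
    refine h.S2 ((fun s : ℝ => s • w) '' Icc 0 t) ?_ ?_ ?_ ?_ _ (mem_image_of_mem _ hs)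
    · exact isPreconnected_Icc.image _ (by fun_prop)
    · rintro _ ⟨s, hs, rfl⟩; exact hin s ⟨hs.1, hs.2.trans ht.2⟩
    · exact ⟨0, ⟨le_rfl, ht.1⟩, zero_smul _ _⟩
    · rintro _ ⟨s, hs, rfl⟩; exact hd s hs
  have hex : ∃ t ∈ Icc (0:ℝ) 1, ρ ≤ dist p (j (t • w)) := by
    by_contra hcon
    push Not at hcon
    have h1 := hstab 1 ⟨zero_le_one, le_rfl⟩ (fun s hs => (hcon s hs).le.trans hρδ) 1
      ⟨zero_le_one, le_rfl⟩
    rw [one_smul] at h1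
    obtain ⟨a, ha, haw⟩ := h.S1 _ h1
    have := h.inj (mem_ball_zero_iff.2 (by linarith)) (mem_ball_zero_iff.2 (by linarith)) haw
    rw [this] at ha; linarith
  have hcpt : IsCompact (Icc (0:ℝ) 1 ∩ (fun s : ℝ => dist p (j (s • w))) ⁻¹' Ici ρ) :=
    isCompact_Icc.of_isClosed_subset (hD.preimage_isClosed_of_isClosed isClosed_Icc isClosed_Ici)
      inter_subset_left
  obtain ⟨t, ⟨ht01, htρ⟩, htmin⟩ := hcpt.exists_isLeast (by
    obtain ⟨t, ht, h2⟩ := hex; exact ⟨t, ht, h2⟩)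
  rw [mem_preimage, mem_Ici] at htρ
  have h00 : dist p (j ((0:ℝ) • w)) = 0 := by rw [zero_smul, h.j0, dist_self]
  have htpos : 0 < t := by
    rcases ht01.1.lt_or_eq with h1 | h1
    · exact h1
    · rw [← h1] at htρ; rw [h00] at htρ; linarith
  have heq : dist p (j (t • w)) = ρ := by
    have hiv := intermediate_value_Icc htpos.le (hD.mono (Icc_subset_Icc_right ht01.2))
    have hm : ρ ∈ Icc (dist p (j ((0:ℝ) • w))) (dist p (j (t • w))) := ⟨by rw [h00]; exact hρ.le, htρ⟩
    obtain ⟨s, hs, hsρ⟩ := hiv hm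
    have hle := htmin (a := s) ⟨⟨hs.1, hs.2.trans ht01.2⟩, hsρ.ge⟩
    have : s = t := le_antisymm hs.2 hle
    rw [← this]; exact hsρ
  have hle : ∀ s ∈ Icc (0:ℝ) t, dist p (j (s • w)) ≤ ρ := by
    intro s hs
    by_contra hcon
    push Not at hcon
    have hle := htmin (a := s) ⟨⟨hs.1, hs.2.trans ht01.2⟩, hcon.le⟩
    have : s = t := le_antisymm hs.2 hle
    rw [this, heq] at hcon
    exact lt_irrefl _ hcon
  exact ⟨t, htpos, ht01.2, heq, fun s hs =>
    ⟨hstab t ht01 (fun s hs => (hle s hs).trans hρδ) s hs, hle s hs⟩⟩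

theorem gap [CompactSpace M] {f : M ≃ₜ M} {α : ℝ} (hα : 0 < α) (hexp : IsExpansive f α) (v : M)
    {ρ : ℝ} (hρ : 0 < ρ) : ∃ c > 0, ∀ p ∈ ball v c, ∀ w ∈ ball v c, ∀ y ∈ WuLoc f (α/2) w,
      dist w y = ρ → ∀ z ∈ WsLoc f (α/2) p, c ≤ dist y z := by
  let K : Set ((M × M) × (M × M)) := {x | x.2.1 ∈ WuLoc f (α/2) x.1.2} ∩
    {x | x.2.2 ∈ WsLoc f (α/2) x.1.1} ∩ {x | dist x.1.2 x.2.1 = ρ}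
  have hK : IsCompact K := by
    apply IsClosed.isCompact
    refine (IsClosed.inter ?_ ?_).inter ?_
    · exact (isClosed_WuRel f (α/2)).preimage
        (f := fun x : (M × M) × (M × M) => (x.1.2, x.2.1)) (by fun_prop)
    · exact (isClosed_WsRel f (α/2)).preimage
        (f := fun x : (M × M) × (M × M) => (x.1.1, x.2.2)) (by fun_prop)
    · exact isClosed_eq (by fun_prop) continuous_const
  let Φ : (M × M) × (M × M) → ℝ := fun x => dist x.1.1 v + dist x.1.2 v + dist x.2.1 x.2.2
  have hΦ : Continuous Φ := by fun_prop
  have hpos : ∀ x ∈ K, 0 < Φ x := by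
    rintro ⟨⟨p, w⟩, ⟨y, z⟩⟩ ⟨⟨h1, h2⟩, h3⟩
    simp only [mem_ofPred_eq] at h1 h2 h3
    simp only [Φ]
    by_contra hcon
    push Not at hcon
    have e1 : p = v := dist_le_zero.1 (by
      linarith [dist_nonneg (x := w) (y := v), dist_nonneg (x := y) (y := z)])
    have e2 : w = v := dist_le_zero.1 (by
      linarith [dist_nonneg (x := p) (y := v), dist_nonneg (x := y) (y := z)])
    have e3 : y = z := dist_le_zero.1 (by
      linarith [dist_nonneg (x := p) (y := v), dist_nonneg (x := w) (y := v)])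
    subst e1 e2 e3
    have hε : 0 ≤ α/2 := by positivity
    have := expansive_inter hexp h2 (mem_WsLoc_self f hε w) h1 (mem_WuLoc_self f hε w)
    rw [this, dist_self] at h3
    linarith
  rcases K.eq_empty_or_nonempty with he | hne
  · refine ⟨1, one_pos, fun p hp w hw y hy hd z hz => ?_⟩
    exfalso
    have : ((p, w), (y, z)) ∈ K := ⟨⟨hy, hz⟩, hd⟩
    rw [he] at this; exact this
  · obtain ⟨x0, hx0, hmin⟩ := hK.exists_isMinOn hne hΦ.continuousOn
    have h0 := hpos x0 hx0
    refine ⟨Φ x0 / 3, by positivity, fun p hp w hw y hy hd z hz => ?_⟩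
    have := isMinOn_iff.1 hmin ((p, w), (y, z)) ⟨⟨hy, hz⟩, hd⟩
    have h1 : Φ ((p, w), (y, z)) = dist p v + dist w v + dist y z := rfl
    rw [mem_ball] at hp hw
    linarith

/-- A continuous function without zeros on a preconnected set has constant sign. -/
theorem sign_const {X : Type*} [TopologicalSpace X] {ψ : X → ℝ} {C : Set X} (hC : IsPreconnected C)
    (hψ : ContinuousOn ψ C) (h0 : ∀ x ∈ C, ψ x ≠ 0) {x y : X} (hx : x ∈ C) (hy : y ∈ C) :
    0 < ψ x * ψ y := by
  have hoc := (hC.image _ hψ).ordConnected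
  have hz : (0:ℝ) ∉ ψ '' C := by rintro ⟨z, hz, h⟩; exact h0 z hz h
  have hx' := mem_image_of_mem ψ hx
  have hy' := mem_image_of_mem ψ hy
  rcases lt_or_gt_of_ne (h0 x hx) with h1 | h1 <;> rcases lt_or_gt_of_ne (h0 y hy) with h2 | h2
  · exact mul_pos_of_neg_of_neg h1 h2
  · exact (hz (hoc.out hx' hy' ⟨h1.le, h2.le⟩)).elim
  · exact (hz (hoc.out hy' hx' ⟨h2.le, h1.le⟩)).elim
  · exact mul_pos h1 h2

theorem sphere_avoid {E : Type} [NormedAddCommGroup E] [NormedSpace ℝ E] [FiniteDimensional ℝ E]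
    (hE : 2 ≤ Module.finrank ℝ E) (D : Set E) (hD : D.Finite) (h0 : (0:E) ∉ D) :
    ∃ w : E, ‖w‖ = 1 ∧ ∀ s : ℝ, 0 ≤ s → s • w ∉ D := by
  have hr : 1 < Module.rank ℝ E := by
    rw [← Module.finrank_eq_rank]; exact_mod_cast hE
  have : Nontrivial E := Module.nontrivial_of_finrank_pos (R := ℝ) (by omega)
  have hinf : (sphere (0:E) 1).Infinite := by
    apply IsPreconnected.infinite_of_nontrivial
    · exact isPreconnected_sphere hr _ _
    · obtain ⟨x, hx⟩ := (NormedSpace.sphere_nonempty (x := (0:E)) (r := 1)).2 zero_le_one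
      refine ⟨x, hx, -x, by simpa using hx, fun h => ?_⟩
      have h2 : x = 0 := by
        have h3 : (2:ℝ) • x = 0 := by rw [two_smul]; nth_rewrite 1 [h]; simp
        exact (smul_eq_zero.1 h3).resolve_left (by norm_num)
      rw [h2] at hx; simp at hx
  obtain ⟨w, hw, hwD⟩ := (hinf.sdiff (hD.image fun b => ‖b‖⁻¹ • b)).nonempty
  have hw1 : ‖w‖ = 1 := mem_sphere_zero_iff_norm.1 hw
  refine ⟨w, hw1, fun s hs hsD => ?_⟩
  rcases hs.lt_or_eq with h | h
  · apply hwD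
    refine ⟨_, hsD, ?_⟩
    simp only
    rw [norm_smul, hw1, mul_one, Real.norm_of_nonneg hs, smul_smul, inv_mul_cancel₀ h.ne', one_smul]
  · rw [← h, zero_smul] at hsD; exact h0 hsD

/-- Final sign contradiction for two separating sheets. -/
theorem two_sep {X : Type*} [TopologicalSpace X] {B : Set X} (hB : IsPreconnected B)
    {ψ φ : X → ℝ} (hψ : ContinuousOn ψ B) (hφ : ContinuousOn φ B) {q q' y : X}
    (hq : q ∈ B) (hy : y ∈ B) (hq0 : ψ q ≠ 0) (hq0' : φ q' ≠ 0)
    (h1 : ∀ z ∈ B, ψ z = 0 → 0 < φ z * φ q') (h2 : ∀ z ∈ B, φ z = 0 → 0 < ψ z * ψ q)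
    (hy1 : ψ y * ψ q < 0) (hy2 : φ y * φ q' < 0) : False := by
  have hc : ContinuousOn (fun z => max (ψ z * ψ q) (φ z * φ q')) B :=
    ContinuousOn.sup (hψ.mul continuousOn_const) (hφ.mul continuousOn_const)
  have h3 := sign_const hB hc (fun z hz h => ?_) hq hy
  · have h4 : max (ψ y * ψ q) (φ y * φ q') < 0 := max_lt hy1 hy2
    have h5 : 0 < max (ψ q * ψ q) (φ q * φ q') := lt_max_of_lt_left (mul_self_pos.2 hq0)
    nlinarith
  · rcases max_choice (ψ z * ψ q) (φ z * φ q') with h' | h'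
    · have h6 := h1 z hz ((mul_eq_zero.1 (h'.symm.trans h)).resolve_right hq0)
      exact absurd (le_max_right (ψ z * ψ q) (φ z * φ q')) (by rw [h]; exact not_le.2 h6)
    · have h6 := h2 z hz ((mul_eq_zero.1 (h'.symm.trans h)).resolve_right hq0')
      exact absurd (le_max_left (ψ z * ψ q) (φ z * φ q')) (by rw [h]; exact not_le.2 h6)

/-- The end of an unstable branch lies on the expected side of the separating sheet. -/
theorem HD.branch {Es Eu : Type} [NormedAddCommGroup Es] [NormedSpace ℝ Es]
    [NormedAddCommGroup Eu] [NormedSpace ℝ Eu] {f : M ≃ₜ M} {α δ : ℝ} (hα : 0 < α)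
    (hexp : IsExpansive f α) {p : M} (H : HD Es Eu f (α/2) δ p) {B S : Set M} {ψ : M → ℝ}
    (e : Eu →L[ℝ] ℝ) (hψ : ContinuousOn ψ B) (hS : S ⊆ WsLoc f (α/2) p)
    (hψ0 : ∀ y ∈ B, ψ y = 0 ↔ y ∈ S) (ht0 : ∃ t0 > 0, ∀ b, ‖b‖ < t0 → b ≠ 0 → 0 < ψ (H.ju b) * e b)
    {ρ : ℝ} (hρ : 0 < ρ) (hρδ : ρ ≤ δ) (hB : closedBall p ρ ⊆ B) (w : Eu) (hw : ‖w‖ = 1) :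
    ∃ y ∈ WuLoc f (α/2) p, dist p y = ρ ∧ 0 < ψ y * e w := by
  obtain ⟨t, ht, ht1, htρ, hray⟩ := H.hu.ray hρ hρδ w hw
  simp only [WsLoc_fsymm] at hray
  have hε : 0 ≤ α/2 := by positivity
  have hw0 : w ≠ 0 := by rintro rfl; simp at hw
  obtain ⟨t0, ht0, hsg⟩ := ht0
  have hin : ∀ s ∈ Ioc (0:ℝ) t, H.ju (s • w) ∈ B := fun s hs => hB (by
    rw [mem_closedBall']; exact (hray s ⟨hs.1.le, hs.2⟩).2)
  have hnorm : ∀ s ∈ Ioc (0:ℝ) t, ‖s • w‖ < 2 := fun s hs => by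
    rw [norm_smul, hw, mul_one, Real.norm_of_nonneg hs.1.le]; linarith [hs.2]
  have hpre : IsPreconnected ((fun s : ℝ => H.ju (s • w)) '' Ioc 0 t) := by
    refine isPreconnected_Ioc.image _ (H.hu.cont.comp (by fun_prop) fun s hs => ?_)
    exact mem_ball_zero_iff.2 (hnorm s hs)
  have hnz : ∀ x ∈ (fun s : ℝ => H.ju (s • w)) '' Ioc 0 t, ψ x ≠ 0 := by
    rintro _ ⟨s, hs, rfl⟩ h0
    have h1 := hS ((hψ0 _ (hin s hs)).1 h0)
    have h2 := expansive_inter hexp h1 (mem_WsLoc_self f hε p) (hray s ⟨hs.1.le, hs.2⟩).1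
      (mem_WuLoc_self f hε p)
    have h3 := H.hu.inj (mem_ball_zero_iff.2 (hnorm s hs)) (mem_ball_self (by norm_num))
      (h2.trans H.hu.j0.symm)
    exact (smul_ne_zero hs.1.ne' hw0) h3
  refine ⟨H.ju (t • w), (hray t ⟨ht.le, le_rfl⟩).1, htρ, ?_⟩
  set s := min t (t0/2) with hs
  have hs0 : 0 < s := by positivity
  have hst : s ∈ Ioc 0 t := ⟨hs0, min_le_left _ _⟩
  have h1 := sign_const hpre (hψ.mono (by rintro _ ⟨s, hs, rfl⟩; exact hin s hs)) hnz
    (mem_image_of_mem _ hst) (mem_image_of_mem _ (right_mem_Ioc.2 ht))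
  have h2 := hsg (s • w) (by
    rw [norm_smul, hw, mul_one, Real.norm_of_nonneg hs0.le]
    exact (min_le_right _ _).trans_lt (by linarith)) (smul_ne_zero hs0.ne' hw0)
  rw [map_smul, smul_eq_mul] at h2
  set A := ψ (H.ju (s • w))
  set C := ψ (H.ju (t • w))
  have h3 : 0 < A * e w := by
    by_contra hcon
    push Not at hcon
    have : A * (s * e w) = s * (A * e w) := by ring
    nlinarith
  by_contra hcon
  push Not at hcon
  have : (A * C) * (A * e w) = A^2 * (C * e w) := by ring
  nlinarith [mul_pos h1 h3, sq_nonneg A, mul_nonpos_of_nonneg_of_nonpos (sq_nonneg A) hcon]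

/-- A ray in the unstable manifold avoiding finitely many local stable sets. -/
theorem HD.ray_avoid {Es Eu : Type} [NormedAddCommGroup Es] [NormedSpace ℝ Es]
    [NormedAddCommGroup Eu] [NormedSpace ℝ Eu] [FiniteDimensional ℝ Eu]
    {f : M ≃ₜ M} {α δ : ℝ} (hexp : IsExpansive f α) {q : M} (H : HD Es Eu f (α/2) δ q)
    (hE : 2 ≤ Module.finrank ℝ Eu) {ι : Type*} [Finite ι] (p : ι → M)
    (hq : ∀ i, q ∉ WsLoc f (α/2) (p i)) {ρ : ℝ} (hρ : 0 < ρ) (hρδ : ρ ≤ δ) :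
    ∃ y ∈ WuLoc f (α/2) q, dist q y = ρ ∧ ∃ Λ : Set M, IsPreconnected Λ ∧ Λ ⊆ closedBall q ρ ∧
      q ∈ Λ ∧ y ∈ Λ ∧ ∀ i, ∀ x ∈ Λ, x ∉ WsLoc f (α/2) (p i) := by
  let D : ι → Set Eu := fun i => {b | ‖b‖ < 2 ∧ H.ju b ∈ WuLoc f (α/2) q ∧
    H.ju b ∈ WsLoc f (α/2) (p i)}
  have hD : ∀ i, (D i).Finite := by
    intro i
    apply Set.Subsingleton.finite
    rintro b ⟨hb1, hb2, hb3⟩ b' ⟨hb1', hb2', hb3'⟩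
    exact H.hu.inj (mem_ball_zero_iff.2 hb1) (mem_ball_zero_iff.2 hb1')
      (expansive_inter hexp hb3 hb3' hb2 hb2')
  obtain ⟨w, hw, hwD⟩ := sphere_avoid hE (⋃ i, D i) (finite_iUnion hD) (by
    rw [mem_iUnion]; rintro ⟨i, -, -, h⟩
    have := H.hu.j0
    rw [this] at h
    exact hq i h)
  obtain ⟨t, ht, ht1, htρ, hray⟩ := H.hu.ray hρ hρδ w hw
  simp only [WsLoc_fsymm] at hray
  have hnorm : ∀ s ∈ Icc (0:ℝ) t, ‖s • w‖ < 2 := fun s hs => by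
    rw [norm_smul, hw, mul_one, Real.norm_of_nonneg hs.1]; linarith [hs.2]
  refine ⟨H.ju (t • w), (hray t ⟨ht.le, le_rfl⟩).1, htρ,
    (fun s : ℝ => H.ju (s • w)) '' Icc 0 t, ?_, ?_, ?_, ?_, ?_⟩
  · exact isPreconnected_Icc.image _ (H.hu.cont.comp (by fun_prop) fun s hs =>
      mem_ball_zero_iff.2 (hnorm s hs))
  · rintro _ ⟨s, hs, rfl⟩; rw [mem_closedBall']; exact (hray s hs).2
  · exact ⟨0, ⟨le_rfl, ht.le⟩, by beta_reduce; rw [zero_smul]; exact H.hu.j0⟩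
  · exact ⟨t, ⟨ht.le, le_rfl⟩, rfl⟩
  · rintro i _ ⟨s, hs, rfl⟩ hcon
    exact hwD s hs.1 (mem_iUnion.2 ⟨i, hnorm s hs, (hray s hs).1, hcon⟩)

theorem mul_pos_trans {a b c : ℝ} (h1 : 0 < a * b) (h2 : 0 < b * c) : 0 < a * c := by
  have hb : b ≠ 0 := by rintro rfl; simp at h1
  have := mul_pos h1 h2
  have h3 : 0 < b^2 := by positivity
  have h4 : (a * b) * (b * c) = b^2 * (a * c) := by ring
  rw [h4] at this
  exact (mul_pos_iff_of_pos_left h3).1 this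

theorem mul_neg_trans {a b c : ℝ} (h1 : 0 < a * b) (h2 : b * c < 0) : a * c < 0 := by
  have := mul_pos_trans (c := -c) h1 (by linarith)
  linarith

theorem main_claim [CompactSpace M] {E : Type} [NormedAddCommGroup E] [NormedSpace ℝ E]
    {f : M ≃ₜ M} {α δ : ℝ} (hα : 0 < α) (hδ : 0 < δ) (hexp : IsExpansive f α)
    (P R : Set M) (d : ℕ)
    (hP : ∀ p ∈ P, Nonempty (HD (Fin d → ℝ) (Fin 1 → ℝ) f (α/2) δ p))
    (hR : ∀ q ∈ R, ∃ s s' : ℕ, 2 ≤ s' ∧ Nonempty (HD (Fin s → ℝ) (Fin s' → ℝ) f (α/2) δ q))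
    (hPR : ∀ x ∈ P, x ∉ R)
    (hcell : ∀ v : M, ∀ N ∈ nhds v, ∃ γ : E → M, Chart γ univ ∧ v ∈ range γ ∧ range γ ⊆ N)
    (v : M) :
    ∃ η > 0, ∃ N : ℕ, ∀ T : Fin (N+1) → M, (∀ i, T i ∈ closure P) → (∀ i, T i ∈ closure R) →
      (∀ i, T i ∈ ball v η) → ∃ i j, i ≠ j ∧ T j ∈ WsLoc f (α/2) (T i) := by
  classical
  have hε : 0 ≤ α/2 := by positivity
  obtain ⟨γ, hγ, hvγ, hγδ⟩ := hcell v (ball v (δ/2)) (ball_mem_nhds _ (by positivity))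
  have hcellopen : ∀ γ : E → M, Chart γ univ → IsOpen (range γ) := fun γ hγ => by
    rw [← image_univ]; exact hγ.opn _ Subset.rfl isOpen_univ
  have hcellpre : ∀ γ : E → M, Chart γ univ → IsPreconnected (range γ) := fun γ hγ => by
    have : Continuous γ := by rw [← continuousOn_univ]; exact hγ.cont
    exact isPreconnected_range this
  have hBo := hcellopen γ hγ
  have hBpre := hcellpre γ hγ
  obtain ⟨ρ0, hρ0, hρ0B⟩ := Metric.isOpen_iff.1 hBo v hvγ
  set B := range γ with hB
  obtain ⟨ρ, hρ, hρ4, hρδ⟩ : ∃ ρ > 0, 4 * ρ < ρ0 ∧ 2 * ρ ≤ δ :=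
    ⟨min (ρ0/8) (δ/2), by positivity, by linarith [min_le_left (ρ0/8) (δ/2)],
      by linarith [min_le_right (ρ0/8) (δ/2)]⟩
  obtain ⟨c, hc, hgap⟩ := gap hα hexp v (ρ := 2 * ρ) (by positivity)
  set η := min c ρ with hη
  have hηpos : 0 < η := lt_min hc hρ
  have hηc : η ≤ c := min_le_left _ _
  have hηρ : η ≤ ρ := min_le_right _ _
  have hBδ : ∀ x ∈ B, ∀ y ∈ B, dist x y ≤ δ := by
    intro x hx y hy
    have h1 := mem_ball.1 (hγδ hx)
    have h2 := mem_ball.1 (hγδ hy)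
    linarith [dist_triangle_right x y v]
  have h2B : ∀ x ∈ ball v η, closedBall x (2 * ρ) ⊆ closedBall v (3 * ρ) := by
    intro x hx y hy
    rw [mem_closedBall] at hy ⊢
    rw [mem_ball] at hx
    linarith [dist_triangle y x v]
  have h3B : closedBall v (3 * ρ) ⊆ B := fun y hy => hρ0B (by
    rw [mem_closedBall] at hy; rw [mem_ball]; linarith)
  have hηB : ball v η ⊆ B := fun y hy => h3B (by
    rw [mem_ball] at hy; rw [mem_closedBall]; linarith)
  have hcov : ∀ x : M, ∃ W : Set M, x ∈ closedBall v (3*ρ) → IsOpen W ∧ IsPreconnected W ∧ x ∈ W ∧ W ⊆ B ∧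
      W ⊆ ball x (c/2) := by
    intro x
    by_cases hx : x ∈ closedBall v (3*ρ)
    · obtain ⟨γ', hγ', hx', hγ's⟩ := hcell x (B ∩ ball x (c/2))
        (Filter.inter_mem (hBo.mem_nhds (h3B hx)) (ball_mem_nhds _ (by positivity)))
      exact ⟨range γ', fun _ => ⟨hcellopen _ hγ', hcellpre _ hγ', hx',
        hγ's.trans inter_subset_left, hγ's.trans inter_subset_right⟩⟩
    · exact ⟨∅, fun h => (hx h).elim⟩
  choose W hW using hcov
  obtain ⟨t, htK, htc⟩ := (isClosed_closedBall (x := v) (ε := 3*ρ)).isCompact.elim_nhds_subcover W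
    (fun x hx => (hW x hx).1.mem_nhds (hW x hx).2.2.1)
  refine ⟨η, hηpos, t.card * t.card, fun T hTP hTR hTv => ?_⟩
  by_contra hcon
  push Not at hcon
  -- separation radius
  have hτ : ∀ᶠ τ in nhdsWithin (0:ℝ) (Ioi 0), ∀ i j, i ≠ j → ∀ p ∈ ball (T i) τ,
      ∀ x ∈ ball (T j) τ, x ∉ WsLoc f (α/2) p := by
    rw [Filter.eventually_all]; intro i
    rw [Filter.eventually_all]; intro j
    by_cases hij : i = j
    · exact Filter.Eventually.of_forall fun τ h => (h hij).elim
    · have hopen : IsOpen {z : M × M | z.2 ∈ WsLoc f (α/2) z.1}ᶜ :=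
        (isClosed_WsRel f (α/2)).isOpen_compl
      obtain ⟨τ0, hτ0, hb⟩ := Metric.isOpen_iff.1 hopen (T i, T j) (hcon i j hij)
      filter_upwards [Ioo_mem_nhdsGT hτ0] with τ hτ _ p hp x hx
      have : (p, x) ∈ ball (T i, T j) τ0 := by
        rw [← ball_prod_same]
        exact ⟨ball_subset_ball hτ.2.le hp, ball_subset_ball hτ.2.le hx⟩
      exact hb this
  obtain ⟨τ, hτ, hτ0⟩ := (hτ.and self_mem_nhdsWithin).exists
  have hτ0 : 0 < τ := hτ0
  have hC : ∀ i, ∃ C : Set M, ∃ p ∈ P, ∃ q ∈ R, IsPreconnected C ∧ p ∈ C ∧ q ∈ C ∧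
      C ⊆ ball (T i) τ ∧ C ⊆ ball v η := by
    intro i
    obtain ⟨γ', hγ', hx', hγ's⟩ := hcell (T i) (ball (T i) τ ∩ ball v η)
        (Filter.inter_mem (ball_mem_nhds _ hτ0) (isOpen_ball.mem_nhds (hTv i)))
    have ho := hcellopen _ hγ'
    obtain ⟨p, hp1, hp2⟩ := mem_closure_iff.1 (hTP i) _ ho hx'
    obtain ⟨q, hq1, hq2⟩ := mem_closure_iff.1 (hTR i) _ ho hx'
    exact ⟨range γ', p, hp2, q, hq2, hcellpre _ hγ', hp1, hq1, hγ's.trans inter_subset_left,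
      hγ's.trans inter_subset_right⟩
  choose C p hpP q hqR hCpre hpC hqC hCτ hCη using hC
  have hqp : ∀ i j, q i ∉ WsLoc f (α/2) (p j) := by
    intro i j h
    by_cases hij : j = i
    · subst hij
      obtain ⟨HP⟩ := hP _ (hpP j)
      obtain ⟨s, s', _, ⟨HR⟩⟩ := hR _ (hqR j)
      have := per_eq hexp HP.per HR.per (fun k hk => (h k hk).trans (by linarith))
      exact hPR _ (hpP j) (this ▸ hqR j)
    · exact hτ j i hij _ (hCτ _ (hpC j)) _ (hCτ _ (hqC i)) h
  have hpp : ∀ i j, i ≠ j → ∀ x, x ∈ WsLoc f (α/2) (p i) → x ∉ WsLoc f (α/2) (p j) := by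
    intro i j hij x h1 h2
    obtain ⟨H1⟩ := hP _ (hpP i)
    obtain ⟨H2⟩ := hP _ (hpP j)
    have := per_eq hexp H1.per H2.per (fun k hk => by
      have := h1 k hk
      have := h2 k hk
      linarith [dist_triangle_right (iterZ f k (p i)) (iterZ f k (p j)) (iterZ f k x)])
    refine hτ i j hij _ (hCτ _ (hpC i)) _ (hCτ _ (hpC j)) ?_
    rw [← this]; exact mem_WsLoc_self f hε _
  have hpη : ∀ i, p i ∈ ball v η := fun i => hCη i (hpC i)
  have hqη : ∀ i, q i ∈ ball v η := fun i => hCη i (hqC i)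
  -- ends of rays from q
  have hends : ∀ i, ∃ y ∈ WuLoc f (α/2) (q i), dist (q i) y = 2 * ρ ∧ ∃ Λ : Set M,
      IsPreconnected Λ ∧ Λ ⊆ closedBall (q i) (2 * ρ) ∧
      q i ∈ Λ ∧ y ∈ Λ ∧ ∀ j, ∀ x ∈ Λ, x ∉ WsLoc f (α/2) (p j) := by
    intro i
    obtain ⟨s, s', hs', ⟨HR⟩⟩ := hR _ (hqR i)
    exact HR.ray_avoid hexp (by simpa using hs') p (hqp i) (by positivity) hρδ
  choose e' he'W he'd Λ hΛpre hΛb hqΛ heΛ hΛav using hends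
  -- separating functions
  have hsep : ∀ i, ∃ (ψ : M → ℝ) (S : Set M), ContinuousOn ψ B ∧ S ⊆ B ∧ p i ∈ S ∧
      IsPreconnected S ∧ S ⊆ WsLoc f (α/2) (p i) ∧ (∀ y ∈ B, ψ y = 0 ↔ y ∈ S) ∧
      ∃ y ∈ WuLoc f (α/2) (p i), dist (p i) y = 2 * ρ ∧ ψ y * ψ (q i) < 0 := by
    intro i
    obtain ⟨HP⟩ := hP _ (hpP i)
    let e : (Fin 1 → ℝ) →L[ℝ] ℝ := ContinuousLinearMap.proj 0
    have hpB := hηB (hpη i)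
    obtain ⟨ψ, S, hψ, hSB, hpS, hSpre, hSW, hψS, ht0⟩ := HP.sep γ hγ e
      (fun b hb => by funext x; rw [Subsingleton.elim x 0]; exact hb) hpB (fun y hy => hBδ _ hpB y hy)
    refine ⟨ψ, S, hψ, hSB, hpS, hSpre, hSW, hψS, ?_⟩
    have hψq : ψ (q i) ≠ 0 := fun h => hqp i i (hSW ((hψS _ (hηB (hqη i))).1 h))
    have hbr := HP.branch hα hexp e hψ hSW hψS ht0 (ρ := 2 * ρ) (by positivity) hρδ
      ((h2B _ (hpη i)).trans h3B)
    have he1 : ∀ a : ℝ, e (fun _ => a) = a := fun a => rfl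
    have hn : ∀ a : ℝ, ‖(fun _ => a : Fin 1 → ℝ)‖ = |a| := fun a => by
      rw [pi_norm_const]; rfl
    rcases lt_or_gt_of_ne hψq with h | h
    · obtain ⟨y, hy1, hy2, hy3⟩ := hbr (fun _ => 1) (by rw [hn]; simp)
      rw [he1] at hy3
      exact ⟨y, hy1, hy2, mul_neg_of_pos_of_neg (by linarith) h⟩
    · obtain ⟨y, hy1, hy2, hy3⟩ := hbr (fun _ => -1) (by rw [hn]; simp)
      rw [he1] at hy3
      exact ⟨y, hy1, hy2, mul_neg_of_neg_of_pos (by linarith) h⟩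
  choose ψ S hψ hSB hpS hSpre hSW hψS em hemW hemd hemψ using hsep
  have hψ0 : ∀ i, ∀ x ∈ B, x ∉ WsLoc f (α/2) (p i) → ψ i x ≠ 0 := fun i x hx h h0 =>
    h (hSW i ((hψS i x hx).1 h0))
  have he'B : ∀ i, e' i ∈ closedBall v (3 * ρ) := fun i => h2B _ (hqη i) (by
    rw [mem_closedBall', he'd])
  have hemB : ∀ i, em i ∈ closedBall v (3 * ρ) := fun i => h2B _ (hpη i) (by
    rw [mem_closedBall', hemd])
  -- pigeonhole
  have hch : ∀ x ∈ closedBall v (3*ρ), ∃ a : t, x ∈ W a := by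
    intro x hx
    obtain ⟨a, ha, hxa⟩ := mem_iUnion₂.1 (htc hx)
    exact ⟨⟨a, ha⟩, hxa⟩
  choose A hA using fun i => hch _ (he'B i)
  choose A' hA' using fun i => hch _ (hemB i)
  obtain ⟨i, j, hij, heq⟩ := Fintype.exists_ne_map_eq_of_card_lt (fun i => (A i, A' i)) (by
    simp)
  obtain ⟨hAA, hAA'⟩ := Prod.mk.inj heq
  have hWs : ∀ (a : t) (w y : M), w ∈ ball v η → y ∈ WuLoc f (α/2) w → dist w y = 2 * ρ →
      y ∈ W a → ∀ k, ∀ x ∈ W a, ψ k x ≠ 0 := by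
    intro a w y hw hy hd hya k x hx
    have hWa := hW a (htK a a.2)
    refine hψ0 k x (hWa.2.2.2.1 hx) fun hxk => ?_
    have h1 := hgap _ (ball_subset_ball hηc (hpη k)) w (ball_subset_ball hηc hw) y hy hd x hxk
    have h2 := mem_ball.1 (hWa.2.2.2.2 hx)
    have h3 := mem_ball.1 (hWa.2.2.2.2 hya)
    linarith [dist_triangle_right y x (a:M)]
  have hWsign : ∀ (a : t) (w y : M), w ∈ ball v η → y ∈ WuLoc f (α/2) w → dist w y = 2 * ρ →
      y ∈ W a → ∀ k, ∀ x ∈ W a, 0 < ψ k x * ψ k y := by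
    intro a w y hw hy hd hya k x hx
    have hWa := hW a (htK a a.2)
    exact sign_const hWa.2.1 ((hψ k).mono hWa.2.2.2.1) (hWs a w y hw hy hd hya k) hx hya
  -- signs
  have hsq : ∀ k m, 0 < ψ k (q m) * ψ k (e' m) := fun k m =>
    sign_const (hΛpre m) ((hψ k).mono ((hΛb m).trans ((h2B _ (hqη m)).trans h3B)))
      (fun x hx => hψ0 k x (h3B (h2B _ (hqη m) (hΛb m hx))) (hΛav m k x hx)) (hqΛ m) (heΛ m)
  have hsp : ∀ k m, k ≠ m → 0 < ψ k (p m) * ψ k (q m) := fun k m hkm =>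
    sign_const (hCpre m) ((hψ k).mono ((hCη m).trans hηB))
      (fun x hx => hψ0 k x (hηB (hCη m hx)) (hτ k m hkm _ (hCτ _ (hpC k)) _ (hCτ _ hx)))
      (hpC m) (hqC m)
  have hsS : ∀ k m, k ≠ m → ∀ x ∈ S m, 0 < ψ k x * ψ k (p m) := fun k m hkm x hx =>
    sign_const (hSpre m) ((hψ k).mono (hSB m))
      (fun x hx => hψ0 k x (hSB m hx) (hpp m k hkm.symm x (hSW m hx))) hx (hpS m)
  have hfin : ∀ k m, k ≠ m → A k = A m → ∀ x ∈ B, ψ m x = 0 → 0 < ψ k x * ψ k (q k) := by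
    intro k m hkm hA2 x hx h0
    have h1 := hsS k m hkm x ((hψS m x hx).1 h0)
    have h2 := hsp k m hkm
    have h3 := hsq k m
    have h4 := hWsign (A k) _ _ (hqη k) (he'W k) (he'd k) (hA k) k (e' m) (by
      rw [hA2]; exact hA m)
    have h5 : 0 < ψ k (e' k) * ψ k (q k) := by rw [mul_comm]; exact hsq k k
    exact mul_pos_trans (mul_pos_trans (mul_pos_trans (mul_pos_trans h1 h2) h3) h4) h5
  refine two_sep hBpre (hψ i) (hψ j) (q := q i) (q' := q j) (y := em i) (hηB (hqη i)) (h3B (hemB i))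
    (hψ0 i _ (hηB (hqη i)) (hqp i i)) (hψ0 j _ (hηB (hqη j)) (hqp j j))
    (hfin j i hij.symm hAA.symm) (hfin i j hij hAA) (hemψ i) ?_
  have h1 := hWsign (A' j) _ _ (hpη j) (hemW j) (hemd j) (hA' j) j (em i) (by
    rw [← hAA']; exact hA' i)
  exact mul_neg_trans h1 (hemψ j)

/-- Small open cells in a manifold. -/
theorem exists_cell (n : ℕ) [ChartedSpace (EuclideanSpace ℝ (Fin n)) M] (v : M) (N : Set M)
    (hN : N ∈ nhds v) : ∃ γ : EuclideanSpace ℝ (Fin n) → M, Chart γ univ ∧ γ 0 = v ∧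
      range γ ⊆ N := by
  set φ := chartAt (EuclideanSpace ℝ (Fin n)) v with hφ
  have hvs : v ∈ φ.source := mem_chart_source _ v
  have hvt : φ v ∈ φ.target := φ.map_source hvs
  have hc : ContinuousAt φ.symm (φ v) := φ.continuousAt_symm hvt
  have h1 : φ.symm ⁻¹' N ∈ nhds (φ v) := hc (by rw [φ.left_inv hvs]; exact hN)
  obtain ⟨r, hr, hrs⟩ := Metric.mem_nhds_iff.1
    (Filter.inter_mem (φ.open_target.mem_nhds hvt) h1)
  set b := OpenPartialHomeomorph.univBall (E := EuclideanSpace ℝ (Fin n)) (φ v) r with hb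
  have hbs : b.source = univ := OpenPartialHomeomorph.univBall_source _ _
  have hbt : b.target = ball (φ v) r := OpenPartialHomeomorph.univBall_target _ hr
  have hb1 : ∀ x, b x ∈ ball (φ v) r := fun x => by
    rw [← hbt]; exact b.map_source (by rw [hbs]; trivial)
  have hcb : Chart b univ := by
    have : Chart b b.source :=
      ⟨b.open_source, b.continuousOn, b.injOn,
        fun O hO hO' => b.isOpen_image_of_subset_source hO' hO⟩
    rwa [hbs] at this
  have hcφ : Chart φ.symm φ.target :=
    ⟨φ.open_target, φ.symm.continuousOn, φ.symm.injOn,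
      fun O hO hO' => φ.symm.isOpen_image_of_subset_source hO' hO⟩
  refine ⟨φ.symm ∘ b, hcb.comp hcφ (fun x _ => (hrs (hb1 x)).1), ?_, ?_⟩
  · rw [Function.comp_apply, hb, OpenPartialHomeomorph.univBall_apply_zero, φ.left_inv hvs]
  · rintro _ ⟨x, rfl⟩
    exact (hrs (hb1 x)).2

theorem exists_punctured {E : Type} [NormedAddCommGroup E] [NormedSpace ℝ E]
    [FiniteDimensional ℝ E] (hE : 2 ≤ Module.finrank ℝ E) (γ : E → M) (hγ : Chart γ univ) :
    IsPreconnected (range γ \ {γ 0}) := by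
  have hr : 1 < Module.rank ℝ E := by
    rw [← Module.finrank_eq_rank]; exact_mod_cast hE
  have h1 := (isConnected_compl_singleton_of_one_lt_rank hr (0:E)).isPreconnected
  have h2 := h1.image γ (hγ.cont.mono (subset_univ _))
  convert h2 using 1
  ext y
  constructor
  · rintro ⟨⟨x, rfl⟩, hx⟩
    exact ⟨x, fun h => hx (by rw [mem_singleton_iff.1 h]; rfl), rfl⟩
  · rintro ⟨x, hx, rfl⟩
    exact ⟨mem_range_self x, fun h => hx (hγ.inj trivial trivial h)⟩

/-- Finiteness of the common frontier. -/
theorem finite_of_claim [CompactSpace M] {f : M ≃ₜ M} {α : ℝ} (hα : 0 < α)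
    (hexp : IsExpansive f α) (Z : Set M) (hZ : ∀ k : ℤ, ∀ z ∈ Z, iterZ f k z ∈ Z)
    (hcl : ∀ v : M, ∃ η > 0, ∃ N : ℕ, ∀ T : Fin (N+1) → M, (∀ i, T i ∈ Z) →
      (∀ i, T i ∈ ball v η) → ∃ i j, i ≠ j ∧ T j ∈ WsLoc f (α/2) (T i)) : Z.Finite := by
  classical
  by_contra hinf
  have hinf : Z.Infinite := hinf
  choose η hη N hN using hcl
  obtain ⟨t, -, ht⟩ := (isCompact_univ (X := M)).elim_nhds_subcover (fun v => ball v (η v))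
    (fun v _ => ball_mem_nhds _ (hη v))
  set K := t.sup N with hK
  set m := t.card * K + 1 with hm
  let T : Fin m → M := fun i => (hinf.natEmbedding Z i : M)
  have hT : Function.Injective T := fun i j h => by
    have := (hinf.natEmbedding Z).injective (Subtype.ext h)
    exact Fin.ext this
  have hTZ : ∀ i, T i ∈ Z := fun i => (hinf.natEmbedding Z i).2
  have hpair : ∀ k : ℕ, ∃ x : Fin m × Fin m, x.1 ≠ x.2 ∧
      iterZ f (-k) (T x.2) ∈ WsLoc f (α/2) (iterZ f (-k) (T x.1)) := by
    intro k
    have hcol : ∀ i, ∃ v ∈ t, iterZ f (-k) (T i) ∈ ball v (η v) := by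
      intro i
      obtain ⟨v, hv, h⟩ := mem_iUnion₂.1 (ht (mem_univ (iterZ f (-k) (T i))))
      exact ⟨v, hv, h⟩
    choose c hc hcb using hcol
    obtain ⟨v, hv, hlt⟩ := Finset.exists_lt_card_fiber_of_mul_lt_card_of_maps_to
      (s := Finset.univ) (t := t) (f := c) (n := K) (fun i _ => hc i) (by simp [hm])
    have hNv : N v + 1 ≤ (Finset.univ.filter fun i => c i = v).card :=
      (Nat.succ_le_succ (Finset.le_sup hv)).trans hlt
    obtain ⟨u, hu, hucard⟩ := Finset.exists_subset_card_eq hNv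
    let o := u.orderEmbOfFin hucard
    have ho : ∀ i, c (o i) = v := fun i =>
      (Finset.mem_filter.1 (hu (Finset.orderEmbOfFin_mem u hucard i))).2
    obtain ⟨i, j, hij, h⟩ := hN v (fun i => iterZ f (-k) (T (o i))) (fun i => hZ _ _ (hTZ _))
      (fun i => by have := hcb (o i); rwa [ho i] at this)
    exact ⟨(o i, o j), fun h => hij (o.injective h), h⟩
  choose x hx1 hx2 using hpair
  obtain ⟨y, hy⟩ := Finite.exists_infinite_fiber x
  have hyinf : (x ⁻¹' {y}).Infinite := Set.infinite_coe_iff.1 hy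
  obtain ⟨k0, hk0⟩ := hyinf.nonempty
  have hne : y.1 ≠ y.2 := by
    have := hx1 k0; rwa [show x k0 = y from hk0] at this
  obtain ⟨j, hj⟩ := hexp (T y.1) (T y.2) (fun h => hne (hT h))
  obtain ⟨k, hk, hkj⟩ := hyinf.exists_gt j.natAbs
  have h1 := hx2 k
  rw [show x k = y from hk] at h1
  have h2 := h1 (j + k) (by omega)
  rw [iterZ_add, iterZ_add, iterZ_cancel_neg, iterZ_cancel_neg] at h2
  linarith

theorem conn_contra [ConnectedSpace M] (U V Z : Set M) (hU : IsOpen U) (hV : IsOpen V)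
    (hUV : Disjoint U V)
    (hcov : ∀ x, x ∈ U ∨ x ∈ V ∨ x ∈ Z) (hZ : Z.Finite)
    (hUne : U.Nonempty) (hVne : V.Nonempty)
    (hcell : ∀ v : M, ∀ N ∈ nhds v, ∃ C : Set M, IsOpen C ∧ v ∈ C ∧ C ⊆ N ∧
      IsPreconnected (C \ {v})) : False := by
  obtain ⟨u, hu⟩ := hUne
  obtain ⟨v, hv⟩ := hVne
  have : Nontrivial M := ⟨u, v, fun h => hUV.le_bot ⟨hu, h ▸ hv⟩⟩
  have hopen : ∀ A : Set M, IsOpen A → IsOpen (A ∪ {z | ∀ᶠ y in nhdsWithin z {z}ᶜ, y ∈ A}) := by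
    intro A hA
    rw [isOpen_iff_mem_nhds]
    rintro z (hz | hz)
    · exact Filter.mem_of_superset (hA.mem_nhds hz) subset_union_left
    · have hz' : ∀ᶠ y in nhdsWithin z {z}ᶜ, y ∈ A := hz
      rw [eventually_nhdsWithin_iff] at hz'
      filter_upwards [hz'] with y hy
      by_cases hyz : y = z
      · rw [hyz]; exact Or.inr hz
      · exact Or.inl (hy hyz)
  have hev : ∀ A B : Set M, Disjoint A B → ∀ z, (∀ᶠ y in nhdsWithin z {z}ᶜ, y ∈ A) →
      (∀ᶠ y in nhdsWithin z {z}ᶜ, y ∈ B) → False := by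
    intro A B hAB z h1 h2
    obtain ⟨y, hy1, hy2⟩ := (h1.and h2).exists
    exact hAB.le_bot ⟨hy1, hy2⟩
  have hin : ∀ A : Set M, IsOpen A → ∀ z ∈ A, ∀ᶠ y in nhdsWithin z {z}ᶜ, y ∈ A :=
    fun A hA z hz => nhdsWithin_le_nhds (hA.mem_nhds hz)
  have hcover : (univ : Set M) ⊆ (U ∪ {z | ∀ᶠ y in nhdsWithin z {z}ᶜ, y ∈ U}) ∪
      (V ∪ {z | ∀ᶠ y in nhdsWithin z {z}ᶜ, y ∈ V}) := by
    intro z _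
    rcases hcov z with h | h | h
    · exact Or.inl (Or.inl h)
    · exact Or.inr (Or.inl h)
    · have hcl : IsClosed (Z \ {z}) := (hZ.subset sdiff_subset).isClosed
      obtain ⟨C, hCo, hzC, hCN, hCpre⟩ := hcell z (Z \ {z})ᶜ
        (hcl.isOpen_compl.mem_nhds (fun h => h.2 rfl))
      have hsub : C \ {z} ⊆ U ∪ V := by
        rintro y ⟨hy, hyz⟩
        rcases hcov y with h | h | h
        · exact Or.inl h
        · exact Or.inr h
        · exact (hCN hy ⟨h, hyz⟩).elim
      have hCev : ∀ᶠ y in nhdsWithin z {z}ᶜ, y ∈ C \ {z} := by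
        rw [eventually_nhdsWithin_iff]
        filter_upwards [hCo.mem_nhds hzC] with y hy hyz using ⟨hy, hyz⟩
      rcases hCpre.subset_or_subset hU hV hUV hsub with h | h
      · exact Or.inl (Or.inr (hCev.mono fun y hy => h hy))
      · exact Or.inr (Or.inr (hCev.mono fun y hy => h hy))
  obtain ⟨z, -, hz1, hz2⟩ := isPreconnected_univ (α := M) _ _ (hopen U hU) (hopen V hV) hcover
    ⟨u, trivial, Or.inl hu⟩ ⟨v, trivial, Or.inl hv⟩
  refine hev U V hUV z ?_ ?_
  · rcases hz1 with h | h
    · exact hin U hU z h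
    · exact h
  · rcases hz2 with h | h
    · exact hin V hV z h
    · exact h

/-- Points with a hyperbolic chart with `d` contracting and `d'` expanding directions. -/
def Idx (f : M ≃ₜ M) (d d' : ℕ) : Set M :=
  {p | ∃ (l : ℕ) (g : (Fin d → ℝ) × (Fin d' → ℝ) → M), Hyp f p l g}

theorem Idx.swap {f : M ≃ₜ M} {d d' : ℕ} {p : M} (h : p ∈ Idx f d d') : p ∈ Idx f.symm d' d := by
  obtain ⟨l, g, h⟩ := h
  exact ⟨l, _, h.swap⟩

theorem Idx.iter {f : M ≃ₜ M} {d d' : ℕ} {p : M} (h : p ∈ Idx f d d') (k : ℤ) :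
    iterZ f k p ∈ Idx f d d' := by
  obtain ⟨l, g, h⟩ := h
  refine ⟨l, itH f k ∘ g, ⟨h.hl, ?_, ?_, ?_⟩⟩
  · rw [Function.comp_apply, h.g0]; rfl
  · exact h.chart.comp ((itH f k).chart univ isOpen_univ) (mapsTo_univ _ _)
  · intro x h1 h2
    rw [Function.comp_apply, Function.comp_apply, itH_apply, itH_apply, ← h.conj x h1 h2,
      ← iterZ_add, ← iterZ_add, add_comm]

theorem Idx.per {f : M ≃ₜ M} {d d' : ℕ} {p : M} (h : p ∈ Idx f d d') :
    ∃ l : ℕ, 1 ≤ l ∧ iterZ f l p = p := by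
  obtain ⟨l, g, h⟩ := h
  exact ⟨l, h.hl, h.fix⟩

theorem closure_inv {f : M ≃ₜ M} {P : Set M} (hP : ∀ k : ℤ, ∀ z ∈ P, iterZ f k z ∈ P) (k : ℤ)
    {z : M} (hz : z ∈ closure P) : iterZ f k z ∈ closure P := by
  have h : MapsTo (iterZ f k) P P := fun x hx => hP k x hx
  exact h.closure (continuous_iterZ f k) hz

/-- No sinks (and, by symmetry, no sources). -/
theorem no_sink {f : M ≃ₜ M} {d : ℕ} [Nontrivial M] [ConnectedSpace M]
    (hdense : closure {x : M | ∃ m : ℕ, 1 ≤ m ∧ iterZ f m x = x} = univ) (p : M)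
    (hp : p ∈ Idx f d 0) : False := by
  obtain ⟨l, g, h⟩ := hp
  have hO : IsOpen (g '' ball 0 4) := h.chart.opn _ Subset.rfl isOpen_ball
  have hpO : p ∈ g '' ball 0 4 := ⟨0, mem_ball_self (by norm_num), h.g0⟩
  have hne : (g '' ball 0 4 ∩ {p}ᶜ).Nonempty := by
    have : ∀ᶠ y in nhdsWithin p {p}ᶜ, y ∈ g '' ball 0 4 ∩ {p}ᶜ := by
      filter_upwards [nhdsWithin_le_nhds (hO.mem_nhds hpO), self_mem_nhdsWithin] with y h1 h2
      exact ⟨h1, h2⟩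
    exact this.exists
  have hd : Dense {x : M | ∃ m : ℕ, 1 ≤ m ∧ iterZ f m x = x} := dense_iff_closure_eq.2 hdense
  obtain ⟨y, ⟨⟨x, hx, rfl⟩, hy⟩, m, hm, hper⟩ :=
    hd.inter_open_nonempty _ (hO.inter isOpen_compl_singleton) hne
  apply hy
  have hx2 : x.2 = 0 := Subsingleton.elim _ _
  have hx1 : ‖x.1‖ < 4 := (norm_fst_le x).trans_lt (mem_ball_zero_iff.1 hx)
  have hit : ∀ i : ℕ, g ((1/2 : ℝ)^(i * m) • x.1, 0) = g x := by
    intro i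
    have h1 := h.iter (i * m) x hx1 (by rw [hx2, smul_zero, norm_zero]; norm_num)
    rw [hx2, smul_zero] at h1
    rw [← h1]
    have h2 : ∀ b : ℕ, iterZ f ((b * m : ℕ) : ℤ) (g x) = g x := by
      intro b
      induction b with
      | zero => simp [iterZ_zero]
      | succ b ih =>
        rw [show (((b+1) * m : ℕ) : ℤ) = (b * m : ℕ) + (m:ℕ) by push_cast; ring, iterZ_add, hper, ih]
    have h3 := h2 (i * l)
    rw [show (((i * m : ℕ) : ℤ) * (l : ℤ)) = ((i * l * m : ℕ) : ℤ) by push_cast; ring]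
    exact h3
  have hlim : Filter.Tendsto (fun i : ℕ => g ((1/2 : ℝ)^(i * m) • x.1, 0)) Filter.atTop (nhds (g 0)) := by
    have hc : ContinuousAt g 0 := h.chart.cont.continuousAt (ball_mem_nhds _ (by norm_num))
    refine hc.tendsto.comp ?_
    have h1 : Filter.Tendsto (fun i : ℕ => (1/2 : ℝ)^(i * m)) Filter.atTop (nhds 0) := by
      refine (tendsto_pow_atTop_nhds_zero_of_lt_one (by norm_num) (by norm_num)).comp ?_
      exact Filter.tendsto_id.atTop_mul_const' (by omega)
    have h2 := (h1.smul_const x.1).prodMk_nhds (tendsto_const_nhds (x := (0 : Fin 0 → ℝ)))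
    rw [zero_smul] at h2
    exact h2
  simp only [hit] at hlim
  have := tendsto_nhds_unique hlim tendsto_const_nhds
  rw [mem_singleton_iff, ← this, h.g0]

theorem mainT [CompactSpace M] [ConnectedSpace M] (n : ℕ) (hn : 2 ≤ n)
    [ChartedSpace (EuclideanSpace ℝ (Fin n)) M] (f : M ≃ₜ M) (α : ℝ) (hα : 0 < α)
    (hexp : IsExpansive f α) (d : ℕ) (P R : Set M) (hP : P = Idx f d 1)
    (hR : R = {q | ∃ s s', s < d ∧ 2 ≤ s' ∧ q ∈ Idx f s s'})
    (hdense : closure (P ∪ R) = univ) (hPne : P.Nonempty) : R = ∅ := by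
  by_contra hRne
  have hRne : R.Nonempty := nonempty_iff_ne_empty.2 hRne
  obtain ⟨δ, hδ, hδ'⟩ := exists_delta hα hexp
  have hHD : ∀ {a b : ℕ} {p : M}, p ∈ Idx f a b →
      Nonempty (HD (Fin a → ℝ) (Fin b → ℝ) f (α/2) δ p) := by
    rintro a b p ⟨l, g, h⟩
    exact h.HD hα hexp hδ hδ'
  have hHD' : ∀ {a b : ℕ} {p : M}, p ∈ Idx f a b →
      Nonempty (HD (Fin b → ℝ) (Fin a → ℝ) f.symm (α/2) δ p) := by
    rintro a b p ⟨l, g, h⟩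
    exact h.swap.HD hα hexp.symm hδ' (by rw [Homeomorph.symm_symm]; exact hδ)
  have hPclR : ∀ p ∈ P, p ∉ closure R := by
    intro p hp hcl
    rw [hP] at hp
    obtain ⟨H⟩ := hHD hp
    obtain ⟨η, hη, hloc⟩ := loc_const hα hδ.1 hexp H
    obtain ⟨q, hq, hqR⟩ := mem_closure_iff.1 hcl _ isOpen_ball (mem_ball_self hη)
    rw [hR] at hqR
    obtain ⟨s, s', hs, -, hqI⟩ := hqR
    obtain ⟨H'⟩ := hHD hqI
    exact hloc q hq _ _ (by simpa using hs) H'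
  have hRclP : ∀ q ∈ R, q ∉ closure P := by
    intro q hq hcl
    rw [hR] at hq
    obtain ⟨s, s', -, hs', hq⟩ := hq
    obtain ⟨H⟩ := hHD' hq
    obtain ⟨η, hη, hloc⟩ := loc_const hα hδ.1 hexp.symm H
    obtain ⟨p, hp, hpP⟩ := mem_closure_iff.1 hcl _ isOpen_ball (mem_ball_self hη)
    rw [hP] at hpP
    obtain ⟨H'⟩ := hHD' hpP
    exact hloc p hp _ _ (by simp; omega) H'
  have hPinv : ∀ k : ℤ, ∀ z ∈ P, iterZ f k z ∈ P := by
    rw [hP]; exact fun k z hz => Idx.iter hz k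
  have hRinv : ∀ k : ℤ, ∀ z ∈ R, iterZ f k z ∈ R := by
    rw [hR]; rintro k z ⟨s, s', h1, h2, h⟩; exact ⟨s, s', h1, h2, Idx.iter h k⟩
  have hZfin : (closure P ∩ closure R).Finite := by
    refine finite_of_claim hα hexp _ (fun k z hz => ⟨closure_inv hPinv k hz.1,
      closure_inv hRinv k hz.2⟩) fun v => ?_
    obtain ⟨η, hη, N, h⟩ := main_claim (E := EuclideanSpace ℝ (Fin n)) hα hδ.1 hexp P R d
      (fun p hp => hHD (by rwa [hP] at hp))
      (fun q hq => by
        rw [hR] at hq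
        obtain ⟨s, s', -, hs', hq⟩ := hq
        exact ⟨s, s', hs', hHD hq⟩)
      (fun x hx hx' => hPclR x hx (subset_closure hx'))
      (fun v N hN => by
        obtain ⟨γ, h1, h2, h3⟩ := exists_cell n v N hN
        exact ⟨γ, h1, ⟨0, h2⟩, h3⟩) v
    exact ⟨η, hη, N, fun T hT hT' => h T (fun i => (hT i).1) (fun i => (hT i).2) hT'⟩
  have hcov : ∀ x, x ∈ closure P ∨ x ∈ closure R := by
    intro x
    have : x ∈ closure (P ∪ R) := by rw [hdense]; trivial
    rwa [closure_union] at this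
  obtain ⟨p, hp⟩ := hPne
  obtain ⟨q, hq⟩ := hRne
  refine conn_contra (closure R)ᶜ (closure P)ᶜ _ isClosed_closure.isOpen_compl
    isClosed_closure.isOpen_compl ?_ ?_ hZfin ⟨p, hPclR p hp⟩ ⟨q, hRclP q hq⟩ ?_
  · rw [Set.disjoint_left]
    intro x h1 h2
    rcases hcov x with h | h
    · exact h2 h
    · exact h1 h
  · intro x
    by_cases h1 : x ∈ closure R
    · by_cases h2 : x ∈ closure P
      · exact Or.inr (Or.inr ⟨h2, h1⟩)
      · exact Or.inr (Or.inl h2)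
    · exact Or.inl h1
  · intro v N hN
    obtain ⟨γ, h1, h2, h3⟩ := exists_cell n v N hN
    refine ⟨range γ, ?_, ⟨0, h2⟩, h3, ?_⟩
    · rw [← image_univ]; exact h1.opn _ Subset.rfl isOpen_univ
    · rw [← h2]; exact exists_punctured (by simpa using hn) γ h1

theorem mem_PerH {f : M ≃ₜ M} {n : ℕ} {x : M} : x ∈ PerH f n ↔ ∃ r ≤ n, x ∈ PerHr f n r := by
  simp [PerH]

theorem stmt2_core [CompactSpace M] [ConnectedSpace M] (n : ℕ)
    [ChartedSpace (EuclideanSpace ℝ (Fin n)) M] (hn : n = 3 ∨ n = 4) (f : M ≃ₜ M) (α : ℝ)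
    (hα : 0 < α) (hexp : IsExpansive f α) (hdense : closure (PerH f n) = univ) :
    ∃ r, PerH f n = PerHr f n r := by
  have hI : ∀ r x, x ∈ PerHr f n r → x ∈ Idx f r (n - r) := fun r x hx => PerHr.hyp hx
  have hn1 : 2 ≤ n := by omega
  have hnt : Nontrivial M := by
    obtain ⟨γ, h1, -, -⟩ := exists_cell n (Classical.arbitrary M) univ Filter.univ_mem
    have : Nontrivial (EuclideanSpace ℝ (Fin n)) :=
      Module.nontrivial_of_finrank_pos (R := ℝ) (by simp; omega)
    exact (injOn_univ.1 h1.inj).nontrivial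
  have hsub : PerH f n ⊆ {x : M | ∃ m : ℕ, 1 ≤ m ∧ iterZ f m x = x} := by
    intro x hx
    obtain ⟨r, -, hr⟩ := mem_PerH.1 hx
    exact Idx.per (hI r x hr)
  have hd1 : closure {x : M | ∃ m : ℕ, 1 ≤ m ∧ iterZ f m x = x} = univ :=
    univ_subset_iff.1 (hdense ▸ closure_mono hsub)
  have hd2 : closure {x : M | ∃ m : ℕ, 1 ≤ m ∧ iterZ f.symm m x = x} = univ := by
    rw [← hd1]
    congr 1
    ext x
    refine exists_congr fun m => and_congr_right fun _ => ?_
    rw [iterZ_symm]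
    constructor
    · intro h
      have := iterZ_cancel_neg f m x
      rwa [h] at this
    · intro h
      have := iterZ_neg_cancel f m x
      rwa [h] at this
  have hmid : ∀ x ∈ PerH f n, ∃ r, 1 ≤ r ∧ r + 1 ≤ n ∧ x ∈ PerHr f n r := by
    intro x hx
    obtain ⟨r, hr, hxr⟩ := mem_PerH.1 hx
    have h := hI r x hxr
    refine ⟨r, ?_, ?_, hxr⟩
    · by_contra hcon
      have : r = 0 := by omega
      subst this
      exact no_sink hd2 x (Idx.swap h)
    · by_contra hcon
      have : r = n := by omega
      subst this
      rw [Nat.sub_self] at h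
      exact no_sink hd1 x h
  have hfinal : ∀ r ≤ n, (∀ r' x, 1 ≤ r' → r' + 1 ≤ n → x ∈ PerHr f n r' → r' ≠ r → False) →
      ∃ r, PerH f n = PerHr f n r := by
    intro r hr h
    refine ⟨r, Subset.antisymm (fun x hx => ?_) (fun x hx => mem_PerH.2 ⟨r, hr, hx⟩)⟩
    obtain ⟨r', h1, h2, hx'⟩ := hmid x hx
    by_contra hcon
    exact h r' x h1 h2 hx' (fun h => hcon (h ▸ hx'))
  -- codimension one index
  have hA : (PerHr f n (n-1)).Nonempty → ∃ r, PerH f n = PerHr f n r := by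
    rintro ⟨p, hp⟩
    have hpI := hI _ _ hp
    rw [show n - (n-1) = 1 by omega] at hpI
    have hE := mainT n hn1 f α hα hexp (n-1) (Idx f (n-1) 1)
      {q | ∃ s s', s < n-1 ∧ 2 ≤ s' ∧ q ∈ Idx f s s'} rfl rfl (by
        rw [← univ_subset_iff, ← hdense]
        refine closure_mono fun x hx => ?_
        obtain ⟨r, h1, h2, hxr⟩ := hmid x hx
        have h := hI r x hxr
        by_cases hr : r = n - 1
        · subst hr
          rw [show n - (n-1) = 1 by omega] at h
          exact Or.inl h
        · exact Or.inr ⟨r, n - r, by omega, by omega, h⟩) ⟨p, hpI⟩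
    refine hfinal (n-1) (by omega) fun r' x h1 h2 hx hne => ?_
    have : x ∈ {q | ∃ s s', s < n-1 ∧ 2 ≤ s' ∧ q ∈ Idx f s s'} :=
      ⟨r', n - r', by omega, by omega, hI r' x hx⟩
    rw [hE] at this; exact this
  have hB : (PerHr f n 1).Nonempty → ∃ r, PerH f n = PerHr f n r := by
    rintro ⟨p, hp⟩
    have hpI := Idx.swap (hI _ _ hp)
    have hE := mainT n hn1 f.symm α hα hexp.symm (n-1) (Idx f.symm (n-1) 1)
      {q | ∃ s s', s < n-1 ∧ 2 ≤ s' ∧ q ∈ Idx f.symm s s'} rfl rfl (by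
        rw [← univ_subset_iff, ← hdense]
        refine closure_mono fun x hx => ?_
        obtain ⟨r, h1, h2, hxr⟩ := hmid x hx
        have h := Idx.swap (hI r x hxr)
        by_cases hr : r = 1
        · subst hr
          exact Or.inl h
        · exact Or.inr ⟨n - r, r, by omega, by omega, h⟩) ⟨p, hpI⟩
    refine hfinal 1 (by omega) fun r' x h1 h2 hx hne => ?_
    have : x ∈ {q | ∃ s s', s < n-1 ∧ 2 ≤ s' ∧ q ∈ Idx f.symm s s'} :=
      ⟨n - r', r', by omega, by omega, Idx.swap (hI r' x hx)⟩
    rw [hE] at this; exact this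
  by_cases h1 : (PerHr f n (n-1)).Nonempty
  · exact hA h1
  by_cases h2 : (PerHr f n 1).Nonempty
  · exact hB h2
  refine hfinal 2 (by omega) fun r' x hr1 hr2 hx hne => ?_
  by_cases h3 : r' = 1
  · subst h3; exact h2 ⟨x, hx⟩
  · have : r' = n - 1 := by omega
    subst this; exact h1 ⟨x, hx⟩

/-- **Corollary.** An expansive homeomorphism of a compact connected boundaryless manifold
of dimension `3` or `4` with dense topologically hyperbolic periodic points has all its
topologically hyperbolic periodic points of the same index. -/
theorem stmt2 {M : Type*} [MetricSpace M] [CompactSpace M] [ConnectedSpace M]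
    (n : ℕ) [ChartedSpace (EuclideanSpace ℝ (Fin n)) M] (hn : n = 3 ∨ n = 4)
    (f : M ≃ₜ M) (α : ℝ) (hα : 0 < α) (hexp : IsExpansive f α)
    (hdense : closure (PerH f n) = Set.univ) :
    ∃ r : ℕ, PerH f n = PerHr f n r := by
  exact stmt2_core n hn f α hα hexp hdense
end

section
/- Let f : M → M be a homeomorphism of a compact metric space. Then, given ε > 0, γ > 0 and x ∈ M, there exists δ > 0 such that for every y ∈ M with dist(x,y) < δ one has W^s_ε(y) ⊆ B_γ(W^s_ε(x)). The analogous statement holds for the local unstable sets W^u_ε. -/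
open Metric Set

variable {M : Type*} [MetricSpace M]

theorem continuous_iterZ_aux {X : Type*} [MetricSpace X] (f : X ≃ₜ X) (k : ℤ) :
    Continuous (iterZ f k) := by
  have hn : ∀ n : ℕ, Continuous (fun x => (f.toEquiv ^ n) x) := by
    intro n
    induction n with
    | zero => exact continuous_id
    | succ n ih =>
      simp only [pow_succ, Equiv.Perm.mul_apply]
      exact ih.comp f.continuous
  have hm : ∀ n : ℕ, Continuous (fun x => ((f.toEquiv ^ n)⁻¹ : Equiv.Perm X) x) := by
    intro n
    induction n with
    | zero => exact continuous_id
    | succ n ih =>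
      simp only [pow_succ, mul_inv_rev, Equiv.Perm.mul_apply]
      exact f.symm.continuous.comp ih
  cases k with
  | ofNat n => exact hn n
  | negSucc n => exact hm (n + 1)

theorem semicont_aux {X : Type*} [MetricSpace X] [CompactSpace X] (f : X ≃ₜ X)
    (ε γ : ℝ) (hγ : 0 < γ) (x : X) (P : ℤ → Prop) :
    ∃ δ : ℝ, 0 < δ ∧ ∀ y : X, dist x y < δ →
      {z | ∀ k : ℤ, P k → dist (iterZ f k y) (iterZ f k z) ≤ ε} ⊆
        {z | ∃ a ∈ {z | ∀ k : ℤ, P k → dist (iterZ f k x) (iterZ f k z) ≤ ε},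
          dist z a < γ} := by
  set A : Set X := {z | ∀ k : ℤ, P k → dist (iterZ f k x) (iterZ f k z) ≤ ε} with hA
  have hC : IsClosed {p : X × X | ∀ k : ℤ, P k → dist (iterZ f k p.1) (iterZ f k p.2) ≤ ε} := by
    simp only [ofPred_forall]
    refine isClosed_iInter fun k => isClosed_iInter fun _ => isClosed_le ?_ continuous_const
    exact ((continuous_iterZ_aux f k).comp continuous_fst).dist
      ((continuous_iterZ_aux f k).comp continuous_snd)
  have hK : IsClosed {p : X × X | p.2 ∈ (Metric.thickening γ A)ᶜ} :=
    (Metric.isOpen_thickening.isClosed_compl).preimage continuous_snd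
  have hI := ((hC.inter hK).isCompact.image continuous_fst).isClosed
  obtain ⟨δ, hδ, hb⟩ := Metric.isOpen_iff.1 hI.isOpen_compl x (by
    rintro ⟨⟨y, z⟩, ⟨h1, h2⟩, rfl⟩
    exact h2 (Metric.self_subset_thickening hγ A h1))
  refine ⟨δ, hδ, fun y hy z hz => ?_⟩
  by_contra hne
  refine hb (by rwa [Metric.mem_ball, dist_comm]) ⟨(y, z), ⟨hz, ?_⟩, rfl⟩
  intro ht
  exact hne (Metric.mem_thickening_iff.1 ht)

/-- **Semicontinuity of local stable and unstable sets.** For a homeomorphism of a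
compact metric space, given `ε, γ > 0` and `x`, there is `δ > 0` such that
`dist x y < δ` implies `W^s_ε(y) ⊆ B_γ(W^s_ε(x))`, and analogously for `W^u_ε`. -/
theorem stmt5 {M : Type*} [MetricSpace M] [CompactSpace M] (f : M ≃ₜ M)
    (ε γ : ℝ) (hε : 0 < ε) (hγ : 0 < γ) (x : M) :
    (∃ δ : ℝ, 0 < δ ∧ ∀ y : M, dist x y < δ →
      WsLoc f ε y ⊆ {z | ∃ a ∈ WsLoc f ε x, dist z a < γ}) ∧
    (∃ δ : ℝ, 0 < δ ∧ ∀ y : M, dist x y < δ →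
      WuLoc f ε y ⊆ {z | ∃ a ∈ WuLoc f ε x, dist z a < γ}) := by
  exact ⟨semicont_aux f ε γ hγ x (fun k => 0 ≤ k), semicont_aux f ε γ hγ x (fun k => k ≤ 0)⟩
end

section
/- Let f : M → M be an expansive homeomorphism of a compact metric space with expansivity constant α > 0, let x ∈ M, and let V ⊆ U be neighborhoods of x. Assume there exists ε with 0 < 2ε < α such that for every y ∈ U one has cc_y(W^s(y) ∩ U) ⊆ W^s_ε(y) and cc_y(W^u(y) ∩ U) ⊆ W^u_ε(y). Then there exist ρ > 0 and a neighborhood W ⊆ V of x such that for all y, z ∈ W, every point of cc_y(W^s(y) ∩ U) ∩ (U \ V) is at distance greater than ρ from every point of cc_z(W^u(z) ∩ U) ∩ (U \ V). -/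
open Metric Set

variable {M : Type*} [MetricSpace M]

theorem iterZ_continuous_aux {M : Type*} [MetricSpace M] (f : M ≃ₜ M) (k : ℤ) :
    Continuous (iterZ f k) := by
  have key : ∀ n : ℕ, Continuous (fun x => (f.toEquiv ^ n) x) ∧
      Continuous (fun x => ((f.toEquiv ^ n)⁻¹ : Equiv.Perm M) x) := by
    intro n
    induction n with
    | zero => exact ⟨continuous_id, continuous_id⟩
    | succ n ih =>
      constructor
      · have : (fun x => (f.toEquiv ^ (n + 1)) x) = (fun x => (f.toEquiv ^ n) x) ∘ f := by
          funext x
          rw [pow_succ]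
          rfl
        rw [this]
        exact ih.1.comp f.continuous
      · have : (fun x => ((f.toEquiv ^ (n + 1))⁻¹ : Equiv.Perm M) x)
            = f.symm ∘ (fun x => ((f.toEquiv ^ n)⁻¹ : Equiv.Perm M) x) := by
          funext x
          rw [pow_succ, mul_inv_rev]
          rfl
        rw [this]
        exact f.symm.continuous.comp ih.2
  cases k with
  | ofNat n => exact (key n).1
  | negSucc n => exact (key (n + 1)).2

/-- **"Big angles" between local stable and unstable sets.** -/
theorem stmt6 {M : Type*} [MetricSpace M] [CompactSpace M]
    (f : M ≃ₜ M) (α : ℝ) (hα : 0 < α) (hexp : IsExpansive f α)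
    (x : M) (U V : Set M) (hU : U ∈ nhds x) (hV : V ∈ nhds x) (hVU : V ⊆ U)
    (ε : ℝ) (hε : 0 < ε) (hεα : 2 * ε < α)
    (hs : ∀ y ∈ U, connectedComponentIn (Ws f y ∩ U) y ⊆ WsLoc f ε y)
    (hu : ∀ y ∈ U, connectedComponentIn (Wu f y ∩ U) y ⊆ WuLoc f ε y) :
    ∃ ρ : ℝ, 0 < ρ ∧ ∃ W ∈ nhds x, W ⊆ V ∧
      ∀ y ∈ W, ∀ z ∈ W,
        ∀ a ∈ connectedComponentIn (Ws f y ∩ U) y ∩ (U \ V),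
          ∀ b ∈ connectedComponentIn (Wu f z ∩ U) z ∩ (U \ V), ρ < dist a b := by
  by_contra hcon
  have hr : ∀ n : ℕ, (0 : ℝ) < 1 / ((n : ℝ) + 1) := fun n => Nat.one_div_pos_of_nat
  have hseq : ∀ n : ℕ, ∃ y z a b : M, y ∈ V ∧ z ∈ V ∧ dist y x < 1 / ((n : ℝ) + 1) ∧
      dist z x < 1 / ((n : ℝ) + 1) ∧ a ∈ WsLoc f ε y ∧ b ∈ WuLoc f ε z ∧ a ∉ V ∧
      dist a b ≤ 1 / ((n : ℝ) + 1) := by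
    intro n
    by_contra hn
    refine hcon ⟨_, hr n, V ∩ ball x (1 / ((n : ℝ) + 1)),
      Filter.inter_mem hV (ball_mem_nhds x (hr n)), inter_subset_left, ?_⟩
    intro y hy z hz a ha b hb
    by_contra hab
    exact hn ⟨y, z, a, b, hy.1, hz.1, hy.2, hz.2, hs y (hVU hy.1) ha.1, hu z (hVU hz.1) hb.1,
      ha.2.2, not_lt.mp hab⟩
  choose y z a b hyV hzV hy hz ha hb haV hab using hseq
  have h0 := tendsto_one_div_add_atTop_nhds_zero_nat (𝕜 := ℝ)
  have hyx : Filter.Tendsto y Filter.atTop (nhds x) :=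
    tendsto_iff_dist_tendsto_zero.2 (squeeze_zero (fun _ => dist_nonneg) (fun n => (hy n).le) h0)
  have hzx : Filter.Tendsto z Filter.atTop (nhds x) :=
    tendsto_iff_dist_tendsto_zero.2 (squeeze_zero (fun _ => dist_nonneg) (fun n => (hz n).le) h0)
  have hd : Filter.Tendsto (fun n => dist (a n) (b n)) Filter.atTop (nhds 0) :=
    squeeze_zero (fun _ => dist_nonneg) hab h0
  obtain ⟨c, φ, hφ, hac⟩ := CompactSpace.tendsto_subseq a
  have hφt := hφ.tendsto_atTop
  have hbc : Filter.Tendsto (b ∘ φ) Filter.atTop (nhds c) :=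
    (tendsto_iff_of_dist (hd.comp hφt)).1 hac
  have hxc : x ≠ c := by
    rintro rfl
    obtain ⟨n, hn⟩ := (hac.eventually hV).exists
    exact haV _ hn
  obtain ⟨k, hk⟩ := hexp x c hxc
  have hfk := iterZ_continuous_aux f k
  have hle : dist (iterZ f k x) (iterZ f k c) ≤ ε := by
    rcases le_total 0 k with h | h
    · exact le_of_tendsto (((hfk.tendsto x).comp (hyx.comp hφt)).dist ((hfk.tendsto c).comp hac))
        (Filter.Eventually.of_forall fun n => ha (φ n) k h)
    · exact le_of_tendsto (((hfk.tendsto x).comp (hzx.comp hφt)).dist ((hfk.tendsto c).comp hbc))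
        (Filter.Eventually.of_forall fun n => hb (φ n) k h)
  linarith
end
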